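/- (Weyl's inequality for exponential sums over integers and primes.) Let α > 0, k ∈ ℕ, and let Γ ⊆ ℕ_0^k∖{0} be a nonempty finite set; let k', k'' ∈ {0,…,k} with k' + k'' = k. Let Ω' ⊆ Ω ⊆ B(0,N) ⊂ ℝ^k be convex sets and φ : Ω ∩ ℤ^k → ℂ. There exists β_α > 0 such that for every β > β_α the following holds: if there is a multi-index γ_0 ∈ Γ and coprime integers a, q with 1 ≤ a ≤ q, (log N)^β ≤ q ≤ N^{|γ_0|}(log N)^{−β}, and |ξ_{γ_0} − a/q| ≤ 1/q², then | Σ_{(n,p)∈ℤ^{k'}×(±ℙ)^{k''}} e(ξ·𝒬(n,p)) φ(n,p) 𝟙_{Ω∖Ω'}(n,p) | ≲ N^k (log N)^{−α} ‖φ‖_{L^∞(Ω∖Ω')} + N^k sup_{x,y∈Ω∖Ω', |x−y| ≤ N(log N)^{−α}} |φ(x) − φ(y)|, with implicit constant independent of φ, ξ, the sets Ω, Ω', and the numbers a, q, N. -/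

import Mathlib

open MeasureTheory
open scoped ENNReal NNReal

noncomputable section

/-- Embedding of `ℤ^k` into Euclidean space `ℝ^k`. -/
def zEmbed {k : ℕ} (v : Fin k → ℤ) : EuclideanSpace ℝ (Fin k) :=
  WithLp.toLp 2 (fun i => (v i : ℝ))

/-- The indicator that each of the last `k''` coordinates of `v ∈ ℤ^k` is a positive or a
negative prime number. -/
def primeInd {k : ℕ} (k' : ℕ) (v : Fin k → ℤ) : ℝ :=
  Set.indicator {w : Fin k → ℤ | ∀ i : Fin k, k' ≤ (i : ℕ) → Prime (w i)} (fun _ => 1) v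

/-- `e(x) = e^{2πix}`. -/
def eC (x : ℝ) : ℂ := Complex.exp (2 * Real.pi * Complex.I * x)

/-- The pairing `ξ · 𝒬(v) = ∑_{γ ∈ Γ} ξ_γ v^γ` of a frequency `ξ ∈ ℝ^Γ` with the canonical
polynomial mapping `𝒬(v) = (v^γ : γ ∈ Γ)`, for `v ∈ ℤ^k`. -/
def qPair {k : ℕ} (Γ : Finset (Fin k → ℕ)) (ξ : (Fin k → ℕ) → ℝ) (v : Fin k → ℤ) : ℝ :=
  ∑ γ ∈ Γ, ξ γ * ∏ i, ((v i : ℝ)) ^ (γ i)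

end

/-!
Everything is quantified by a parameter `R`, a fixed power of `log N`: a statement loses at most a
factor `R ^ C`, for an exponent `C` depending only on the degrees, and is claimed for `N ≥ R ^ C`.

* Along one coordinate line the phase is a polynomial in one variable. If the exponential sum over
  an interval is at least `N / R`, then all nonconstant coefficients of the polynomial lie on a
  major arc of width `R ^ C`: for integer weights by Weyl differencing, for prime weights by
  Vaughan's identity, which leads to type I and type II sums.
* If this happens on at least the proportion `1 / R` of the lines, then the coefficients along the
  lines, which are polynomials in the remaining variables, are close to rationals of small
  denominator on a dense set of points. A lemma of Vinogradov, iterated over the variables, then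
  puts `ξ γ₀` itself on a major arc, contradicting the hypothesis on `a / q`.
* On every other line, convexity makes `Ω \ Ω'` the union of two intervals. Cutting these into cells
  of length `N (log N) ^ (-α)` and freezing `φ` on each cell gives the bound.
-/

namespace WeylInequality

section DistanceToIntegers

/-- The distance from `x` to the nearest integer, usually written `‖x‖` in analytic number theory;
it is the norm of the class of `x` in `ℝ / ℤ`. -/
noncomputable def distInt (x : ℝ) : ℝ := ‖(x : UnitAddCircle)‖

lemma distInt_eq_abs_sub_round (x : ℝ) : distInt x = |x - round x| := UnitAddCircle.norm_eq

lemma distInt_nonneg (x : ℝ) : 0 ≤ distInt x := norm_nonneg _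

@[simp]
lemma distInt_zero : distInt 0 = 0 := by simp [distInt]

lemma distInt_le_half (x : ℝ) : distInt x ≤ 1 / 2 :=
  distInt_eq_abs_sub_round x ▸ abs_sub_round x

lemma distInt_sub_le (x y : ℝ) : distInt (x - y) ≤ distInt x + distInt y :=
  norm_sub_le (x : UnitAddCircle) y

lemma distInt_neg (x : ℝ) : distInt (-x) = distInt x := norm_neg (x : UnitAddCircle)

lemma distInt_sum_le {ι : Type*} (s : Finset ι) (f : ι → ℝ) :
    distInt (∑ i ∈ s, f i) ≤ ∑ i ∈ s, distInt (f i) := by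
  have hcast : ((∑ i ∈ s, f i : ℝ) : UnitAddCircle) = ∑ i ∈ s, (f i : UnitAddCircle) :=
    map_sum (QuotientAddGroup.mk' _) f s
  simpa only [distInt, hcast] using norm_sum_le s fun i ↦ (f i : UnitAddCircle)

lemma distInt_nat_mul_le (n : ℕ) (x : ℝ) : distInt (n * x) ≤ n * distInt x := by
  simpa only [distInt, ← nsmul_eq_mul, AddCircle.coe_nsmul] using
    norm_nsmul_le (a := (x : UnitAddCircle)) (n := n)

lemma distInt_int_mul_le (n : ℤ) (x : ℝ) : distInt (n * x) ≤ |(n : ℝ)| * distInt x := by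
  have h := norm_zsmul_le n (x : UnitAddCircle)
  rwa [← AddCircle.coe_zsmul, zsmul_eq_mul, Int.norm_eq_abs] at h

lemma distInt_nat_mul_le_of_le {n : ℕ} {x B δ : ℝ} (hn : n ≤ B) (hx : distInt x ≤ δ) :
    distInt (n * x) ≤ B * δ :=
  (distInt_nat_mul_le n x).trans <|
    mul_le_mul hn hx (distInt_nonneg x) ((Nat.cast_nonneg n).trans hn)

lemma distInt_mul_sub_le_of_affine (a b x y : ℝ) :
    distInt (b * (y - x)) ≤ distInt (a + b * y) + distInt (a + b * x) := by
  have hsplit : b * (y - x) = a + b * y - (a + b * x) := by ring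
  exact hsplit ▸ distInt_sub_le _ _

lemma distInt_nat_mul_le_of_affine (q : ℕ) (a b : ℝ) (h : ℤ) :
    distInt (q * a) ≤ q * distInt (a + b * h) + |(h : ℝ)| * distInt (q * b) := by
  have hsplit : q * a = q * (a + b * h) - h * (q * b) := by ring
  rw [hsplit]
  exact (distInt_sub_le _ _).trans (add_le_add (distInt_nat_mul_le _ _) (distInt_int_mul_le _ _))

lemma distInt_add_intCast (x : ℝ) (b : ℤ) : distInt (x + b) = distInt x := by
  simp [distInt_eq_abs_sub_round]

lemma distInt_eq_abs {x : ℝ} (hx : |x| ≤ 1 / 2) : distInt x = |x| :=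
  (AddCircle.norm_coe_eq_abs_iff 1 one_ne_zero).2 (by simpa using hx)

lemma distInt_nat_mul_eq {n : ℕ} {x : ℝ} (h : n * distInt x ≤ 1 / 2) :
    distInt (n * x) = n * distInt x := by
  have hsplit : (n : ℝ) * x = n * (x - round x) + ((n * round x : ℤ) : ℝ) := by
    push_cast
    ring
  have habs : |n * (x - round x)| = n * distInt x := by
    rw [abs_mul, Nat.abs_cast, distInt_eq_abs_sub_round]
  rw [hsplit, distInt_add_intCast, distInt_eq_abs (habs.trans_le h), habs]

end DistanceToIntegers

section ExponentialCharacter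

lemma eC_eq_fourierChar (x : ℝ) : eC x = Real.fourierChar x := by
  rw [Real.fourierChar_apply, eC]
  push_cast
  ring_nf

lemma eC_add (x y : ℝ) : eC (x + y) = eC x * eC y := by
  simp only [eC_eq_fourierChar, AddChar.map_add_eq_mul, Circle.coe_mul]

lemma eC_neg (x : ℝ) : eC (-x) = (starRingEnd ℂ) (eC x) := by
  simp only [eC_eq_fourierChar, AddChar.map_neg_eq_inv, Circle.coe_inv_eq_conj]

@[simp]
lemma norm_eC (x : ℝ) : ‖eC x‖ = 1 := by rw [eC_eq_fourierChar, Circle.norm_coe]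

lemma eC_intCast (b : ℤ) : eC b = 1 := by
  simpa [eC, mul_comm, mul_left_comm] using Complex.exp_int_mul_two_pi_mul_I b

lemma norm_eC_sub_one (x : ℝ) : ‖eC x - 1‖ = 2 * |Real.sin (Real.pi * distInt x)| := by
  have hround : eC x = eC (x - round x) := by
    conv_lhs => rw [← sub_add_cancel x (round x : ℝ), eC_add, eC_intCast, mul_one]
  have hexp : eC (x - round x) = Complex.exp (Complex.I * (2 * Real.pi * (x - round x) : ℝ)) := by
    rw [eC]
    push_cast
    ring_nf
  rw [hround, hexp, Complex.norm_exp_I_mul_ofReal_sub_one, distInt_eq_abs_sub_round,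
    ← abs_of_pos Real.pi_pos, ← abs_mul, abs_of_pos Real.pi_pos, norm_mul, Real.norm_eq_abs,
    Real.norm_eq_abs, abs_two]
  have hhalf : 2 * Real.pi * (x - round x) / 2 = Real.pi * (x - round x) := by ring
  rcases abs_choice (Real.pi * (x - round x)) with h | h <;> simp [h, hhalf]

lemma norm_eC_sub_one_le (x : ℝ) : ‖eC x - 1‖ ≤ 2 * Real.pi * distInt x := by
  have h : |Real.sin (Real.pi * distInt x)| ≤ Real.pi * distInt x :=
    Real.abs_sin_le_abs.trans_eq
      (abs_of_nonneg (mul_nonneg Real.pi_pos.le (distInt_nonneg x)))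
  rw [norm_eC_sub_one]
  linarith

lemma four_mul_distInt_le_norm_eC_sub_one (x : ℝ) : 4 * distInt x ≤ ‖eC x - 1‖ := by
  have hsin : 2 / Real.pi * (Real.pi * distInt x) ≤ Real.sin (Real.pi * distInt x) :=
    Real.mul_le_sin (mul_nonneg Real.pi_pos.le (distInt_nonneg x))
      (by nlinarith [Real.pi_pos, distInt_le_half x])
  have hcancel : 2 / Real.pi * (Real.pi * distInt x) = 2 * distInt x := by field_simp
  rw [norm_eC_sub_one]
  linarith [le_abs_self (Real.sin (Real.pi * distInt x))]

end ExponentialCharacter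

section Pigeonhole

variable {ι : Type*}

lemma exists_common_denominator {T : Finset ι} (hT : T.Nonempty) {B : ℝ} {p : ι → ℕ → Prop}
    (h : ∀ t ∈ T, ∃ q : ℕ, 1 ≤ q ∧ (q : ℝ) ≤ B ∧ p t q) :
    ∃ q : ℕ, 1 ≤ q ∧ (q : ℝ) ≤ B ∧
      ∃ T' ⊆ T, (T.card : ℝ) ≤ B * T'.card ∧ ∀ t ∈ T', p t q := by
  choose! f hf₁ hfB hfp using h
  obtain ⟨t₀, ht₀⟩ := hT
  have hB : 1 ≤ B := le_trans (by exact_mod_cast hf₁ t₀ ht₀) (hfB t₀ ht₀)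
  have hmaps : ∀ t ∈ T, f t ∈ Finset.Icc 1 ⌊B⌋₊ := fun t ht ↦
    Finset.mem_Icc.2 ⟨hf₁ t ht, Nat.le_floor (hfB t ht)⟩
  have hcard : ((Finset.Icc 1 ⌊B⌋₊).card : ℝ) ≤ B := by
    simpa using Nat.floor_le (zero_le_one.trans hB)
  obtain ⟨q, hq, hfiber⟩ := Finset.exists_le_card_fiber_of_nsmul_le_card_of_maps_to
    (b := (T.card : ℝ) / B) hmaps ⟨f t₀, hmaps t₀ ht₀⟩ (by
      rw [nsmul_eq_mul, mul_div_assoc', div_le_iff₀ (by linarith)]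
      nlinarith [(Nat.cast_nonneg T.card : (0 : ℝ) ≤ T.card)])
  rw [Finset.mem_Icc] at hq
  refine ⟨q, hq.1, (Nat.cast_le.2 hq.2).trans (Nat.floor_le (by linarith)),
    T.filter (fun t ↦ f t = q), Finset.filter_subset _ _, ?_, fun t ht ↦ ?_⟩
  · rwa [div_le_iff₀' (by linarith)] at hfiber
  · obtain ⟨htT, rfl⟩ := Finset.mem_filter.1 ht
    exact hfp t htT

lemma le_mul_card_filter_of_le_sum {T : Finset ι} {f : ι → ℝ} {M K S : ℝ}
    (hcard : (T.card : ℝ) ≤ K) (hK : 0 < K) (hS : 0 ≤ S) (hM : ∀ t ∈ T, f t ≤ M)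
    (hsum : S ≤ ∑ t ∈ T, f t) :
    S ≤ 2 * M * (T.filter (fun t ↦ S ≤ 2 * K * f t)).card := by
  have hlarge : ∑ t ∈ T with S ≤ 2 * K * f t, f t
      ≤ (T.filter (fun t ↦ S ≤ 2 * K * f t)).card * M := by
    rw [← nsmul_eq_mul]
    exact Finset.sum_le_card_nsmul _ _ _ fun t ht ↦ hM t (Finset.mem_filter.1 ht).1
  have hsmall : ∑ t ∈ T with ¬ S ≤ 2 * K * f t, f t ≤ S / 2 := by
    calc ∑ t ∈ T with ¬ S ≤ 2 * K * f t, f t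
        ≤ ((T.filter (fun t ↦ ¬ S ≤ 2 * K * f t)).card : ℝ) * (S / (2 * K)) := by
          rw [← nsmul_eq_mul]
          refine Finset.sum_le_card_nsmul _ _ _ fun t ht ↦ ?_
          rw [le_div_iff₀ (by positivity)]
          linarith [(Finset.mem_filter.1 ht).2]
      _ ≤ K * (S / (2 * K)) := by
          gcongr
          exact le_trans (by exact_mod_cast Finset.card_filter_le _ _) hcard
      _ = S / 2 := by field_simp
  rw [← Finset.sum_filter_add_sum_filter_not T (fun t ↦ S ≤ 2 * K * f t)] at hsum
  linarith

end Pigeonhole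

section PowerBounds

lemma const_mul_pow_le_pow {R : ℝ} (hR : 2 ≤ R) {c : ℝ} {e a b : ℕ} (hc : c ≤ 2 ^ e)
    (h : e + a ≤ b) : c * R ^ a ≤ R ^ b := by
  calc c * R ^ a ≤ R ^ e * R ^ a := by
        gcongr
        exact hc.trans (pow_le_pow_left₀ zero_le_two hR e)
    _ = R ^ (e + a) := (pow_add R e a).symm
    _ ≤ R ^ b := pow_le_pow_right₀ (by linarith) h

end PowerBounds

section DenseSubsetsOfIntervals

variable {R : ℝ} {N : ℕ} {H : Finset ℤ}

lemma exists_card_le_of_emod_eq {F : Finset ℤ} (hF : F.Nonempty) {q : ℕ} (hq : 1 ≤ q) {r : ℤ}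
    (hr : ∀ h ∈ F, h % q = r) :
    ∃ h ∈ F, ∃ u : ℕ, h + q * u ∈ F ∧ F.card ≤ u + 1 := by
  have hqz : (0 : ℤ) < q := by exact_mod_cast hq
  have hoffset : ∀ h ∈ F, ∃ j : ℕ, h = F.min' hF + q * j := by
    intro h hh
    have hmod : F.min' hF ≡ h [ZMOD q] := (hr _ (F.min'_mem hF)).trans (hr h hh).symm
    obtain ⟨j, hj⟩ := hmod.dvd
    have hj₀ : 0 ≤ j := nonneg_of_mul_nonneg_right (hj ▸ sub_nonneg.2 (F.min'_le h hh)) hqz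
    exact ⟨j.toNat, by rw [Int.toNat_of_nonneg hj₀]; linarith⟩
  obtain ⟨u, hu⟩ := hoffset _ (F.max'_mem hF)
  have hsub : F ⊆ (Finset.range (u + 1)).image fun j : ℕ ↦ F.min' hF + q * j := by
    intro h hh
    obtain ⟨j, rfl⟩ := hoffset h hh
    have hle := F.le_max' _ hh
    have hju : (j : ℤ) ≤ u := le_of_mul_le_mul_left (by linarith) hqz
    exact Finset.mem_image.2 ⟨j, Finset.mem_range.2 (by omega), rfl⟩
  refine ⟨F.min' hF, F.min'_mem hF, u, hu ▸ F.max'_mem hF, ?_⟩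
  simpa using (Finset.card_le_card hsub).trans Finset.card_image_le

lemma exists_dense_subset_of_emod_eq (hR : 0 < R) (hH : ∀ h ∈ H, |h| ≤ (N : ℤ))
    (hcard : (N : ℝ) ≤ R * H.card) {q l : ℕ} (hq : 1 ≤ q) (hl : 1 ≤ l) (hql : 2 * q * l ≤ N) :
    ∃ F ⊆ H, ∃ r : ℤ, (∀ h ∈ F, h % q = r) ∧ (∀ a ∈ F, ∀ b ∈ F, b - a < q * l) ∧
      (l : ℝ) ≤ 3 * R * F.card := by
  have hq₀ : (0 : ℤ) < q := by exact_mod_cast hq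
  have hL : (0 : ℤ) < q * l := by positivity
  set m : ℤ := N / (q * l)
  have hm₀ : 0 ≤ m := by positivity
  have hNlt : (N : ℤ) < (m + 1) * (q * l) := Int.lt_ediv_add_one_mul_self _ hL
  have hmN : m * (q * l) ≤ N := Int.ediv_mul_le _ hL.ne'
  have hmaps : ∀ h ∈ H, (h % (q : ℤ), h / (q * l : ℤ)) ∈
      Finset.Ico (0 : ℤ) q ×ˢ Finset.Icc (-(m + 1)) m := by
    intro h hh
    have habs := abs_le.1 (hH h hh)
    rw [Finset.mem_product, Finset.mem_Icc, Finset.mem_Ico]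
    refine ⟨⟨Int.emod_nonneg _ hq₀.ne', Int.emod_lt_of_pos _ hq₀⟩, ?_, ?_⟩
    · rw [Int.le_ediv_iff_mul_le hL]
      linarith
    · rw [← Int.lt_add_one_iff, Int.ediv_lt_iff_lt_mul hL]
      linarith
  obtain ⟨y, -, hy⟩ := Finset.exists_le_card_fiber_of_nsmul_le_card_of_maps_to
    (b := (l : ℝ) / (3 * R)) hmaps
    ⟨(0, 0), by
      rw [Finset.mem_product, Finset.mem_Icc, Finset.mem_Ico]
      exact ⟨⟨le_refl _, hq₀⟩, by dsimp; omega, hm₀⟩⟩ (by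
    have hcells : ((m + 1 - -(m + 1)).toNat : ℝ) = 2 * (m : ℝ) + 2 := by
      have : ((m + 1 - -(m + 1)).toNat : ℤ) = 2 * m + 2 := by omega
      exact_mod_cast this
    have hmN' : (m : ℝ) * (q * l) ≤ N := by exact_mod_cast hmN
    have hql' : 2 * (q : ℝ) * l ≤ N := by exact_mod_cast hql
    rw [nsmul_eq_mul, Finset.card_product, Int.card_Ico, Int.card_Icc, Nat.cast_mul, hcells,
      sub_zero, Int.toNat_natCast, mul_div_assoc', div_le_iff₀ (by positivity)]
    nlinarith)
  refine ⟨H.filter fun h ↦ (h % (q : ℤ), h / (q * l : ℤ)) = y, Finset.filter_subset _ _, y.1,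
    fun h hh ↦ ?_, fun a ha b hb ↦ ?_, ?_⟩
  · exact congrArg Prod.fst (Finset.mem_filter.1 hh).2
  · have ha' : a / (q * l : ℤ) = y.2 := congrArg Prod.snd (Finset.mem_filter.1 ha).2
    have hb' : b / (q * l : ℤ) = y.2 := congrArg Prod.snd (Finset.mem_filter.1 hb).2
    have hlow := Int.ediv_mul_le a hL.ne'
    have hupp := Int.lt_ediv_add_one_mul_self b hL
    rw [ha'] at hlow
    rw [hb'] at hupp
    linarith
  · rwa [div_le_iff₀' (by positivity)] at hy

lemma exists_add_mul_mem (hR : 0 < R) (hH : ∀ h ∈ H, |h| ≤ (N : ℤ))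
    (hcard : (N : ℝ) ≤ R * H.card) {q l : ℕ} (hq : 1 ≤ q) (hl : 1 ≤ l) (hql : 2 * q * l ≤ N) :
    ∃ h ∈ H, ∃ u : ℕ, h + q * u ∈ H ∧ u < l ∧ (l : ℝ) ≤ 3 * R * (u + 1) := by
  obtain ⟨F, hFH, r, hr, hwindow, hdense⟩ := exists_dense_subset_of_emod_eq hR hH hcard hq hl hql
  have hF : F.Nonempty := by
    rw [Finset.nonempty_iff_ne_empty]
    rintro rfl
    have hl' : (1 : ℝ) ≤ l := by exact_mod_cast hl
    simp only [Finset.card_empty, Nat.cast_zero, mul_zero] at hdense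
    linarith
  obtain ⟨h, hh, u, hu, hFu⟩ := exists_card_le_of_emod_eq hF hq hr
  refine ⟨h, hFH hh, u, hFH hu, ?_, hdense.trans ?_⟩
  · have hlt := hwindow h hh _ hu
    rw [add_sub_cancel_left] at hlt
    exact_mod_cast lt_of_mul_lt_mul_left hlt (by positivity)
  · gcongr
    exact_mod_cast hFu

lemma exists_add_mem_of_dense (hR : 2 ≤ R) (hN : 8 * R ≤ N) (hH : ∀ h ∈ H, |h| ≤ (N : ℤ))
    (hcard : (N : ℝ) ≤ R * H.card) :
    ∃ q : ℕ, 1 ≤ q ∧ (q : ℝ) ≤ 3 * R ∧ ∃ h ∈ H, h + q ∈ H := by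
  have hl : (⌊3 * R⌋₊ : ℝ) ≤ 3 * R := Nat.floor_le (by linarith)
  obtain ⟨h, hh, u, hu, hul, hlu⟩ := exists_add_mul_mem (by linarith) hH hcard le_rfl
    (Nat.le_add_left 1 ⌊3 * R⌋₊) (by
      have : (2 * 1 * (⌊3 * R⌋₊ + 1) : ℝ) ≤ N := by linarith
      exact_mod_cast this)
  refine ⟨u, Nat.one_le_iff_ne_zero.2 ?_, le_trans (by exact_mod_cast Nat.lt_succ_iff.1 hul) hl,
    h, hh, by simpa using hu⟩
  rintro rfl
  have hfloor := Nat.lt_floor_add_one (3 * R)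
  push_cast at hlu
  linarith

end DenseSubsetsOfIntervals

section LinearRecurrence

variable {R : ℝ} {N : ℕ} {H : Finset ℤ} {θ δ : ℝ}

lemma nat_mul_distInt_le_of_le_half (hR : 0 < R) (hH : ∀ h ∈ H, |h| ≤ (N : ℤ))
    (hcard : (N : ℝ) ≤ R * H.card)
    (hdiff : ∀ h ∈ H, ∀ h' ∈ H, distInt (θ * (h' - h)) ≤ δ) {q l : ℕ} (hq : 1 ≤ q) (hl₁ : 1 ≤ l)
    (hl : 6 * R ≤ l) (hql : 2 * q * l ≤ N) (hhalf : l * distInt (q * θ) ≤ 1 / 2) :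
    l * distInt (q * θ) ≤ 6 * R * δ := by
  obtain ⟨h, hh, u, hu, hul, hlu⟩ := exists_add_mul_mem hR hH hcard hq hl₁ hql
  have hle : (u : ℝ) * distInt (q * θ) ≤ δ := by
    have huhalf : (u : ℝ) * distInt (q * θ) ≤ 1 / 2 := by
      refine le_trans ?_ hhalf
      gcongr
      exact distInt_nonneg _
    have hθ : θ * (((h + q * u : ℤ) : ℝ) - h) = u * (q * θ) := by
      push_cast
      ring
    rw [← distInt_nat_mul_eq huhalf, ← hθ]
    exact hdiff h hh _ hu
  have hu₁ : (1 : ℝ) ≤ u := by nlinarith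
  calc (l : ℝ) * distInt (q * θ) ≤ 6 * R * u * distInt (q * θ) := by
        gcongr
        · exact distInt_nonneg _
        · nlinarith [hu₁]
    _ = 6 * R * (u * distInt (q * θ)) := by ring
    _ ≤ 6 * R * δ := by gcongr

-- Bootstrapping: the bound for `l` keeps `(l + 1) * distInt (q * θ)` below `1 / 2`, which is what
-- the bound for `l + 1` needs.
lemma nat_mul_distInt_le (hR : 1 ≤ R) (hδ : 14 * (R * δ) ≤ 1) (hH : ∀ h ∈ H, |h| ≤ (N : ℤ))
    (hcard : (N : ℝ) ≤ R * H.card)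
    (hdiff : ∀ h ∈ H, ∀ h' ∈ H, distInt (θ * (h' - h)) ≤ δ) {q : ℕ} (hq : 1 ≤ q)
    (hqθ : distInt (q * θ) ≤ δ) {l : ℕ} (hl : ⌈6 * R⌉₊ ≤ l) (hql : 2 * q * l ≤ N) :
    l * distInt (q * θ) ≤ 6 * R * δ := by
  have hδ₀ : 0 ≤ δ := (distInt_nonneg _).trans hqθ
  have hone : ∀ n : ℕ, ⌈6 * R⌉₊ ≤ n → 1 ≤ n := fun n hn ↦
    (Nat.one_le_ceil_iff.2 (by linarith)).trans hn
  have hceil : ∀ n : ℕ, ⌈6 * R⌉₊ ≤ n → 6 * R ≤ n := fun n hn ↦ Nat.ceil_le.1 hn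
  induction l, hl using Nat.le_induction with
  | base =>
    refine nat_mul_distInt_le_of_le_half (by linarith) hH hcard hdiff hq (hone _ le_rfl)
      (hceil _ le_rfl) hql ?_
    have hlt : (⌈6 * R⌉₊ : ℝ) < 6 * R + 1 := Nat.ceil_lt_add_one (by linarith)
    calc (⌈6 * R⌉₊ : ℝ) * distInt (q * θ) ≤ 7 * R * δ := by
          gcongr
          · exact distInt_nonneg _
          · linarith
      _ ≤ 1 / 2 := by linarith
  | succ n hn ih =>
    refine nat_mul_distInt_le_of_le_half (by linarith) hH hcard hdiff hq (hone _ (by omega))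
      (hceil _ (by omega)) hql ?_
    have hle := ih ((Nat.mul_le_mul_left _ n.le_succ).trans hql)
    push_cast
    nlinarith

lemma exists_distInt_mul_le_of_dense (hR : 2 ≤ R) (hN : 64 * R ^ 2 ≤ N) (hδ : 14 * (R * δ) ≤ 1)
    (hH : ∀ h ∈ H, |h| ≤ (N : ℤ)) (hcard : (N : ℝ) ≤ R * H.card)
    (hdiff : ∀ h ∈ H, ∀ h' ∈ H, distInt (θ * (h' - h)) ≤ δ) :
    ∃ q : ℕ, 1 ≤ q ∧ (q : ℝ) ≤ 3 * R ∧ N * distInt (q * θ) ≤ 72 * R ^ 2 * δ := by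
  obtain ⟨q, hq, hqR, h, hh, hh'⟩ := exists_add_mem_of_dense hR (by nlinarith) hH hcard
  have hqθ : distInt (q * θ) ≤ δ := by
    have hθ : θ * (((h + q : ℤ) : ℝ) - h) = q * θ := by
      push_cast
      ring
    exact hθ ▸ hdiff h hh _ hh'
  set l := N / (2 * q)
  have hql : 2 * q * l ≤ N := Nat.mul_div_le N (2 * q)
  have hNlt : (N : ℝ) < 2 * q * (l + 1) := by
    exact_mod_cast Nat.lt_mul_div_succ N (show 0 < 2 * q by omega)
  have hl' : 6 * R + 1 ≤ l := by
    by_contra! hcon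
    have : (N : ℝ) < 2 * (3 * R) * (6 * R + 1 + 1) := by
      refine hNlt.trans_le ?_
      gcongr
    nlinarith
  have hlθ := nat_mul_distInt_le (by linarith) hδ hH hcard hdiff hq hqθ
    (Nat.ceil_le.2 (by linarith)) hql
  have hNql : (N : ℝ) ≤ 4 * q * l := by
    have : (1 : ℝ) ≤ q := by exact_mod_cast hq
    nlinarith
  refine ⟨q, hq, hqR, ?_⟩
  calc (N : ℝ) * distInt (q * θ) ≤ 4 * q * l * distInt (q * θ) := by
        gcongr
        exact distInt_nonneg _
    _ = 4 * q * (l * distInt (q * θ)) := by ring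
    _ ≤ 4 * (3 * R) * (6 * R * δ) := by
        gcongr
        exact mul_nonneg (Nat.cast_nonneg l) (distInt_nonneg _)
    _ = 72 * R ^ 2 * δ := by ring

end LinearRecurrence

section PolynomialDifferences

open Polynomial

variable {A : Type*} [CommRing A]

/-- `P' - P'(0)`, the linear coefficient of `P(x + t) - P(x)` in `x`, as a polynomial in `t`. -/
noncomputable def derivIncrement (P : A[X]) : A[X] := derivative P - C (P.coeff 1)

lemma coeff_one_taylor_sub_self (P : A[X]) (t : A) :
    (taylor t P - P).coeff 1 = (derivIncrement P).eval t := by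
  rw [derivIncrement, coeff_sub, taylor_coeff_one, eval_sub, eval_C]

lemma natDegree_taylor_sub_self_le {P : A[X]} {d : ℕ} (hP : P.natDegree ≤ d + 1) (t : A) :
    (taylor t P - P).natDegree ≤ d := by
  rw [natDegree_le_iff_coeff_eq_zero]
  intro n hn
  rw [coeff_sub, sub_eq_zero]
  rcases (Nat.succ_le_of_lt hn).eq_or_lt with rfl | hdn
  · have hconst : (hasseDeriv (d + 1) P).natDegree ≤ 0 := by
      have := natDegree_hasseDeriv_le P (d + 1)
      omega
    rw [taylor_coeff, eq_C_of_natDegree_le_zero hconst, eval_C, hasseDeriv_coeff]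
    simp
  · rw [coeff_eq_zero_of_natDegree_lt, coeff_eq_zero_of_natDegree_lt (hP.trans_lt hdn)]
    exact (natDegree_taylor P t).trans_lt (hP.trans_lt hdn)

lemma natDegree_derivIncrement_le {P : A[X]} {d : ℕ} (hP : P.natDegree ≤ d + 1) :
    (derivIncrement P).natDegree ≤ d := by
  refine (natDegree_sub_le _ _).trans ?_
  have := natDegree_derivative_le P
  rw [natDegree_C]
  omega

lemma coeff_derivIncrement (P : A[X]) {i : ℕ} (hi : 1 ≤ i) :
    (derivIncrement P).coeff i = P.coeff (i + 1) * (i + 1) := by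
  rw [derivIncrement, coeff_sub, coeff_derivative, coeff_C, if_neg (by omega), sub_zero]

lemma eval_eq_affine_add_sum {P : A[X]} {d : ℕ} (hP : P.natDegree ≤ d + 1) (x : A) :
    P.eval x = (P.coeff 0 + P.coeff 1 * x) +
      ∑ j ∈ Finset.range d, P.coeff (j + 2) * x ^ (j + 2) := by
  rw [eval_eq_sum_range' (show P.natDegree < d + 2 by omega), Finset.sum_range_succ',
    Finset.sum_range_succ']
  ring

end PolynomialDifferences

section PopularDifferences

variable {N : ℕ} {H : Finset ℤ}

lemma sum_sum_filter_add_mem {M : Type*} [AddCommMonoid M] (F : ℤ → ℤ → M)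
    (hH : ∀ h ∈ H, |h| ≤ (N : ℤ)) :
    ∑ t ∈ Finset.Icc (-(2 * N : ℤ)) (2 * N), ∑ h ∈ H with h + t ∈ H, F h (h + t)
      = ∑ p ∈ H ×ˢ H, F p.1 p.2 := by
  rw [← Finset.sum_fiberwise_of_maps_to (t := Finset.Icc (-(2 * N : ℤ)) (2 * N))
    (g := fun p : ℤ × ℤ ↦ p.2 - p.1)]
  · refine Finset.sum_congr rfl fun t _ ↦ ?_
    refine Finset.sum_bij' (fun h _ ↦ (h, h + t)) (fun p _ ↦ p.1) ?_ ?_ ?_ ?_ ?_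
    · simp
    · rintro ⟨a, b⟩ hp
      simp only [Finset.mem_filter, Finset.mem_product] at hp ⊢
      obtain ⟨⟨ha, hb⟩, rfl⟩ := hp
      simpa using ⟨ha, hb⟩
    · simp
    · rintro ⟨a, b⟩ hp
      simp [← (Finset.mem_filter.1 hp).2]
    · simp
  · intro p hp
    rw [Finset.mem_product] at hp
    have h₁ := abs_le.1 (hH _ hp.1)
    have h₂ := abs_le.1 (hH _ hp.2)
    rw [Finset.mem_Icc]
    constructor <;> omega

lemma exists_popular_differences {R : ℝ} (hR : 0 ≤ R) (hN : 1 ≤ N)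
    (hH : ∀ h ∈ H, |h| ≤ (N : ℤ)) (hcard : (N : ℝ) ≤ R * H.card) :
    ∃ T : Finset ℤ, (∀ t ∈ T, |t| ≤ 2 * (N : ℤ)) ∧ (H.card : ℝ) ≤ 2 * T.card ∧
      ∀ t ∈ T, (N : ℝ) ≤ 10 * R ^ 2 * (H.filter (fun h ↦ h + t ∈ H)).card := by
  have hN₀ : (0 : ℝ) < N := by exact_mod_cast hN
  have hH₀ : (0 : ℝ) < H.card := by
    by_contra! hcon
    nlinarith
  set T₀ := Finset.Icc (-(2 * N : ℤ)) (2 * N) with hT₀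
  have hT₀card : (T₀.card : ℝ) ≤ 5 * N := by
    have : T₀.card ≤ 5 * N := by
      rw [hT₀, Int.card_Icc]
      omega
    exact_mod_cast this
  have hpop := le_mul_card_filter_of_le_sum (f := fun t ↦ ((H.filter (fun h ↦ h + t ∈ H)).card : ℝ))
    (S := (H.card : ℝ) ^ 2) (M := H.card) hT₀card (by positivity) (by positivity)
    (fun t _ ↦ by exact_mod_cast Finset.card_filter_le _ _)
    (by
      have := sum_sum_filter_add_mem (fun _ _ ↦ 1) hH
      simp only [← Finset.card_eq_sum_ones, Finset.card_product] at this
      rw [sq]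
      exact_mod_cast this.ge)
  refine ⟨T₀.filter fun t ↦ (H.card : ℝ) ^ 2 ≤
      2 * (5 * N) * ((H.filter (fun h ↦ h + t ∈ H)).card : ℝ), fun t ht ↦ ?_, ?_, fun t ht ↦ ?_⟩
  · rw [abs_le]
    simpa [hT₀] using (Finset.mem_filter.1 ht).1
  · exact le_of_mul_le_mul_left (by linarith [sq (H.card : ℝ)]) hH₀
  · have hpopular := (Finset.mem_filter.1 ht).2
    refine le_of_mul_le_mul_right ?_ hN₀
    calc (N : ℝ) * N ≤ (R * H.card) * (R * H.card) := by gcongr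
      _ = R ^ 2 * (H.card : ℝ) ^ 2 := by ring
      _ ≤ R ^ 2 * (2 * (5 * N) * (H.filter (fun h ↦ h + t ∈ H)).card) := by gcongr
      _ = 10 * R ^ 2 * (H.filter (fun h ↦ h + t ∈ H)).card * N := by ring

end PopularDifferences

section VinogradovLemma

open Polynomial

/-- `C` is an admissible exponent in Vinogradov's lemma for polynomials of degree at most `d`: if
`P(h)` is within `ε` of an integer for a proportion `1 / R` of the `h ∈ [-N, N]`, then the
coefficients of `P` have, up to the error `ε R ^ C / N ^ i`, a common denominator at most `R ^ C`.
All losses are powers of the single parameter `R`, which will be a power of `log N`. -/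
def IsVinogradovExponent (d C : ℕ) : Prop :=
  ∀ R : ℝ, 2 ≤ R → ∀ N : ℕ, R ^ C ≤ N → ∀ P : ℝ[X], P.natDegree ≤ d →
    ∀ ε : ℝ, 0 ≤ ε → ε * R ^ C ≤ 1 → ∀ H : Finset ℤ, (∀ h ∈ H, |h| ≤ (N : ℤ)) →
      (N : ℝ) ≤ R * H.card → (∀ h ∈ H, distInt (P.eval (h : ℝ)) ≤ ε) →
      ∃ q : ℕ, 1 ≤ q ∧ (q : ℝ) ≤ R ^ C ∧ ∀ i, distInt (q * P.coeff i) ≤ ε * R ^ C / (N : ℝ) ^ i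

variable {R ε : ℝ} {N d C : ℕ} {P : ℝ[X]} {H : Finset ℤ}

lemma isVinogradovExponent_one : IsVinogradovExponent 1 12 := by
  intro R hR N hN P hP ε hε hεR H hH hcard hHε
  have hN₀ : (0 : ℝ) < N := lt_of_lt_of_le (by positivity) hN
  have heval : ∀ x, P.eval x = P.coeff 0 + P.coeff 1 * x := fun x ↦ by
    simp [eval_eq_affine_add_sum (d := 0) hP]
  have hdiff : ∀ h ∈ H, ∀ h' ∈ H, distInt (P.coeff 1 * (h' - h)) ≤ 2 * ε := by
    intro h hh h' hh'
    have hle := distInt_mul_sub_le_of_affine (P.coeff 0) (P.coeff 1) h h'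
    rw [← heval, ← heval] at hle
    linarith [hHε h hh, hHε h' hh']
  have hR₁ : 2048 * R ≤ R ^ 12 := by
    simpa using const_mul_pow_le_pow hR (c := 2048) (e := 11) (a := 1) (b := 12)
      (by norm_num) (by norm_num)
  have hR₂ : 256 * R ^ 2 ≤ R ^ 12 :=
    const_mul_pow_le_pow hR (e := 8) (by norm_num) (by norm_num)
  obtain ⟨q, hq, hqR, hqθ⟩ := exists_distInt_mul_le_of_dense hR (by nlinarith) (by nlinarith)
    hH hcard hdiff
  have hlinear : N * distInt (q * P.coeff 1) ≤ 144 * R ^ 2 * ε := by linarith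
  obtain ⟨h, hh⟩ : H.Nonempty := Finset.card_pos.1 <| Nat.cast_pos.1 <|
    pos_of_mul_pos_right (hN₀.trans_le hcard) (by positivity)
  have hconst : distInt (q * P.coeff 0) ≤ ε * R ^ 12 := by
    have hhN : |(h : ℝ)| ≤ N := by exact_mod_cast hH h hh
    calc distInt (q * P.coeff 0)
        ≤ q * distInt (P.eval (h : ℝ)) + |(h : ℝ)| * distInt (q * P.coeff 1) :=
          heval h ▸ distInt_nat_mul_le_of_affine q _ _ h
      _ ≤ 3 * R * ε + N * distInt (q * P.coeff 1) := by
          gcongr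
          · exact distInt_nonneg _
          · exact hHε h hh
          · exact distInt_nonneg _
      _ ≤ ε * R ^ 12 := by nlinarith
  refine ⟨q, hq, by linarith, fun i ↦ ?_⟩
  match i with
  | 0 => simpa using hconst
  | 1 =>
    rw [pow_one, le_div_iff₀ hN₀]
    nlinarith [hlinear]
  | n + 2 =>
    rw [coeff_eq_zero_of_natDegree_lt (by omega), mul_zero, distInt_zero]
    positivity

lemma IsVinogradovExponent.exists_distInt_eval_derivIncrement_le (hC : IsVinogradovExponent d C)
    (hR : 2 ≤ R) (hN : R ^ C ≤ N) (hP : P.natDegree ≤ d + 1) (hε : 0 ≤ ε)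
    (hεR : 2 * ε * R ^ C ≤ 1) (hH : ∀ h ∈ H, |h| ≤ (N : ℤ))
    (hHε : ∀ h ∈ H, distInt (P.eval (h : ℝ)) ≤ ε) {t : ℤ}
    (ht : (N : ℝ) ≤ R * (H.filter (fun h ↦ h + t ∈ H)).card) :
    ∃ q : ℕ, 1 ≤ q ∧ (q : ℝ) ≤ R ^ C ∧
      distInt (q * (derivIncrement P).eval (t : ℝ)) ≤ 2 * ε * R ^ C / N := by
  obtain ⟨q, hq, hqR, hcoeff⟩ := hC R hR N hN (taylor (t : ℝ) P - P)
    (natDegree_taylor_sub_self_le hP t) (2 * ε) (by positivity) hεR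
    (H.filter (fun h ↦ h + t ∈ H)) (fun h hh ↦ hH h (Finset.mem_filter.1 hh).1) ht (by
      intro h hh
      obtain ⟨hhH, hhtH⟩ := Finset.mem_filter.1 hh
      have hε' := hHε _ hhtH
      push_cast at hε'
      rw [eval_sub, taylor_eval]
      linarith [distInt_sub_le (P.eval (h + t : ℝ)) (P.eval (h : ℝ)), hHε h hhH])
  refine ⟨q, hq, hqR, ?_⟩
  simpa only [coeff_one_taylor_sub_self, pow_one] using hcoeff 1

lemma IsVinogradovExponent.exists_dense_distInt_eval_derivIncrement_le
    (hC : IsVinogradovExponent d C) (hR : 2 ≤ R) (hN : R ^ (6 * C) ≤ N)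
    (hP : P.natDegree ≤ d + 1) (hε : 0 ≤ ε) (hεR : 2 * ε * R ^ (6 * C) ≤ 1)
    (hH : ∀ h ∈ H, |h| ≤ (N : ℤ)) (hcard : (N : ℝ) ≤ R * H.card)
    (hHε : ∀ h ∈ H, distInt (P.eval (h : ℝ)) ≤ ε) :
    ∃ q : ℕ, 1 ≤ q ∧ (q : ℝ) ≤ R ^ (6 * C) ∧ ∃ T : Finset ℤ, (∀ t ∈ T, |t| ≤ 2 * (N : ℤ)) ∧
      2 * (N : ℝ) ≤ R ^ (6 * C + 3) * T.card ∧
      ∀ t ∈ T, distInt (q * (derivIncrement P).eval (t : ℝ)) ≤ 2 * ε * R ^ (6 * C) / N := by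
  have hN₁ : (1 : ℝ) ≤ N := (one_le_pow₀ (by linarith)).trans hN
  obtain ⟨T, hTN, hHT, hpopular⟩ :=
    exists_popular_differences (by linarith) (by exact_mod_cast hN₁) hH hcard
  have hT : T.Nonempty := by
    rw [Finset.nonempty_iff_ne_empty]
    rintro rfl
    simp only [Finset.card_empty, Nat.cast_zero, mul_zero] at hHT
    nlinarith
  have hR₆ : 10 * R ^ 2 ≤ R ^ 6 := const_mul_pow_le_pow hR (e := 4) (by norm_num) (by norm_num)
  rw [pow_mul] at hN hεR
  obtain ⟨q, hq, hqR, T', hT', hTT', hclose⟩ := exists_common_denominator hT fun t ht ↦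
    hC.exists_distInt_eval_derivIncrement_le (hR.trans (le_self_pow₀ (by linarith) (by norm_num)))
      hN hP hε hεR hH hHε (t := t) ((hpopular t ht).trans (by gcongr))
  rw [← pow_mul] at hqR hTT' hclose
  refine ⟨q, hq, hqR, T', fun t ht ↦ hTN t (hT' ht), ?_, hclose⟩
  calc 2 * (N : ℝ) ≤ 2 * (R * (2 * (R ^ (6 * C) * T'.card))) := by
        gcongr
        exact hcard.trans (by gcongr; linarith)
    _ = 4 * R ^ (6 * C + 1) * T'.card := by ring
    _ ≤ R ^ (6 * C + 3) * T'.card := by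
        gcongr
        exact const_mul_pow_le_pow hR (e := 2) (by norm_num) (by omega)

lemma distInt_factorial_mul_coeff_le (hP : P.natDegree ≤ d) (q : ℕ) {j : ℕ} (hj : 2 ≤ j) :
    distInt ((d.factorial * q : ℕ) * P.coeff j) ≤
      d.factorial * distInt (q * (derivIncrement P).coeff (j - 1)) := by
  rcases lt_or_ge d j with hdj | hdj
  · rw [coeff_eq_zero_of_natDegree_lt (hP.trans_lt hdj), mul_zero, distInt_zero]
    exact mul_nonneg (Nat.cast_nonneg _) (distInt_nonneg _)
  · obtain ⟨w, hw⟩ := Nat.dvd_factorial (show 0 < j by omega) hdj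
    have hcoeff : (derivIncrement P).coeff (j - 1) = P.coeff j * j := by
      rw [coeff_derivIncrement P (by omega), ← Nat.cast_add_one, Nat.sub_add_cancel (by omega)]
    have hsplit : ((d.factorial * q : ℕ) : ℝ) * P.coeff j
        = w * (q * (derivIncrement P).coeff (j - 1)) := by
      rw [hcoeff, hw]
      push_cast
      ring
    rw [hsplit]
    refine (distInt_nat_mul_le _ _).trans ?_
    gcongr
    · exact distInt_nonneg _
    · rw [hw]
      exact Nat.le_mul_of_pos_left _ (by omega)

lemma IsVinogradovExponent.exists_distInt_coeff_le_of_dense (hC : IsVinogradovExponent d C)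
    (hR : 2 ≤ R) (hP : P.natDegree ≤ d + 1) (hε : 0 ≤ ε) (hε₁ : ε ≤ 1) {a b : ℕ} (hb : b ≠ 0)
    (hN : R ^ ((d + 1).factorial + a + b * C) ≤ N) {q : ℕ} (hq : 1 ≤ q) (hqR : q ≤ R ^ a)
    {T : Finset ℤ} (hTN : ∀ t ∈ T, |t| ≤ 2 * (N : ℤ)) (hTcard : 2 * (N : ℝ) ≤ R ^ b * T.card)
    (hTε : ∀ t ∈ T, distInt (q * (derivIncrement P).eval (t : ℝ)) ≤ ε * R ^ a / N) :
    ∃ q' : ℕ, 1 ≤ q' ∧ (q' : ℝ) ≤ R ^ ((d + 1).factorial + a + b * C) ∧ ∀ j, 2 ≤ j →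
      distInt (q' * P.coeff j) ≤ ε * R ^ ((d + 1).factorial + a + b * C) / (N : ℝ) ^ j := by
  have hR₁ : 1 ≤ R := by linarith
  have hN₁ : (1 : ℝ) ≤ N := (one_le_pow₀ hR₁).trans hN
  have hle : R ^ (a + b * C) ≤ R ^ ((d + 1).factorial + a + b * C) :=
    pow_le_pow_right₀ hR₁ (by omega)
  have hfac : (d + 1).factorial * R ^ (a + b * C) ≤ R ^ ((d + 1).factorial + a + b * C) :=
    const_mul_pow_le_pow hR (by exact_mod_cast Nat.lt_two_pow_self.le) (by omega)
  obtain ⟨q₂, hq₂, hq₂R, hcoeff⟩ := hC (R ^ b) (hR.trans (le_self_pow₀ hR₁ hb)) (2 * N)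
    (by
      rw [← pow_mul]
      push_cast
      linarith [pow_le_pow_right₀ hR₁ (show b * C ≤ a + b * C by omega)])
    (Polynomial.C (q : ℝ) * derivIncrement P)
    ((natDegree_C_mul_le _ _).trans (natDegree_derivIncrement_le hP))
    (ε * R ^ a / N) (by positivity)
    (by
      rw [← pow_mul, div_mul_eq_mul_div, mul_assoc, ← pow_add, div_le_one (by linarith)]
      nlinarith [pow_pos (zero_lt_one.trans_le hR₁) (a + b * C)])
    T (by exact_mod_cast hTN) (by exact_mod_cast hTcard)
    (by simpa only [eval_mul, eval_C] using hTε)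
  rw [← pow_mul] at hq₂R hcoeff
  refine ⟨(d + 1).factorial * (q₂ * q), Nat.mul_pos (Nat.factorial_pos _) (Nat.mul_pos hq₂ hq),
    le_trans ?_ hfac, fun j hj ↦ ?_⟩
  · rw [Nat.cast_mul, Nat.cast_mul, add_comm a, pow_add]
    gcongr
  · have hj₁ := hcoeff (j - 1)
    rw [coeff_C_mul, ← mul_assoc, ← Nat.cast_mul] at hj₁
    calc distInt (((d + 1).factorial * (q₂ * q) : ℕ) * P.coeff j)
        ≤ (d + 1).factorial *
            (ε * R ^ a / N * R ^ (b * C) / ((2 * N : ℕ) : ℝ) ^ (j - 1)) :=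
          (distInt_factorial_mul_coeff_le hP _ hj).trans (by gcongr)
      _ ≤ (d + 1).factorial * (ε * R ^ a / N * R ^ (b * C) / (N : ℝ) ^ (j - 1)) := by
          gcongr
          omega
      _ = ε * ((d + 1).factorial * R ^ (a + b * C)) / (N : ℝ) ^ j := by
          rw [pow_add R, ← Nat.sub_add_cancel (show 1 ≤ j by omega), pow_succ (N : ℝ),
            Nat.add_sub_cancel]
          field_simp
      _ ≤ ε * R ^ ((d + 1).factorial + a + b * C) / (N : ℝ) ^ j := by gcongr

lemma IsVinogradovExponent.exists_distInt_coeff_le_of_two_le (hC : IsVinogradovExponent d C)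
    {C' : ℕ} (hC' : (d + 1).factorial + 6 * C + (6 * C + 3) * C + 1 ≤ C')
    (hR : 2 ≤ R) (hN : R ^ C' ≤ N) (hP : P.natDegree ≤ d + 1) (hε : 0 ≤ ε)
    (hεR : ε * R ^ C' ≤ 1) (hH : ∀ h ∈ H, |h| ≤ (N : ℤ)) (hcard : (N : ℝ) ≤ R * H.card)
    (hHε : ∀ h ∈ H, distInt (P.eval (h : ℝ)) ≤ ε) :
    ∃ q : ℕ, 1 ≤ q ∧ (q : ℝ) ≤ R ^ C' ∧
      ∀ j, 2 ≤ j → distInt (q * P.coeff j) ≤ ε * R ^ C' / (N : ℝ) ^ j := by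
  have hR₁ : 1 ≤ R := by linarith
  have hle : ∀ a < C', 2 * R ^ a ≤ R ^ C' := fun a ha ↦
    const_mul_pow_le_pow hR (e := 1) (by norm_num) (by omega)
  obtain ⟨q₁, hq₁, hq₁R, T, hTN, hTcard, hTclose⟩ :=
    hC.exists_dense_distInt_eval_derivIncrement_le hR
      ((pow_le_pow_right₀ hR₁ (by omega)).trans hN) hP hε
      (by nlinarith [hle (6 * C) (by omega)]) hH hcard hHε
  obtain ⟨q, hq, hqR, hcoeff⟩ := hC.exists_distInt_coeff_le_of_dense hR hP
    (mul_nonneg zero_le_two hε) (by nlinarith [hle 0 (by omega)]) (by omega)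
    ((pow_le_pow_right₀ hR₁ (by omega)).trans hN) hq₁ hq₁R hTN hTcard hTclose
  refine ⟨q, hq, hqR.trans (pow_le_pow_right₀ hR₁ (by omega)), fun j hj ↦ (hcoeff j hj).trans ?_⟩
  rw [mul_comm 2 ε, mul_assoc]
  gcongr
  exact hle _ (by omega)

lemma distInt_affine_part_le (hP : P.natDegree ≤ d + 1) {q : ℕ} {B : ℝ} (hqB : q ≤ B)
    (hcoeff : ∀ j, 2 ≤ j → distInt (q * P.coeff j) ≤ ε * B / (N : ℝ) ^ j) (hN : 1 ≤ N) {h : ℤ}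
    (hhN : |h| ≤ (N : ℤ)) (hhε : distInt (P.eval (h : ℝ)) ≤ ε) :
    distInt (q * P.coeff 0 + q * P.coeff 1 * h) ≤ (d + 1) * (ε * B) := by
  have hN₀ : (0 : ℝ) < N := by exact_mod_cast hN
  have hsplit : q * P.coeff 0 + q * P.coeff 1 * h = q * P.eval (h : ℝ) -
      ∑ j ∈ Finset.range d, (h ^ (j + 2) : ℤ) * (q * P.coeff (j + 2)) := by
    have hcomm : ∀ j, ((h ^ (j + 2) : ℤ) : ℝ) * (q * P.coeff (j + 2))
        = q * (P.coeff (j + 2) * (h : ℝ) ^ (j + 2)) := fun j ↦ by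
      push_cast
      ring
    simp_rw [hcomm]
    rw [eval_eq_affine_add_sum hP, mul_add, Finset.mul_sum]
    ring
  have hmain : distInt (q * P.eval (h : ℝ)) ≤ B * ε := by
    refine (distInt_nat_mul_le _ _).trans ?_
    gcongr
    · exact distInt_nonneg _
    · exact (Nat.cast_nonneg q).trans hqB
  have hterm : ∀ j ∈ Finset.range d,
      distInt ((h ^ (j + 2) : ℤ) * (q * P.coeff (j + 2))) ≤ ε * B := by
    intro j _
    have hpow : |((h ^ (j + 2) : ℤ) : ℝ)| ≤ (N : ℝ) ^ (j + 2) := by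
      rw [Int.cast_pow, abs_pow]
      gcongr
      exact_mod_cast hhN
    calc distInt ((h ^ (j + 2) : ℤ) * (q * P.coeff (j + 2)))
        ≤ (N : ℝ) ^ (j + 2) * (ε * B / (N : ℝ) ^ (j + 2)) := by
          refine (distInt_int_mul_le _ _).trans ?_
          gcongr
          · exact distInt_nonneg _
          · exact hcoeff (j + 2) (by omega)
      _ = ε * B := mul_div_cancel₀ _ (pow_pos hN₀ _).ne'
  have hsum := (distInt_sum_le _ _).trans (Finset.sum_le_card_nsmul _ _ _ hterm)
  rw [Finset.card_range, nsmul_eq_mul] at hsum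
  rw [hsplit]
  refine (distInt_sub_le _ _).trans ?_
  linarith

lemma IsVinogradovExponent.succ (hC : IsVinogradovExponent d C) :
    IsVinogradovExponent (d + 1)
      ((d + 1).factorial + 6 * C + (6 * C + 3) * C + 1 + (d + 1) + 12) := by
  intro R hR N hN P hP ε hε hεR H hH hcard hHε
  set C₁ := (d + 1).factorial + 6 * C + (6 * C + 3) * C + 1 with hC₁
  have hR₁ : 1 ≤ R := by linarith
  have hle : ∀ a ≤ C₁ + (d + 1) + 12, R ^ a ≤ R ^ (C₁ + (d + 1) + 12) :=
    fun a ha ↦ pow_le_pow_right₀ hR₁ ha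
  have hN₁ : (1 : ℝ) ≤ N := (one_le_pow₀ hR₁).trans hN
  obtain ⟨q₁, hq₁, hq₁R, hhigher⟩ := hC.exists_distInt_coeff_le_of_two_le hC₁.ge hR
    ((hle _ (by omega)).trans hN) hP hε (le_trans (by gcongr; omega) hεR) hH hcard hHε
  have haffine : ∀ h ∈ H, distInt ((Polynomial.C (q₁ * P.coeff 1) * X +
      Polynomial.C (q₁ * P.coeff 0) : ℝ[X]).eval (h : ℝ)) ≤ ε * R ^ (C₁ + (d + 1)) := by
    intro h hh
    have hd : (d + 1 : ℝ) ≤ 2 ^ (d + 1) := by exact_mod_cast Nat.lt_two_pow_self.le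
    rw [eval_add, eval_C_mul, eval_C, eval_X, add_comm]
    calc distInt (q₁ * P.coeff 0 + q₁ * P.coeff 1 * h) ≤ (d + 1) * (ε * R ^ C₁) :=
          distInt_affine_part_le hP hq₁R hhigher (by exact_mod_cast hN₁) (hH h hh) (hHε h hh)
      _ = ε * ((d + 1) * R ^ C₁) := by ring
      _ ≤ ε * R ^ (C₁ + (d + 1)) := by
          gcongr
          exact const_mul_pow_le_pow hR hd (by omega)
  obtain ⟨q₂, hq₂, hq₂R, hlower⟩ := isVinogradovExponent_one R hR N
    ((hle _ (by omega)).trans hN) _ natDegree_linear_le _ (by positivity)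
    (by rwa [mul_assoc, ← pow_add]) H hH hcard haffine
  refine ⟨q₂ * q₁, Nat.mul_pos hq₂ hq₁, ?_, fun i ↦ ?_⟩
  · push_cast
    calc (q₂ : ℝ) * q₁ ≤ R ^ 12 * R ^ C₁ := by gcongr
      _ = R ^ (12 + C₁) := (pow_add R 12 C₁).symm
      _ ≤ R ^ (C₁ + (d + 1) + 12) := hle _ (by omega)
  · rw [Nat.cast_mul, mul_assoc]
    have hi := hlower i
    rw [mul_assoc ε, ← pow_add] at hi
    match i with
    | 0 => simpa using hi
    | 1 => simpa using hi
    | n + 2 =>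
      calc distInt (q₂ * (q₁ * P.coeff (n + 2)))
          ≤ R ^ 12 * (ε * R ^ C₁ / (N : ℝ) ^ (n + 2)) :=
            distInt_nat_mul_le_of_le hq₂R (hhigher (n + 2) (by omega))
        _ = ε * R ^ (12 + C₁) / (N : ℝ) ^ (n + 2) := by
            rw [pow_add R 12 C₁]
            ring
        _ ≤ ε * R ^ (C₁ + (d + 1) + 12) / (N : ℝ) ^ (n + 2) := by
            gcongr ε * ?_ / _
            exact hle _ (by omega)

theorem exists_isVinogradovExponent (d : ℕ) : ∃ C, IsVinogradovExponent d C := by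
  have hsucc : ∃ C, IsVinogradovExponent (d + 1) C := by
    induction d with
    | zero => exact ⟨12, isVinogradovExponent_one⟩
    | succ n ih => exact ih.imp' _ fun C hC ↦ hC.succ
  exact hsucc.imp fun C hC R hR N hN P hP ↦ hC R hR N hN P (by omega)

end VinogradovLemma

section OrdConnected

variable {s : Finset ℤ}

lemma exists_eq_Icc_of_ordConnected (hs : (s : Set ℤ).OrdConnected) :
    ∃ x y, s = Finset.Icc x y := by
  rcases s.eq_empty_or_nonempty with rfl | hne
  · exact ⟨1, 0, rfl⟩
  · refine ⟨s.min' hne, s.max' hne, Finset.Subset.antisymm (fun c hc ↦ ?_) fun c hc ↦ ?_⟩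
    · exact Finset.mem_Icc.2 ⟨s.min'_le c hc, s.le_max' c hc⟩
    · exact hs.out (s.min'_mem hne) (s.max'_mem hne) (by simpa using hc)

lemma ordConnected_filter_add_mem (hs : (s : Set ℤ).OrdConnected) (t : ℤ) :
    ((s.filter fun n ↦ n + t ∈ s : Finset ℤ) : Set ℤ).OrdConnected := by
  have hinter : ((s.filter fun n ↦ n + t ∈ s : Finset ℤ) : Set ℤ)
      = (s : Set ℤ) ∩ (fun n ↦ n + t) ⁻¹' (s : Set ℤ) := by
    ext
    simp
  rw [hinter]
  exact hs.inter (hs.preimage_mono fun _ _ h ↦ by simpa using h)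

lemma card_le_of_abs_le {N : ℕ} (hsN : ∀ n ∈ s, |n| ≤ (N : ℤ)) : s.card ≤ 2 * N + 1 := by
  have hsub : s ⊆ Finset.Icc (-(N : ℤ)) N := fun n hn ↦ Finset.mem_Icc.2 (abs_le.1 (hsN n hn))
  refine (Finset.card_le_card hsub).trans ?_
  rw [Int.card_Icc]
  omega

variable {f : ℤ → ℂ}

lemma norm_sum_add_one_sub_le (hs : (s : Set ℤ).OrdConnected) (hf : ∀ n, ‖f n‖ ≤ 1) :
    ‖∑ n ∈ s, (f (n + 1) - f n)‖ ≤ 2 := by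
  obtain ⟨x, y, rfl⟩ := exists_eq_Icc_of_ordConnected hs
  rcases lt_or_ge y x with hxy | hxy
  · simp [Finset.Icc_eq_empty hxy.not_ge]
  · have htelescope : ∑ n ∈ Finset.Icc x y, (f (n + 1) - f n) = f (y + 1) - f x := by
      clear hs
      induction y, hxy using Int.leInduction with
      | base => simp
      | succ y hy ih =>
        have hinsert : Finset.Icc x (y + 1) = insert (y + 1) (Finset.Icc x y) := by
          ext
          simp only [Finset.mem_Icc, Finset.mem_insert]
          omega
        rw [hinsert, Finset.sum_insert (by simp), ih]
        ring
    rw [htelescope]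
    linarith [norm_sub_le (f (y + 1)) (f x), hf (y + 1), hf x]

lemma norm_sum_add_sub_le (hs : (s : Set ℤ).OrdConnected) (hf : ∀ n, ‖f n‖ ≤ 1) (t : ℕ) :
    ‖∑ n ∈ s, (f (n + t) - f n)‖ ≤ 2 * t := by
  induction t with
  | zero => simp
  | succ t ih =>
    have hsplit : ∑ n ∈ s, (f (n + (t + 1 : ℕ)) - f n)
        = ∑ n ∈ s, (f (n + 1 + t) - f (n + t)) + ∑ n ∈ s, (f (n + t) - f n) := by
      rw [← Finset.sum_add_distrib]
      refine Finset.sum_congr rfl fun n _ ↦ ?_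
      push_cast
      rw [add_right_comm n 1, add_assoc n]
      ring
    rw [hsplit, Nat.cast_add_one]
    refine (norm_add_le _ _).trans ?_
    linarith [norm_sum_add_one_sub_le hs (f := fun n ↦ f (n + t)) fun n ↦ hf _]

end OrdConnected

section VanDerCorput

variable {s : Finset ℤ} {N : ℕ} {g : ℤ → ℝ}

lemma norm_sum_eC_le_card {ι : Type*} (s : Finset ι) (g : ι → ℝ) :
    ‖∑ n ∈ s, eC (g n)‖ ≤ s.card :=
  (norm_sum_le _ _).trans (by simp)

lemma norm_sum_eC_sq_le (hsN : ∀ n ∈ s, |n| ≤ (N : ℤ)) :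
    ‖∑ n ∈ s, eC (g n)‖ ^ 2 ≤ ∑ t ∈ Finset.Icc (-(2 * N : ℤ)) (2 * N),
      ‖∑ n ∈ s with n + t ∈ s, eC (g (n + t) - g n)‖ := by
  have hsq : ((‖∑ n ∈ s, eC (g n)‖ ^ 2 : ℝ) : ℂ) = ∑ t ∈ Finset.Icc (-(2 * N : ℤ)) (2 * N),
      ∑ n ∈ s with n + t ∈ s, eC (g (n + t) - g n) := by
    rw [sum_sum_filter_add_mem (fun a b ↦ eC (g b - g a)) hsN, ← Complex.normSq_eq_norm_sq,
      ← Complex.mul_conj, map_sum, Finset.sum_mul_sum, Finset.sum_product_right]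
    refine Finset.sum_congr rfl fun a _ ↦ Finset.sum_congr rfl fun b _ ↦ ?_
    rw [← eC_neg, ← eC_add, sub_eq_add_neg]
  rw [← Real.norm_of_nonneg (sq_nonneg ‖∑ n ∈ s, eC (g n)‖), ← Complex.norm_real, hsq]
  exact norm_sum_le _ _

lemma exists_large_differenced_sums {R : ℝ} (hN : 1 ≤ N) (hsN : ∀ n ∈ s, |n| ≤ (N : ℤ))
    (hsum : N ≤ R * ‖∑ n ∈ s, eC (g n)‖) :
    ∃ T : Finset ℤ, (∀ t ∈ T, |t| ≤ 2 * (N : ℤ)) ∧ (N : ℝ) ≤ 6 * R ^ 2 * T.card ∧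
      ∀ t ∈ T, N ≤ 10 * R ^ 2 * ‖∑ n ∈ s with n + t ∈ s, eC (g (n + t) - g n)‖ := by
  have hN₀ : (1 : ℝ) ≤ N := by exact_mod_cast hN
  set T₀ := Finset.Icc (-(2 * N : ℤ)) (2 * N) with hT₀
  have hT₀card : (T₀.card : ℝ) ≤ 5 * N := by
    have : T₀.card ≤ 5 * N := by
      rw [hT₀, Int.card_Icc]
      omega
    exact_mod_cast this
  have hterm : ∀ t ∈ T₀, ‖∑ n ∈ s with n + t ∈ s, eC (g (n + t) - g n)‖ ≤ 3 * N := by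
    intro t _
    have hcard : ((s.filter fun n ↦ n + t ∈ s).card : ℝ) ≤ 2 * N + 1 := by
      exact_mod_cast card_le_of_abs_le fun n hn ↦ hsN n (Finset.mem_filter.1 hn).1
    linarith [norm_sum_eC_le_card (s.filter fun n ↦ n + t ∈ s) fun n ↦ g (n + t) - g n]
  have hpop := le_mul_card_filter_of_le_sum hT₀card (by positivity) (sq_nonneg _) hterm
    (norm_sum_eC_sq_le hsN)
  have hsq : (N : ℝ) * N ≤ R ^ 2 * ‖∑ n ∈ s, eC (g n)‖ ^ 2 := by
    rw [← mul_pow, ← sq]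
    gcongr
  refine ⟨T₀.filter fun t ↦ ‖∑ n ∈ s, eC (g n)‖ ^ 2
      ≤ 2 * (5 * N) * ‖∑ n ∈ s with n + t ∈ s, eC (g (n + t) - g n)‖,
    fun t ht ↦ ?_, ?_, fun t ht ↦ ?_⟩
  · rw [abs_le]
    simpa [hT₀] using (Finset.mem_filter.1 ht).1
  · nlinarith [mul_le_mul_of_nonneg_left hpop (sq_nonneg R)]
  · nlinarith [mul_le_mul_of_nonneg_left (Finset.mem_filter.1 ht).2 (sq_nonneg R)]

end VanDerCorput

section WeylSums

open Polynomial

/-- The polynomial phase `P` is major-arc at scale `N`: up to the errors `B / N ^ i`, its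
nonconstant coefficients have a common denominator at most `B`. -/
def IsMajorArc (B : ℝ) (N : ℕ) (P : ℝ[X]) : Prop :=
  ∃ q : ℕ, 1 ≤ q ∧ (q : ℝ) ≤ B ∧ ∀ i, 1 ≤ i → distInt (q * P.coeff i) ≤ B / (N : ℝ) ^ i

lemma IsMajorArc.mono {B B' : ℝ} {N : ℕ} {P : ℝ[X]} (h : IsMajorArc B N P) (hB : B ≤ B') :
    IsMajorArc B' N P := by
  obtain ⟨q, hq, hqB, hcoeff⟩ := h
  refine ⟨q, hq, hqB.trans hB, fun i hi ↦ (hcoeff i hi).trans ?_⟩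
  gcongr

/-- `C` is an admissible exponent in Weyl's inequality over the integers for polynomials of degree
at most `d`: an exponential sum over an interval which is only a factor `R` below the trivial bound
forces the phase to be major-arc with bound `R ^ C`. -/
def IsWeylExponent (d C : ℕ) : Prop :=
  ∀ R : ℝ, 2 ≤ R → ∀ N : ℕ, R ^ C ≤ N → ∀ P : ℝ[X], P.natDegree ≤ d →
    ∀ s : Finset ℤ, (s : Set ℤ).OrdConnected → (∀ n ∈ s, |n| ≤ (N : ℤ)) →
      N ≤ R * ‖∑ n ∈ s, eC (P.eval (n : ℝ))‖ → IsMajorArc (R ^ C) N P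

variable {R B : ℝ} {N d C V q : ℕ} {P : ℝ[X]} {s : Finset ℤ}

lemma exists_add_pow_sub_pow_eq_mul {n : ℤ} (hn : |n| ≤ (N : ℤ)) (hq : 1 ≤ q) (hqN : q ≤ N)
    (m : ℕ) : ∃ u : ℤ, (n + q) ^ m - n ^ m = q * u ∧ |(u : ℝ)| ≤ m * (2 * N) ^ (m - 1) := by
  obtain ⟨u, hu⟩ := sub_dvd_pow_sub_pow (n + q) n m
  rw [add_sub_cancel_left] at hu
  refine ⟨u, hu, ?_⟩
  have hmax : max |n + q| |n| ≤ 2 * (N : ℤ) := by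
    have := abs_le.1 hn
    refine max_le ?_ (by omega)
    rw [abs_le]
    omega
  have hle := abs_pow_sub_pow_le (n + q : ℤ) n m
  rw [hu, add_sub_cancel_left, abs_mul, mul_assoc] at hle
  have hu_le : |u| ≤ m * (2 * (N : ℤ)) ^ (m - 1) := by
    have hq₀ : 0 < |(q : ℤ)| := by simpa using Nat.pos_of_ne_zero (Nat.one_le_iff_ne_zero.1 hq)
    refine (le_of_mul_le_mul_left hle hq₀).trans ?_
    gcongr
  exact_mod_cast hu_le

lemma distInt_coeff_mul_pow_sub_pow_le {n : ℤ} (hn : |n| ≤ (N : ℤ)) (hq : 1 ≤ q) (hqN : q ≤ N)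
    {θ : ℝ} {j : ℕ} (hj : 1 ≤ j) (hθ : distInt (q * θ) ≤ B / (N : ℝ) ^ j) :
    distInt (θ * ((n + q : ℝ) ^ j - n ^ j)) ≤ j * 2 ^ (j - 1) * (B / N) := by
  have hN₀ : (0 : ℝ) < N := by exact_mod_cast hq.trans hqN
  obtain ⟨u, hu, hu_le⟩ := exists_add_pow_sub_pow_eq_mul hn hq hqN j
  have hcast : (n + q : ℝ) ^ j - n ^ j = q * u := by exact_mod_cast hu
  rw [hcast, ← mul_assoc, mul_comm θ, mul_comm]
  calc distInt (u * (q * θ)) ≤ |(u : ℝ)| * distInt (q * θ) := distInt_int_mul_le _ _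
    _ ≤ j * (2 * N) ^ (j - 1) * (B / (N : ℝ) ^ j) := by
        gcongr
        exact distInt_nonneg _
    _ = j * 2 ^ (j - 1) * (B / N) := by
        obtain ⟨i, rfl⟩ := Nat.exists_eq_add_of_le' hj
        rw [Nat.add_sub_cancel, mul_pow, pow_succ (N : ℝ)]
        field_simp

lemma distInt_eval_add_sub_eval_sub_le (hP : P.natDegree ≤ d + 1) (hB : 0 ≤ B) {n : ℤ}
    (hn : |n| ≤ (N : ℤ)) (hq : 1 ≤ q) (hqN : q ≤ N)
    (hcoeff : ∀ j, 2 ≤ j → distInt (q * P.coeff j) ≤ B / (N : ℝ) ^ j) :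
    distInt (P.eval (n + q : ℝ) - P.eval (n : ℝ) - q * P.coeff 1)
      ≤ d * ((d + 1) * 2 ^ d * (B / N)) := by
  have hsplit : P.eval (n + q : ℝ) - P.eval (n : ℝ) - q * P.coeff 1
      = ∑ j ∈ Finset.range d, P.coeff (j + 2) * ((n + q : ℝ) ^ (j + 2) - n ^ (j + 2)) := by
    simp_rw [mul_sub]
    rw [eval_eq_affine_add_sum hP, eval_eq_affine_add_sum hP, Finset.sum_sub_distrib]
    ring
  have hterm : ∀ j ∈ Finset.range d,
      distInt (P.coeff (j + 2) * ((n + q : ℝ) ^ (j + 2) - n ^ (j + 2)))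
        ≤ (d + 1) * 2 ^ d * (B / N) := by
    intro j hj
    rw [Finset.mem_range] at hj
    have hj' : ((j + 2 : ℕ) : ℝ) ≤ d + 1 := by exact_mod_cast (by omega : j + 2 ≤ d + 1)
    refine (distInt_coeff_mul_pow_sub_pow_le hn hq hqN (by omega) (hcoeff _ (by omega))).trans ?_
    gcongr
    · exact one_le_two
    · omega
  have hsum := (distInt_sum_le _ _).trans (Finset.sum_le_card_nsmul _ _ _ hterm)
  rwa [← hsplit, Finset.card_range, nsmul_eq_mul] at hsum

lemma norm_eC_eval_add_sub_le (hP : P.natDegree ≤ d + 1) (hB : 0 ≤ B) {n : ℤ}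
    (hn : |n| ≤ (N : ℤ)) (hq : 1 ≤ q) (hqN : q ≤ N)
    (hcoeff : ∀ j, 2 ≤ j → distInt (q * P.coeff j) ≤ B / (N : ℝ) ^ j) :
    ‖eC (P.eval (n + q : ℝ)) - eC (P.eval (n : ℝ)) * eC (q * P.coeff 1)‖
      ≤ 8 * (d * ((d + 1) * 2 ^ d * (B / N))) := by
  have hfactor : eC (P.eval (n + q : ℝ)) - eC (P.eval (n : ℝ)) * eC (q * P.coeff 1)
      = eC (P.eval (n : ℝ) + q * P.coeff 1) *
        (eC (P.eval (n + q : ℝ) - P.eval (n : ℝ) - q * P.coeff 1) - 1) := by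
    rw [mul_sub, ← eC_add, ← eC_add, mul_one]
    ring_nf
  rw [hfactor, norm_mul, norm_eC, one_mul]
  refine (norm_eC_sub_one_le _).trans ?_
  gcongr
  · exact distInt_nonneg _
  · linarith [Real.pi_le_four]
  · exact distInt_eval_add_sub_eval_sub_le hP hB hn hq hqN hcoeff

lemma norm_sum_eC_mul_distInt_coeff_one_le (hP : P.natDegree ≤ d + 1) (hB : 0 ≤ B)
    (hs : (s : Set ℤ).OrdConnected) (hsN : ∀ n ∈ s, |n| ≤ (N : ℤ)) (hq : 1 ≤ q) (hqN : q ≤ N)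
    (hcoeff : ∀ j, 2 ≤ j → distInt (q * P.coeff j) ≤ B / (N : ℝ) ^ j) :
    ‖∑ n ∈ s, eC (P.eval (n : ℝ))‖ * distInt (q * P.coeff 1)
      ≤ q + 6 * (d * ((d + 1) * 2 ^ d * B)) := by
  have hN₁ : (1 : ℝ) ≤ N := by exact_mod_cast hq.trans hqN
  set Z := ∑ n ∈ s, eC (P.eval (n : ℝ)) with hZ
  have hsplit : Z * (eC (q * P.coeff 1) - 1)
      = ∑ n ∈ s, (eC (P.eval (n + q : ℝ)) - eC (P.eval (n : ℝ)))
        - ∑ n ∈ s, (eC (P.eval (n + q : ℝ)) - eC (P.eval (n : ℝ)) * eC (q * P.coeff 1)) := by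
    rw [← Finset.sum_sub_distrib, hZ, Finset.sum_mul]
    exact Finset.sum_congr rfl fun n _ ↦ by ring
  have hshift : ‖∑ n ∈ s, (eC (P.eval (n + q : ℝ)) - eC (P.eval (n : ℝ)))‖ ≤ 2 * q := by
    simpa using norm_sum_add_sub_le hs (f := fun n ↦ eC (P.eval (n : ℝ)))
      (fun n ↦ (norm_eC _).le) q
  have hcard : (s.card : ℝ) ≤ 3 * N := by
    have : (s.card : ℝ) ≤ 2 * N + 1 := by exact_mod_cast card_le_of_abs_le hsN
    linarith
  have herror : ‖∑ n ∈ s, (eC (P.eval (n + q : ℝ))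
      - eC (P.eval (n : ℝ)) * eC (q * P.coeff 1))‖ ≤ 24 * (d * ((d + 1) * 2 ^ d * B)) :=
    calc _ ≤ s.card • (8 * (d * ((d + 1) * 2 ^ d * (B / N)))) :=
          (norm_sum_le _ _).trans (Finset.sum_le_card_nsmul _ _ _ fun n hn ↦
            norm_eC_eval_add_sub_le hP hB (hsN n hn) hq hqN hcoeff)
      _ ≤ 3 * N * (8 * (d * ((d + 1) * 2 ^ d * (B / N)))) := by
          rw [nsmul_eq_mul]
          gcongr
      _ = 24 * (d * ((d + 1) * 2 ^ d * B)) := by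
          field_simp
          ring
  have hlower := mul_le_mul_of_nonneg_left (four_mul_distInt_le_norm_eC_sub_one (q * P.coeff 1))
    (norm_nonneg Z)
  rw [← norm_mul, hsplit] at hlower
  have hbound := hlower.trans (norm_sub_le _ _)
  linarith

lemma IsWeylExponent.exists_distInt_eval_derivIncrement_le (hC : IsWeylExponent d C)
    (hR : 2 ≤ R) (hN : R ^ C ≤ N) (hP : P.natDegree ≤ d + 1) (hs : (s : Set ℤ).OrdConnected)
    (hsN : ∀ n ∈ s, |n| ≤ (N : ℤ)) {t : ℤ}
    (ht : N ≤ R * ‖∑ n ∈ s with n + t ∈ s, eC (P.eval ((n + t : ℤ) : ℝ) - P.eval (n : ℝ))‖) :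
    ∃ q : ℕ, 1 ≤ q ∧ (q : ℝ) ≤ R ^ C ∧
      distInt (q * (derivIncrement P).eval (t : ℝ)) ≤ R ^ C / N := by
  obtain ⟨q, hq, hqR, hcoeff⟩ := hC R hR N hN (taylor (t : ℝ) P - P)
    (natDegree_taylor_sub_self_le hP t) _ (ordConnected_filter_add_mem hs t)
    (fun n hn ↦ hsN n (Finset.mem_filter.1 hn).1) (by
      simpa only [eval_sub, taylor_eval, Int.cast_add] using ht)
  refine ⟨q, hq, hqR, ?_⟩
  simpa only [coeff_one_taylor_sub_self, pow_one] using hcoeff 1 le_rfl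

lemma IsWeylExponent.exists_dense_distInt_eval_derivIncrement_le (hC : IsWeylExponent d C)
    (hR : 2 ≤ R) (hN : R ^ (6 * C) ≤ N) (hP : P.natDegree ≤ d + 1)
    (hs : (s : Set ℤ).OrdConnected) (hsN : ∀ n ∈ s, |n| ≤ (N : ℤ))
    (hsum : N ≤ R * ‖∑ n ∈ s, eC (P.eval (n : ℝ))‖) :
    ∃ q : ℕ, 1 ≤ q ∧ (q : ℝ) ≤ R ^ (6 * C) ∧ ∃ T : Finset ℤ, (∀ t ∈ T, |t| ≤ 2 * (N : ℤ)) ∧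
      2 * (N : ℝ) ≤ R ^ (6 * C + 6) * T.card ∧
      ∀ t ∈ T, distInt (q * (derivIncrement P).eval (t : ℝ)) ≤ R ^ (6 * C) / N := by
  have hN₁ : (1 : ℝ) ≤ N := (one_le_pow₀ (by linarith)).trans hN
  obtain ⟨T, hTN, hNT, hlarge⟩ := exists_large_differenced_sums (g := fun n ↦ P.eval (n : ℝ))
    (by exact_mod_cast hN₁) hsN hsum
  have hT : T.Nonempty := by
    rw [Finset.nonempty_iff_ne_empty]
    rintro rfl
    simp only [Finset.card_empty, Nat.cast_zero, mul_zero] at hNT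
    linarith
  have hR₆ : 10 * R ^ 2 ≤ R ^ 6 := const_mul_pow_le_pow hR (e := 4) (by norm_num) (by norm_num)
  rw [pow_mul] at hN
  obtain ⟨q, hq, hqR, T', hT', hTT', hclose⟩ := exists_common_denominator hT fun t ht ↦
    hC.exists_distInt_eval_derivIncrement_le (hR.trans (le_self_pow₀ (by linarith) (by norm_num)))
      hN hP hs hsN (t := t) ((hlarge t ht).trans (by gcongr))
  rw [← pow_mul] at hqR hTT' hclose
  refine ⟨q, hq, hqR, T', fun t ht ↦ hTN t (hT' ht), ?_, hclose⟩
  calc 2 * (N : ℝ) ≤ 2 * (6 * R ^ 2 * (R ^ (6 * C) * T'.card)) := by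
        gcongr
        exact hNT.trans (by gcongr)
    _ = 12 * R ^ (6 * C + 2) * T'.card := by ring
    _ ≤ R ^ (6 * C + 6) * T'.card := by
        gcongr
        exact const_mul_pow_le_pow hR (e := 4) (by norm_num) (by omega)

lemma distInt_coeff_one_le (hR : 2 ≤ R) {C : ℕ} (hP : P.natDegree ≤ d + 1)
    (hs : (s : Set ℤ).OrdConnected) (hsN : ∀ n ∈ s, |n| ≤ (N : ℤ))
    (hsum : N ≤ R * ‖∑ n ∈ s, eC (P.eval (n : ℝ))‖) (hq : 1 ≤ q) (hqN : q ≤ N) (hqR : q ≤ R ^ C)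
    (hcoeff : ∀ j, 2 ≤ j → distInt (q * P.coeff j) ≤ R ^ C / (N : ℝ) ^ j) :
    distInt (q * P.coeff 1) ≤ R ^ (3 * d + 5 + C) / N := by
  have hlin := norm_sum_eC_mul_distInt_coeff_one_le hP (by positivity) hs hsN hq hqN hcoeff
  have hd : (d : ℝ) ≤ 2 ^ d := by exact_mod_cast Nat.lt_two_pow_self.le
  have hd₁ : (d + 1 : ℝ) ≤ 2 ^ (d + 1) := by exact_mod_cast Nat.lt_two_pow_self.le
  have hconst : 1 + 6 * (d * ((d + 1) * 2 ^ d)) ≤ (2 : ℝ) ^ (3 * d + 4) :=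
    calc 1 + 6 * (d * ((d + 1) * 2 ^ d)) ≤ 1 + 6 * ((2 : ℝ) ^ d * (2 ^ (d + 1) * 2 ^ d)) := by
          gcongr
      _ = 1 + 12 * 2 ^ (3 * d) := by ring
      _ ≤ 2 ^ (3 * d + 4) := by
          rw [pow_add]
          linarith [one_le_pow₀ one_le_two (a := (2 : ℝ)) (n := 3 * d)]
  rw [le_div_iff₀ (by exact_mod_cast hq.trans hqN)]
  calc distInt (q * P.coeff 1) * N
      ≤ distInt (q * P.coeff 1) * (R * ‖∑ n ∈ s, eC (P.eval (n : ℝ))‖) :=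
        mul_le_mul_of_nonneg_left hsum (distInt_nonneg _)
    _ = R * (‖∑ n ∈ s, eC (P.eval (n : ℝ))‖ * distInt (q * P.coeff 1)) := by ring
    _ ≤ R * (R ^ C + 6 * (d * ((d + 1) * 2 ^ d * R ^ C))) := by
        gcongr
        exact hlin.trans (by gcongr)
    _ = (1 + 6 * (d * ((d + 1) * 2 ^ d))) * R ^ (C + 1) := by ring
    _ ≤ R ^ (3 * d + 5 + C) := const_mul_pow_le_pow hR hconst (by omega)

lemma IsWeylExponent.succ (hC : IsWeylExponent d C) (hV : IsVinogradovExponent d V) :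
    IsWeylExponent (d + 1)
      (3 * d + 5 + ((d + 1).factorial + 6 * C + (6 * C + 6) * V)) := by
  intro R hR N hN P hP s hs hsN hsum
  set C₁ := (d + 1).factorial + 6 * C + (6 * C + 6) * V
  have hR₁ : 1 ≤ R := by linarith
  have hC₁ : R ^ C₁ ≤ R ^ (3 * d + 5 + C₁) := pow_le_pow_right₀ hR₁ (by omega)
  obtain ⟨q₁, hq₁, hq₁R, T, hTN, hTcard, hTclose⟩ :=
    hC.exists_dense_distInt_eval_derivIncrement_le hR
      ((pow_le_pow_right₀ hR₁ (by omega)).trans hN) hP hs hsN hsum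
  obtain ⟨q, hq, hqR, hcoeff⟩ := hV.exists_distInt_coeff_le_of_dense hR hP zero_le_one le_rfl
    (by omega) (hC₁.trans hN) hq₁ hq₁R hTN hTcard (by simpa only [one_mul] using hTclose)
  simp only [one_mul] at hcoeff
  refine ⟨q, hq, hqR.trans hC₁, fun i hi ↦ ?_⟩
  rcases hi.eq_or_lt with rfl | hi
  · rw [pow_one]
    exact distInt_coeff_one_le hR hP hs hsN hsum hq
      (by exact_mod_cast hqR.trans (hC₁.trans hN)) hqR hcoeff
  · exact (hcoeff i hi).trans (by gcongr)

theorem exists_isWeylExponent (d : ℕ) : ∃ C, IsWeylExponent d C := by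
  induction d with
  | zero =>
    refine ⟨0, fun R _ N _ P hP s _ _ _ ↦ ⟨1, le_rfl, by simp, fun i hi ↦ ?_⟩⟩
    rw [coeff_eq_zero_of_natDegree_lt (by omega), mul_zero, distInt_zero]
    positivity
  | succ n ih =>
    obtain ⟨C, hC⟩ := ih
    obtain ⟨V, hV⟩ := exists_isVinogradovExponent n
    exact ⟨_, hC.succ hV⟩

end WeylSums

section TypeI

open Polynomial

variable {R B : ℝ} {N d C m : ℕ} {P : ℝ[X]} {s : Finset ℕ}

lemma IsWeylExponent.isMajorArc_of_nat (hC : IsWeylExponent d C) (hR : 2 ≤ R) (hN : R ^ C ≤ N)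
    (hP : P.natDegree ≤ d) (hs : (s : Set ℕ).OrdConnected) (hsN : ∀ n ∈ s, n ≤ N)
    (hsum : N ≤ R * ‖∑ n ∈ s, eC (P.eval (n : ℝ))‖) : IsMajorArc (R ^ C) N P := by
  refine hC R hR N hN P hP (s.map Nat.castEmbedding) ⟨?_⟩ ?_ (by simpa using hsum)
  · simp only [Finset.coe_map, Nat.castEmbedding_apply]
    rintro _ ⟨a, ha, rfl⟩ _ ⟨b, hb, rfl⟩ c ⟨hac, hcb⟩
    dsimp only at hac hcb
    lift c to ℕ using (Int.natCast_nonneg a).trans hac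
    exact ⟨c, hs.out ha hb ⟨by exact_mod_cast hac, by exact_mod_cast hcb⟩, rfl⟩
  · simp only [Finset.mem_map, Nat.castEmbedding_apply]
    rintro _ ⟨a, ha, rfl⟩
    simpa using hsN a ha

lemma natDegree_comp_C_mul_X_le (P : ℝ[X]) (r : ℝ) :
    (P.comp (Polynomial.C r * X)).natDegree ≤ P.natDegree := by
  refine natDegree_comp_le.trans ?_
  simpa using Nat.mul_le_mul_left P.natDegree ((natDegree_C_mul_le r X).trans natDegree_X_le)

lemma IsMajorArc.of_comp_C_mul_X (h : IsMajorArc B N (P.comp (Polynomial.C (m : ℝ) * X)))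
    (hP : P.natDegree ≤ d) (hm : 1 ≤ m) (hmR : m ≤ R) : IsMajorArc (B * R ^ d) N P := by
  obtain ⟨q, hq, hqB, hcoeff⟩ := h
  have hm₁ : (1 : ℝ) ≤ m := by exact_mod_cast hm
  have hB : 0 ≤ B := q.cast_nonneg.trans hqB
  have hR : 0 ≤ R := m.cast_nonneg.trans hmR
  refine ⟨q * m ^ d, Nat.one_le_iff_ne_zero.2 (by positivity), ?_, fun i hi ↦ ?_⟩
  · push_cast
    gcongr
  rcases Nat.lt_or_ge d i with hdi | hdi
  · rw [coeff_eq_zero_of_natDegree_lt (by omega), mul_zero, distInt_zero]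
    positivity
  have hi_le := hcoeff i hi
  rw [comp_C_mul_X_coeff] at hi_le
  obtain ⟨j, rfl⟩ := Nat.exists_eq_add_of_le hdi
  calc distInt ((q * m ^ (i + j) : ℕ) * P.coeff i)
      = distInt ((m ^ j : ℕ) * (q * (P.coeff i * m ^ i))) := by
        push_cast
        ring_nf
    _ ≤ (m ^ j : ℕ) * (B / N ^ i) := (distInt_nat_mul_le _ _).trans (by gcongr)
    _ ≤ R ^ (i + j) * (B / N ^ i) := by
        push_cast
        gcongr
        exact (pow_le_pow_right₀ hm₁ (Nat.le_add_left j i)).trans (by gcongr)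
    _ = B * R ^ (i + j) / N ^ i := by ring

lemma IsWeylExponent.isMajorArc_of_dilate (hC : IsWeylExponent d C) (hR : 2 ≤ R)
    (hN : R ^ C ≤ N) (hP : P.natDegree ≤ d) (hm : 1 ≤ m) (hmR : m ≤ R)
    (hs : (s : Set ℕ).OrdConnected) (hsN : ∀ n ∈ s, n ≤ N)
    (hsum : N ≤ R * ‖∑ n ∈ s, eC (P.eval ((m * n : ℕ) : ℝ))‖) :
    IsMajorArc (R ^ (C + d)) N P := by
  rw [pow_add]
  refine (hC.isMajorArc_of_nat hR hN ((natDegree_comp_C_mul_X_le P m).trans hP) hs hsN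
    ?_).of_comp_C_mul_X hP hm hmR
  simpa [eval_comp] using hsum

end TypeI

section AbelSummation

variable {w : ℕ → ℝ} {z : ℕ → ℂ} {G W : ℝ} {x y : ℕ}

lemma norm_sum_Icc_mul_sub_le (hxy : x ≤ y)
    (hG : ∀ x', x ≤ x' → ‖∑ n ∈ Finset.Icc x' y, z n‖ ≤ G) :
    ‖∑ n ∈ Finset.Icc x y, w n * z n - w x * ∑ n ∈ Finset.Icc x y, z n‖
      ≤ (∑ j ∈ Finset.Ico x y, |w (j + 1) - w j|) * G := by
  induction hxy using Nat.decreasingInduction with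
  | self => simp
  | of_succ x hxy ih =>
    have hxy' : x < y := hxy
    have hsplit (f : ℕ → ℂ) :
        ∑ n ∈ Finset.Icc x y, f n = f x + ∑ n ∈ Finset.Icc (x + 1) y, f n := by
      rw [← Finset.insert_Icc_add_one_left_eq_Icc hxy'.le, Finset.sum_insert (by simp)]
    rw [hsplit, hsplit, Finset.sum_eq_sum_Ico_succ_bot hxy']
    set A := ∑ n ∈ Finset.Icc (x + 1) y, w n * z n
    set Z := ∑ n ∈ Finset.Icc (x + 1) y, z n
    calc ‖w x * z x + A - w x * (z x + Z)‖
        = ‖((w (x + 1) - w x : ℝ) : ℂ) * Z + (A - w (x + 1) * Z)‖ := by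
          congr 1
          push_cast
          ring
      _ ≤ |w (x + 1) - w x| * ‖Z‖ + ‖A - w (x + 1) * Z‖ := by
          rw [← Real.norm_eq_abs, ← Complex.norm_real, ← norm_mul]
          exact norm_add_le _ _
      _ ≤ |w (x + 1) - w x| * G + (∑ j ∈ Finset.Ico (x + 1) y, |w (j + 1) - w j|) * G := by
          gcongr
          · exact hG _ x.le_succ
          · exact ih fun x' hx' ↦ hG x' (by omega)
      _ = _ := by ring

lemma sum_Ico_abs_sub_le_of_monotone_or_antitone (hw : Monotone w ∨ Antitone w)
    (hW : ∀ n, |w n| ≤ W) (hxy : x ≤ y) : ∑ j ∈ Finset.Ico x y, |w (j + 1) - w j| ≤ 2 * W := by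
  have hx := abs_le.1 (hW x)
  have hy := abs_le.1 (hW y)
  rcases hw with hw | hw
  · rw [Finset.sum_congr rfl fun j _ ↦ abs_of_nonneg (sub_nonneg.2 (hw j.le_succ)),
      Finset.sum_Ico_sub w hxy]
    linarith
  · rw [Finset.sum_congr rfl fun j _ ↦ abs_of_nonpos (sub_nonpos.2 (hw j.le_succ)),
      Finset.sum_neg_distrib, Finset.sum_Ico_sub w hxy]
    linarith

lemma norm_sum_Icc_mul_le_of_monotone_or_antitone (hw : Monotone w ∨ Antitone w)
    (hW : ∀ n, |w n| ≤ W) (hG : ∀ x', x ≤ x' → ‖∑ n ∈ Finset.Icc x' y, z n‖ ≤ G) :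
    ‖∑ n ∈ Finset.Icc x y, w n * z n‖ ≤ 3 * W * G := by
  have hW₀ : 0 ≤ W := (abs_nonneg _).trans (hW 0)
  have hG₀ : 0 ≤ G := (norm_nonneg _).trans (hG x le_rfl)
  rcases Nat.lt_or_ge y x with hxy | hxy
  · rw [Finset.Icc_eq_empty hxy.not_ge, Finset.sum_empty, norm_zero]
    positivity
  have hmain : ‖w x * ∑ n ∈ Finset.Icc x y, z n‖ ≤ W * G := by
    rw [norm_mul, Complex.norm_real, Real.norm_eq_abs]
    gcongr
    exacts [hW x, hG x le_rfl]
  have hdiff := (norm_sum_Icc_mul_sub_le (w := w) hxy hG).trans <|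
    mul_le_mul_of_nonneg_right (sum_Ico_abs_sub_le_of_monotone_or_antitone hw hW hxy) hG₀
  linarith [norm_le_norm_add_norm_sub' (∑ n ∈ Finset.Icc x y, w n * z n)
    (w x * ∑ n ∈ Finset.Icc x y, z n)]

end AbelSummation

section CauchySchwarz

variable {ι κ : Type*} {A : Finset ι} {T : Finset κ} {α : ι → ℂ} {β : κ → ℂ} {z : ι → κ → ℂ}
  {R : ℝ}

lemma sum_norm_sum_mul_sq_le (hR : 0 ≤ R) (hα : ∀ a ∈ A, ‖α a‖ ≤ R) :
    ∑ b ∈ T, ‖∑ a ∈ A, α a * z a b‖ ^ 2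
      ≤ R ^ 2 * ∑ a' ∈ A, ∑ a ∈ A, ‖∑ b ∈ T, z a b * starRingEnd ℂ (z a' b)‖ := by
  have hexpand : ((∑ b ∈ T, ‖∑ a ∈ A, α a * z a b‖ ^ 2 : ℝ) : ℂ)
      = ∑ a' ∈ A, ∑ a ∈ A, (α a * starRingEnd ℂ (α a')) *
          ∑ b ∈ T, z a b * starRingEnd ℂ (z a' b) := by
    simp_rw [Complex.ofReal_sum, Complex.ofReal_pow, ← Complex.mul_conj', map_sum,
      Finset.sum_mul_sum, Finset.mul_sum]
    rw [Finset.sum_comm, Finset.sum_congr rfl fun _ _ ↦ Finset.sum_comm, Finset.sum_comm]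
    refine Finset.sum_congr rfl fun a' _ ↦ Finset.sum_congr rfl fun a _ ↦
      Finset.sum_congr rfl fun b _ ↦ ?_
    rw [map_mul]
    ring
  rw [← Real.norm_of_nonneg (Finset.sum_nonneg fun b _ ↦ sq_nonneg ‖∑ a ∈ A, α a * z a b‖),
    ← Complex.norm_real, hexpand, Finset.mul_sum]
  refine norm_sum_le_of_le _ fun a' ha' ↦ ?_
  rw [Finset.mul_sum]
  refine norm_sum_le_of_le _ fun a ha ↦ ?_
  rw [norm_mul, norm_mul, RCLike.norm_conj, sq]
  gcongr
  exacts [hα a ha, hα a' ha']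

lemma norm_bilinear_sum_sq_le (hR : 0 ≤ R) (hα : ∀ a ∈ A, ‖α a‖ ≤ R)
    (hβ : ∀ b ∈ T, ‖β b‖ ≤ R) :
    ‖∑ a ∈ A, ∑ b ∈ T, α a * β b * z a b‖ ^ 2
      ≤ R ^ 4 * T.card * ∑ a' ∈ A, ∑ a ∈ A, ‖∑ b ∈ T, z a b * starRingEnd ℂ (z a' b)‖ := by
  have hswap : ∑ a ∈ A, ∑ b ∈ T, α a * β b * z a b = ∑ b ∈ T, β b * ∑ a ∈ A, α a * z a b := by
    simp_rw [Finset.mul_sum]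
    rw [Finset.sum_comm]
    exact Finset.sum_congr rfl fun b _ ↦ Finset.sum_congr rfl fun a _ ↦ by ring
  have hnorm : ‖∑ b ∈ T, β b * ∑ a ∈ A, α a * z a b‖ ≤ R * ∑ b ∈ T, ‖∑ a ∈ A, α a * z a b‖ := by
    rw [Finset.mul_sum]
    refine norm_sum_le_of_le _ fun b hb ↦ ?_
    rw [norm_mul]
    gcongr
    exact hβ b hb
  calc ‖∑ a ∈ A, ∑ b ∈ T, α a * β b * z a b‖ ^ 2
      ≤ (R * ∑ b ∈ T, ‖∑ a ∈ A, α a * z a b‖) ^ 2 := by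
        rw [hswap]
        gcongr
    _ = R ^ 2 * (∑ b ∈ T, ‖∑ a ∈ A, α a * z a b‖) ^ 2 := mul_pow _ _ _
    _ ≤ R ^ 2 * (T.card * (R ^ 2 *
          ∑ a' ∈ A, ∑ a ∈ A, ‖∑ b ∈ T, z a b * starRingEnd ℂ (z a' b)‖)) := by
        gcongr
        exact sq_sum_le_card_mul_sum_sq.trans (by gcongr; exact sum_norm_sum_mul_sq_le hR hα)
    _ = _ := by ring

lemma exists_large_correlations (hA : A.Nonempty) (hT : T.Nonempty) (hR : 0 ≤ R)
    (hα : ∀ a ∈ A, ‖α a‖ ≤ R) (hβ : ∀ b ∈ T, ‖β b‖ ≤ R) (hz : ∀ a b, ‖z a b‖ ≤ 1)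
    (hsum : A.card * T.card ≤ R * ‖∑ a ∈ A, ∑ b ∈ T, α a * β b * z a b‖) :
    ∃ a' ∈ A, ∃ A' ⊆ A, (A.card : ℝ) ≤ 2 * R ^ 6 * A'.card ∧ ∀ a ∈ A',
      T.card ≤ 2 * R ^ 6 * ‖∑ b ∈ T, z a b * starRingEnd ℂ (z a' b)‖ := by
  have hA₀ : (0 : ℝ) < A.card := by exact_mod_cast hA.card_pos
  have hT₀ : (0 : ℝ) < T.card := by exact_mod_cast hT.card_pos
  set g : ι → ι → ℝ := fun a' a ↦ ‖∑ b ∈ T, z a b * starRingEnd ℂ (z a' b)‖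
  have hgT : ∀ a' a, g a' a ≤ T.card := fun a' a ↦
    calc g a' a ≤ ∑ _b ∈ T, (1 : ℝ) := norm_sum_le_of_le _ fun b _ ↦ by
          rw [norm_mul, RCLike.norm_conj]
          exact mul_le_one₀ (hz a b) (norm_nonneg _) (hz a' b)
      _ = T.card := by simp
  have htotal : ∑ _a' ∈ A, (A.card * T.card : ℝ) ≤ ∑ a' ∈ A, R ^ 6 * ∑ a ∈ A, g a' a := by
    rw [Finset.sum_const, nsmul_eq_mul, ← Finset.mul_sum]
    refine le_of_mul_le_mul_left ?_ hT₀
    calc (T.card : ℝ) * (A.card * (A.card * T.card)) = (A.card * T.card) ^ 2 := by ring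
      _ ≤ R ^ 2 * ‖∑ a ∈ A, ∑ b ∈ T, α a * β b * z a b‖ ^ 2 := by
          rw [← mul_pow]
          gcongr
      _ ≤ R ^ 2 * (R ^ 4 * T.card * ∑ a' ∈ A, ∑ a ∈ A, g a' a) := by
          gcongr
          exact norm_bilinear_sum_sq_le hR hα hβ
      _ = T.card * (R ^ 6 * ∑ a' ∈ A, ∑ a ∈ A, g a' a) := by ring
  obtain ⟨a', ha', hlarge⟩ := Finset.exists_le_of_sum_le hA htotal
  rw [Finset.mul_sum] at hlarge
  have hpop := le_mul_card_filter_of_le_sum le_rfl hA₀ (by positivity)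
    (fun a _ ↦ mul_le_mul_of_nonneg_left (hgT a' a) (by positivity)) hlarge
  refine ⟨a', ha', A.filter fun a ↦ (A.card * T.card : ℝ) ≤ 2 * A.card * (R ^ 6 * g a' a),
    Finset.filter_subset _ _, le_of_mul_le_mul_right ?_ hT₀, fun a ha ↦ ?_⟩
  · linarith
  · refine le_of_mul_le_mul_left ?_ hA₀
    linarith [(Finset.mem_filter.1 ha).2]

end CauchySchwarz

section TypeII

open Polynomial

variable {R : ℝ} {N D B M d C V : ℕ} {P : ℝ[X]} {I : Finset ℕ}

/-- The phase `e(P(n))` cut off to the range `I` of summation; the cutoff separates the variables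
of bilinear sums over pairs `(a, b)` with `a * b ∈ I`. -/
noncomputable def cutoffPhase (I : Finset ℕ) (P : ℝ[X]) (n : ℕ) : ℂ :=
  if n ∈ I then eC (P.eval (n : ℝ)) else 0

lemma norm_cutoffPhase_le (I : Finset ℕ) (P : ℝ[X]) (n : ℕ) : ‖cutoffPhase I P n‖ ≤ 1 := by
  unfold cutoffPhase
  split_ifs <;> simp

lemma sum_cutoffPhase_mul_conj (s : Finset ℕ) (a a' : ℕ) :
    ∑ b ∈ s, cutoffPhase I P (a * b) * starRingEnd ℂ (cutoffPhase I P (a' * b))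
      = ∑ b ∈ s with a * b ∈ I ∧ a' * b ∈ I, eC ((P.comp (Polynomial.C (a : ℝ) * X)
          - P.comp (Polynomial.C (a' : ℝ) * X)).eval (b : ℝ)) := by
  rw [Finset.sum_filter]
  refine Finset.sum_congr rfl fun b _ ↦ ?_
  unfold cutoffPhase
  by_cases ha : a * b ∈ I <;> by_cases ha' : a' * b ∈ I <;>
    simp [ha, ha', eval_comp, sub_eq_add_neg, eC_add, eC_neg]

lemma IsWeylExponent.exists_distInt_coeff_mul_pow_sub_le (hC : IsWeylExponent d C)
    (hR : 2 ≤ R) (hB : R ^ C ≤ B) (hP : P.natDegree ≤ d) (hI : (I : Set ℕ).OrdConnected)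
    {a a' : ℕ} (hsum : B ≤ R * ‖∑ b ∈ Finset.Icc 1 B,
      cutoffPhase I P (a * b) * starRingEnd ℂ (cutoffPhase I P (a' * b))‖) :
    ∃ q : ℕ, 1 ≤ q ∧ (q : ℝ) ≤ R ^ C ∧ ∀ i, 1 ≤ i →
      distInt (q * (P.coeff i * ((a : ℝ) ^ i - a' ^ i))) ≤ R ^ C / (B : ℝ) ^ i := by
  rw [sum_cutoffPhase_mul_conj] at hsum
  have hord : (((Finset.Icc 1 B).filter fun b ↦ a * b ∈ I ∧ a' * b ∈ I : Finset ℕ) :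
      Set ℕ).OrdConnected := by
    refine ⟨fun u hu v hv c hc ↦ ?_⟩
    simp only [Finset.coe_filter, Finset.mem_Icc, Set.mem_ofPred_eq] at hu hv ⊢
    have hmul (m : ℕ) (hum : m * u ∈ I) (hvm : m * v ∈ I) : m * c ∈ I :=
      hI.out hum hvm ⟨Nat.mul_le_mul_left m hc.1, Nat.mul_le_mul_left m hc.2⟩
    exact ⟨⟨hu.1.1.trans hc.1, hc.2.trans hv.1.2⟩, hmul a hu.2.1 hv.2.1, hmul a' hu.2.2 hv.2.2⟩
  obtain ⟨q, hq, hqR, hcoeff⟩ := hC.isMajorArc_of_nat hR hB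
    ((natDegree_sub_le _ _).trans (max_le ((natDegree_comp_C_mul_X_le P _).trans hP)
      ((natDegree_comp_C_mul_X_le P _).trans hP))) hord
    (fun b hb ↦ (Finset.mem_Icc.1 (Finset.mem_filter.1 hb).1).2) hsum
  refine ⟨q, hq, hqR, fun i hi ↦ ?_⟩
  simpa only [coeff_sub, comp_C_mul_X_coeff, ← mul_sub] using hcoeff i hi

lemma IsWeylExponent.exists_dense_distInt_coeff_mul_pow_sub_le (hC : IsWeylExponent d C)
    (hR : 2 ≤ R) (hD : 1 ≤ D) (hB : R ^ (7 * C) ≤ B) (hP : P.natDegree ≤ d)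
    (hI : (I : Set ℕ).OrdConnected) {α β : ℕ → ℂ} (hα : ∀ a ∈ Finset.Ico D (2 * D), ‖α a‖ ≤ R)
    (hβ : ∀ b ∈ Finset.Icc 1 B, ‖β b‖ ≤ R)
    (hsum : (D * B : ℝ) ≤ R * ‖∑ a ∈ Finset.Ico D (2 * D), ∑ b ∈ Finset.Icc 1 B,
      α a * β b * cutoffPhase I P (a * b)‖) :
    ∃ a' q : ℕ, 1 ≤ q ∧ (q : ℝ) ≤ R ^ (7 * C) ∧ ∃ A ⊆ Finset.Ico D (2 * D),
      2 * (D : ℝ) ≤ R ^ (7 * C + 8) * A.card ∧ ∀ a ∈ A, ∀ i, 1 ≤ i →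
        distInt (q * (P.coeff i * ((a : ℝ) ^ i - a' ^ i))) ≤ R ^ (7 * C) / (B : ℝ) ^ i := by
  have hR₁ : 1 ≤ R := by linarith
  have hcardD : (Finset.Ico D (2 * D)).card = D := by
    rw [Nat.card_Ico]
    omega
  have hcardB : (Finset.Icc 1 B).card = B := by simp
  have hB₁ : 1 ≤ B := by exact_mod_cast (one_le_pow₀ hR₁).trans hB
  obtain ⟨a', -, A, hAD, hA, hcorr⟩ := exists_large_correlations (T := Finset.Icc 1 B)
    (z := fun a b ↦ cutoffPhase I P (a * b)) (Finset.card_pos.1 (hcardD.symm ▸ hD))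
    (Finset.card_pos.1 (hcardB.symm ▸ hB₁)) (by linarith) hα hβ
    (fun a b ↦ norm_cutoffPhase_le I P (a * b)) (by rwa [hcardD, hcardB])
  rw [hcardD] at hA
  rw [hcardB] at hcorr
  have hA₀ : A.Nonempty := by
    rw [Finset.nonempty_iff_ne_empty]
    rintro rfl
    have : (1 : ℝ) ≤ D := by exact_mod_cast hD
    simp only [Finset.card_empty, Nat.cast_zero, mul_zero] at hA
    linarith
  have hR₇ : 2 * R ^ 6 ≤ R ^ 7 := const_mul_pow_le_pow hR (e := 1) (by norm_num) (by norm_num)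
  rw [pow_mul] at hB
  obtain ⟨q, hq, hqR, A', hA', hAA', hclose⟩ := exists_common_denominator hA₀ fun a ha ↦
    hC.exists_distInt_coeff_mul_pow_sub_le (hR.trans (le_self_pow₀ hR₁ (by norm_num))) hB hP hI
      (a := a) (a' := a') ((hcorr a ha).trans (by gcongr))
  rw [← pow_mul] at hqR hAA' hclose
  refine ⟨a', q, hq, hqR, A', hA'.trans hAD, ?_, hclose⟩
  calc 2 * (D : ℝ) ≤ 2 * (2 * R ^ 6 * (R ^ (7 * C) * A'.card)) := by
        gcongr
        exact hA.trans (by gcongr)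
    _ = 4 * R ^ (7 * C + 6) * A'.card := by ring
    _ ≤ R ^ (7 * C + 8) * A'.card := by
        gcongr
        exact const_mul_pow_le_pow hR (e := 2) (by norm_num) (by omega)

lemma exists_distInt_mul_le_of_forall {ι : Type*} {s : Finset ι} {L : ℝ} {c δ : ι → ℝ}
    (h : ∀ i ∈ s, ∃ q : ℕ, 1 ≤ q ∧ (q : ℝ) ≤ L ∧ distInt (q * c i) ≤ δ i) :
    ∃ q : ℕ, 1 ≤ q ∧ (q : ℝ) ≤ L ^ s.card ∧ ∀ i ∈ s, distInt (q * c i) ≤ L ^ s.card * δ i := by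
  classical
  choose! Q hQ hQL hQδ using h
  have hprod : ((∏ i ∈ s, Q i : ℕ) : ℝ) ≤ L ^ s.card := by
    push_cast
    exact (Finset.prod_le_prod (fun _ _ ↦ by positivity) hQL).trans (by simp)
  refine ⟨∏ i ∈ s, Q i, Finset.one_le_prod' hQ, hprod, fun i hi ↦ ?_⟩
  have hδ : 0 ≤ δ i := (distInt_nonneg _).trans (hQδ i hi)
  have herase : ∏ j ∈ s.erase i, Q j ≤ ∏ j ∈ s, Q j :=
    Finset.prod_le_prod_of_subset_of_one_le' (s.erase_subset i) fun j hj _ ↦ hQ j hj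
  calc distInt ((∏ j ∈ s, Q j : ℕ) * c i)
      = distInt ((∏ j ∈ s.erase i, Q j : ℕ) * (Q i * c i)) := by
        rw [← Finset.prod_erase_mul _ _ hi, Nat.cast_mul, mul_assoc]
    _ ≤ (∏ j ∈ s.erase i, Q j : ℕ) * δ i := (distInt_nat_mul_le _ _).trans (by
        gcongr
        exact hQδ i hi)
    _ ≤ L ^ s.card * δ i := by
        gcongr
        exact le_trans (by exact_mod_cast herase) hprod

lemma IsVinogradovExponent.exists_distInt_le_of_pow_sub (hV : IsVinogradovExponent d V)
    (hR : 2 ≤ R) (hM : R ^ V ≤ M) {c ε : ℕ → ℝ} (hε₀ : ∀ i, 0 ≤ ε i)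
    (hε : ∀ i, 1 ≤ i → ε i * R ^ V ≤ 1) {H : Finset ℤ} (hHM : ∀ h ∈ H, |h| ≤ (M : ℤ))
    (hH : (M : ℝ) ≤ R * H.card) {a : ℝ}
    (hclose : ∀ h ∈ H, ∀ i, 1 ≤ i → distInt (c i * ((h : ℝ) ^ i - a ^ i)) ≤ ε i) :
    ∃ q : ℕ, 1 ≤ q ∧ (q : ℝ) ≤ R ^ (V * d) ∧ ∀ i, 1 ≤ i → i ≤ d →
      distInt (q * c i) ≤ ε i * R ^ (V * (d + 1)) / (M : ℝ) ^ i := by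
  have hdenom : ∀ i ∈ Finset.Icc 1 d, ∃ q : ℕ, 1 ≤ q ∧ (q : ℝ) ≤ R ^ V ∧
      distInt (q * c i) ≤ ε i * R ^ V / (M : ℝ) ^ i := by
    intro i hi
    rw [Finset.mem_Icc] at hi
    obtain ⟨q, hq, hqR, hcoeff⟩ := hV R hR M hM
      (Polynomial.C (c i) * X ^ i - Polynomial.C (c i * a ^ i)) (by
        refine (natDegree_sub_le _ _).trans (max_le ?_ ?_)
        · exact (natDegree_C_mul_X_pow_le _ _).trans hi.2
        · exact (natDegree_C _).trans_le (Nat.zero_le _)) (ε i) (hε₀ i) (hε i hi.1) H hHM hH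
      fun h hh ↦ by simpa [mul_sub] using hclose h hh i hi.1
    refine ⟨q, hq, hqR, ?_⟩
    have hi₀ : i ≠ 0 := Nat.one_le_iff_ne_zero.1 hi.1
    simpa only [coeff_sub, coeff_C_mul_X_pow, if_true, coeff_C, hi₀, if_false, sub_zero]
      using hcoeff i
  obtain ⟨q, hq, hqR, hqc⟩ := exists_distInt_mul_le_of_forall hdenom
  rw [Nat.card_Icc, Nat.add_sub_cancel, ← pow_mul] at hqR hqc
  refine ⟨q, hq, hqR, fun i hi hid ↦ (hqc i (Finset.mem_Icc.2 ⟨hi, hid⟩)).trans_eq ?_⟩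
  ring

lemma IsVinogradovExponent.exists_distInt_le_of_dyadic (hV : IsVinogradovExponent d V)
    (hR : 2 ≤ R) (hD : R ^ V ≤ D) {L : ℝ} (hL : 0 ≤ L) (hB : L * R ^ V ≤ B)
    {A : Finset ℕ} (hAD : A ⊆ Finset.Ico D (2 * D)) (hA : 2 * D ≤ R * A.card) {c : ℕ → ℝ} {a' : ℝ}
    (hclose : ∀ a ∈ A, ∀ i, 1 ≤ i → distInt (c i * ((a : ℝ) ^ i - a' ^ i)) ≤ L / (B : ℝ) ^ i) :
    ∃ q : ℕ, 1 ≤ q ∧ (q : ℝ) ≤ R ^ (V * d) ∧ ∀ i, 1 ≤ i → i ≤ d →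
      distInt (q * c i) ≤ L * R ^ (V * (d + 1)) / ((B : ℝ) * (2 * D)) ^ i := by
  have hsmall (i : ℕ) (hi : 1 ≤ i) : L / (B : ℝ) ^ i * R ^ V ≤ 1 := by
    rcases Nat.eq_zero_or_pos B with rfl | hB₀
    · simp [Nat.one_le_iff_ne_zero.1 hi]
    · have hB₁ : (1 : ℝ) ≤ B := by exact_mod_cast hB₀
      rw [div_mul_eq_mul_div, div_le_one (by positivity)]
      exact hB.trans (le_self_pow₀ hB₁ (by omega))
  obtain ⟨q, hq, hqR, hqc⟩ := hV.exists_distInt_le_of_pow_sub (M := 2 * D) (c := c)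
    (ε := fun i ↦ L / (B : ℝ) ^ i) (H := A.map Nat.castEmbedding) (a := a') hR
    (by
      push_cast
      linarith [D.cast_nonneg (α := ℝ)])
    (fun i ↦ by positivity) hsmall
    (by
      simp only [Finset.mem_map, Nat.castEmbedding_apply]
      rintro _ ⟨a, ha, rfl⟩
      have := Finset.mem_Ico.1 (hAD ha)
      rw [Nat.abs_cast]
      omega)
    (by simpa using hA)
    (by
      simp only [Finset.mem_map, Nat.castEmbedding_apply]
      rintro _ ⟨a, ha, rfl⟩ i hi
      simpa only [Int.cast_natCast] using hclose a ha i hi)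
  refine ⟨q, hq, hqR, fun i hi hid ↦ (hqc i hi hid).trans_eq ?_⟩
  push_cast
  rw [div_mul_eq_mul_div, div_div, ← mul_pow]

lemma natCast_le_div_mul_two_mul {N D : ℕ} (hD : 0 < D) (hDN : 1 ≤ N / D) :
    (N : ℝ) ≤ (N / D : ℕ) * (2 * D) := by
  have hlt : N < D * (N / D + 1) := Nat.lt_mul_div_succ N hD
  exact_mod_cast hlt.le.trans (by nlinarith)

lemma IsWeylExponent.isMajorArc_of_bilinear (hC : IsWeylExponent d C)
    (hV : IsVinogradovExponent d V) (hR : 2 ≤ R)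
    (hD : R ^ (7 * C + (7 * C + 8) * V * (d + 1)) ≤ D)
    (hND : R ^ (7 * C + (7 * C + 8) * V * (d + 1)) ≤ (N / D : ℕ)) (hP : P.natDegree ≤ d)
    (hI : (I : Set ℕ).OrdConnected) {α β : ℕ → ℂ} (hα : ∀ a ∈ Finset.Ico D (2 * D), ‖α a‖ ≤ R)
    (hβ : ∀ b ∈ Finset.Icc 1 (N / D), ‖β b‖ ≤ R)
    (hsum : N ≤ R * ‖∑ a ∈ Finset.Ico D (2 * D), ∑ b ∈ Finset.Icc 1 (N / D),
      α a * β b * cutoffPhase I P (a * b)‖) :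
    IsMajorArc (R ^ (7 * C + (7 * C + 8) * V * (d + 1))) N P := by
  set K := 7 * C + (7 * C + 8) * V * (d + 1) with hK
  have hR₁ : 1 ≤ R := by linarith
  have hD₁ : 1 ≤ D := by exact_mod_cast (one_le_pow₀ hR₁).trans hD
  have hB₁ : (1 : ℝ) ≤ (N / D : ℕ) := (one_le_pow₀ hR₁).trans hND
  have hDN : (D * (N / D : ℕ) : ℝ) ≤ N := by exact_mod_cast Nat.mul_div_le N D
  have hN : (N : ℝ) ≤ (N / D : ℕ) * (2 * D) :=
    natCast_le_div_mul_two_mul hD₁ (by exact_mod_cast hB₁)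
  have hKd : K = 7 * C + (7 * C + 8) * V * d + (7 * C + 8) * V := by ring
  obtain ⟨a', q₁, hq₁, hq₁R, A, hAD, hA, hclose⟩ :=
    hC.exists_dense_distInt_coeff_mul_pow_sub_le hR hD₁
      ((pow_le_pow_right₀ hR₁ (by omega)).trans hND) hP hI hα hβ (hDN.trans hsum)
  obtain ⟨q₂, hq₂, hq₂R, hcoeff⟩ := hV.exists_distInt_le_of_dyadic (L := R ^ (7 * C))
    (c := fun i ↦ q₁ * P.coeff i) (a' := a') (hR.trans (le_self_pow₀ hR₁ (by omega)))
    (by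
      rw [← pow_mul]
      exact (pow_le_pow_right₀ hR₁ (by omega)).trans hD)
    (pow_nonneg (by linarith) _)
    (by
      rw [← pow_mul, ← pow_add]
      exact (pow_le_pow_right₀ hR₁ (by omega)).trans hND)
    hAD hA (by simpa only [mul_assoc] using hclose)
  refine ⟨q₂ * q₁, Nat.mul_pos hq₂ hq₁, ?_, fun i hi ↦ ?_⟩
  · calc ((q₂ * q₁ : ℕ) : ℝ) ≤ (R ^ (7 * C + 8)) ^ (V * d) * R ^ (7 * C) := by
          push_cast
          gcongr
      _ = R ^ ((7 * C + 8) * V * d + 7 * C) := by ring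
      _ ≤ R ^ K := pow_le_pow_right₀ hR₁ (by omega)
  rcases Nat.lt_or_ge d i with hdi | hdi
  · rw [Polynomial.coeff_eq_zero_of_natDegree_lt (by omega), mul_zero, distInt_zero]
    positivity
  calc distInt ((q₂ * q₁ : ℕ) * P.coeff i) = distInt (q₂ * (q₁ * P.coeff i)) := by
        rw [Nat.cast_mul, mul_assoc]
    _ ≤ R ^ (7 * C) * (R ^ (7 * C + 8)) ^ (V * (d + 1)) / ((N / D : ℕ) * (2 * D)) ^ i :=
        hcoeff i hi hdi
    _ = R ^ K / ((N / D : ℕ) * (2 * D)) ^ i := by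
        rw [hK, ← pow_mul, ← pow_add, mul_assoc (7 * C + 8)]
    _ ≤ R ^ K / (N : ℝ) ^ i := by
        have hN₀ : (0 : ℝ) < N := lt_of_lt_of_le (by positivity) hDN
        gcongr

end TypeII

section Vaughan

open ArithmeticFunction
open scoped ArithmeticFunction.Moebius ArithmeticFunction.zeta

variable {U N n : ℕ} {f g : ArithmeticFunction ℝ} {w : ℕ → ℂ} {F G R G₁ G₂ : ℝ}

/-- The truncation of an arithmetic function to arguments `n ≤ U`. -/
def truncLE (U : ℕ) (f : ArithmeticFunction ℝ) : ArithmeticFunction ℝ :=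
  ⟨fun n ↦ if n ≤ U then f n else 0, by simp⟩

/-- The truncation of an arithmetic function to arguments `n > U`. -/
def truncGT (U : ℕ) (f : ArithmeticFunction ℝ) : ArithmeticFunction ℝ :=
  ⟨fun n ↦ if n ≤ U then 0 else f n, by simp⟩

lemma truncLE_apply (U : ℕ) (f : ArithmeticFunction ℝ) (n : ℕ) :
    truncLE U f n = if n ≤ U then f n else 0 := rfl

lemma truncGT_apply (U : ℕ) (f : ArithmeticFunction ℝ) (n : ℕ) :
    truncGT U f n = if n ≤ U then 0 else f n := rfl

lemma truncLE_add_truncGT (U : ℕ) (f : ArithmeticFunction ℝ) :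
    truncLE U f + truncGT U f = f := by
  ext n
  rw [ArithmeticFunction.add_apply, truncLE_apply, truncGT_apply]
  split_ifs <;> simp

lemma abs_truncLE_le (U : ℕ) (f : ArithmeticFunction ℝ) (n : ℕ) : |truncLE U f n| ≤ |f n| := by
  rw [truncLE_apply]
  split_ifs <;> simp

lemma abs_truncGT_le (U : ℕ) (f : ArithmeticFunction ℝ) (n : ℕ) : |truncGT U f n| ≤ |f n| := by
  rw [truncGT_apply]
  split_ifs <;> simp

lemma truncLE_mul_truncLE_apply_of_lt (f g : ArithmeticFunction ℝ) (hn : U * U < n) :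
    (truncLE U f * truncLE U g) n = 0 := by
  rw [mul_apply]
  refine Finset.sum_eq_zero fun p hp ↦ ?_
  have hpn := (Nat.mem_divisorsAntidiagonal.1 hp).1
  rw [truncLE_apply, truncLE_apply]
  split_ifs with hp₁ hp₂
  · exact absurd (Nat.mul_le_mul hp₁ hp₂) (by omega)
  all_goals simp

lemma truncGT_mul_apply_of_le (f g : ArithmeticFunction ℝ) (hn : n ≤ U) :
    (truncGT U f * g) n = 0 := by
  rw [mul_apply]
  refine Finset.sum_eq_zero fun p hp ↦ ?_
  rw [truncGT_apply, if_pos ((Nat.divisor_le (Nat.fst_mem_divisors_of_mem_antidiagonal hp)).trans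
    hn), zero_mul]

lemma vonMangoldt_eq_vaughan (U : ℕ) :
    Λ = truncLE U Λ + truncLE U μ * log - truncLE U Λ * truncLE U μ * ζ
      + truncGT U μ * (truncGT U Λ * ζ) := by
  have hΛ : truncGT U Λ = Λ - truncLE U Λ :=
    eq_sub_of_add_eq ((add_comm _ _).trans (truncLE_add_truncGT U Λ))
  have hμ : truncGT U (μ : ArithmeticFunction ℝ) = μ - truncLE U μ :=
    eq_sub_of_add_eq ((add_comm _ _).trans (truncLE_add_truncGT U μ))
  rw [hΛ, hμ, ← vonMangoldt_mul_zeta]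
  linear_combination (truncLE U Λ - Λ) * (coe_zeta_mul_coe_moebius (R := ℝ))

lemma abs_mul_apply_le_log (hf : ∀ n, |f n| ≤ Λ n) (hg : ∀ n, |g n| ≤ 1) (n : ℕ) :
    |(f * g) n| ≤ Real.log n := by
  rw [mul_apply, ← vonMangoldt_sum, ← Nat.sum_divisorsAntidiagonal (f := fun i _ ↦ Λ i)]
  refine (Finset.abs_sum_le_sum_abs _ _).trans (Finset.sum_le_sum fun p _ ↦ ?_)
  rw [abs_mul]
  exact (mul_le_mul (hf _) (hg _) (abs_nonneg _) vonMangoldt_nonneg).trans_eq (mul_one _)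

lemma abs_coe_moebius_le_one (n : ℕ) : |(μ : ArithmeticFunction ℝ) n| ≤ 1 := by
  rw [intCoe_apply]
  exact_mod_cast abs_moebius_le_one

lemma abs_coe_zeta_le_one (n : ℕ) : |(ζ : ArithmeticFunction ℝ) n| ≤ 1 := by
  rw [natCoe_apply, zeta_apply]
  split_ifs <;> simp

lemma sum_mul_apply_mul_eq_sum_sum (f g : ArithmeticFunction ℝ)
    (hw : ∀ n, n ∉ Finset.Icc 1 N → w n = 0) {A : Finset ℕ} (hA : Finset.Icc 1 N ⊆ A) :
    ∑ n ∈ Finset.Icc 1 N, (((f * g) n : ℝ) : ℂ) * w n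
      = ∑ a ∈ A, (f a : ℂ) * ∑ b ∈ Finset.Icc 1 N, (g b : ℂ) * w (a * b) := by
  have hfactor (a b : ℕ) (hab : a * b ∈ Finset.Icc 1 N) :
      a ∈ Finset.Icc 1 N ∧ b ∈ Finset.Icc 1 N := by
    rw [Finset.mem_Icc] at hab
    have ha : 0 < a := Nat.pos_of_mul_pos_right hab.1
    have hb : 0 < b := Nat.pos_of_mul_pos_left hab.1
    rw [Finset.mem_Icc, Finset.mem_Icc]
    exact ⟨⟨ha, (Nat.le_mul_of_pos_right a hb).trans hab.2⟩,
      ⟨hb, (Nat.le_mul_of_pos_left b ha).trans hab.2⟩⟩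
  simp_rw [Finset.mul_sum]
  rw [← Finset.sum_product' A (Finset.Icc 1 N) fun a b ↦ (f a : ℂ) * ((g b : ℂ) * w (a * b)),
    ← Finset.sum_filter_of_ne (p := fun p : ℕ × ℕ ↦ p.1 * p.2 ∈ Finset.Icc 1 N)
      fun p _ hp ↦ by
        by_contra hpN
        exact hp (by rw [hw _ hpN, mul_zero, mul_zero]),
    ← Finset.sum_fiberwise_of_maps_to (g := fun p : ℕ × ℕ ↦ p.1 * p.2)
      fun p hp ↦ (Finset.mem_filter.1 hp).2]
  refine Finset.sum_congr rfl fun n hn ↦ ?_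
  rw [mul_apply, Complex.ofReal_sum, Finset.sum_mul]
  refine Finset.sum_congr ?_ fun p hp ↦ ?_
  · ext p
    rw [Finset.mem_filter, Finset.mem_filter, Nat.mem_divisorsAntidiagonal, Finset.mem_product]
    refine ⟨fun ⟨hpn, _⟩ ↦ ?_, fun ⟨_, hpn⟩ ↦ ⟨hpn, by have := Finset.mem_Icc.1 hn; omega⟩⟩
    obtain ⟨h₁, h₂⟩ := hfactor p.1 p.2 (hpn.symm ▸ hn)
    exact ⟨⟨⟨hA h₁, h₂⟩, hpn.symm ▸ hn⟩, hpn⟩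
  · rw [(Finset.mem_filter.1 hp).2, Complex.ofReal_mul, mul_assoc]

lemma norm_sum_mul_le_of_support {f S : ℕ → ℂ} (hF : 0 ≤ F) (hG : 0 ≤ G)
    (hf : ∀ a ∈ Finset.Icc 1 N, ‖f a‖ ≤ F) (hfU : ∀ a, U < a → f a = 0)
    (hS : ∀ a ∈ Finset.Icc 1 U, ‖S a‖ ≤ G) :
    ‖∑ a ∈ Finset.Icc 1 N, f a * S a‖ ≤ U * (F * G) := by
  have hterm (a : ℕ) (ha : a ∈ Finset.Icc 1 N) :
      ‖f a * S a‖ ≤ if a ∈ Finset.Icc 1 U then F * G else 0 := by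
    rw [norm_mul]
    split_ifs with haU
    · exact mul_le_mul (hf a ha) (hS a haU) (norm_nonneg _) hF
    · rw [Finset.mem_Icc] at ha haU
      rw [hfU a (by omega), norm_zero, zero_mul]
  refine (norm_sum_le_of_le _ hterm).trans ?_
  rw [← Finset.sum_filter, Finset.sum_const, nsmul_eq_mul]
  gcongr
  exact (Finset.card_le_card fun a ha ↦ (Finset.mem_filter.1 ha).2).trans_eq
    (Nat.card_Icc 1 U)

lemma sum_Ico_two_pow (f : ℕ → ℂ) (J : ℕ) :
    ∑ a ∈ Finset.Ico 1 (2 ^ J), f a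
      = ∑ j ∈ Finset.range J, ∑ a ∈ Finset.Ico (2 ^ j) (2 * 2 ^ j), f a := by
  induction J with
  | zero => simp
  | succ J ih =>
    rw [Finset.sum_range_succ, ← ih, pow_succ',
      Finset.sum_Ico_consecutive _ Nat.one_le_two_pow (by omega)]

lemma natLog_two_add_one_le (hR : 1 ≤ R) (hN : Real.log N ≤ R) : (Nat.log 2 N + 1 : ℝ) ≤ 3 * R := by
  have hlog : (Nat.log 2 N : ℝ) * Real.log 2 ≤ Real.log N := by
    rw [← le_div_iff₀ (Real.log_pos one_lt_two)]
    exact Real.natLog_le_logb N 2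
  nlinarith [Real.log_two_gt_d9, (Nat.log 2 N).cast_nonneg (α := ℝ)]

lemma sum_Icc_mul_apply_mul_eq_sum_Icc_div (hw : ∀ n, N < n → w n = 0) (g : ℕ → ℂ) {D a : ℕ}
    (hD : 1 ≤ D) (hDa : D ≤ a) :
    ∑ b ∈ Finset.Icc 1 N, g b * w (a * b) = ∑ b ∈ Finset.Icc 1 (N / D), g b * w (a * b) := by
  refine (Finset.sum_subset (Finset.Icc_subset_Icc_right (Nat.div_le_self N D))
    fun b hb hbD ↦ ?_).symm
  rw [Finset.mem_Icc] at hb hbD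
  have hbN : N < b * D := (Nat.div_lt_iff_lt_mul hD).1 (by omega)
  rw [hw _ (hbN.trans_le ((Nat.mul_comm b D).trans_le (Nat.mul_le_mul_right b hDa))), mul_zero]

lemma norm_sum_sum_le_of_dyadic {f g : ℕ → ℂ} (hw : ∀ n, N < n → w n = 0) (hG : 0 ≤ G)
    (hf : ∀ a, ‖f a‖ ≤ F) (hg : ∀ b ∈ Finset.Icc 1 N, ‖g b‖ ≤ F)
    (hfU : ∀ a, a ≤ U → f a = 0) (hgU : ∀ b, b ≤ U → g b = 0)
    (hII : ∀ D, 1 ≤ D → U ≤ 2 * D → U ≤ N / D → ∀ α β : ℕ → ℂ,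
      (∀ a ∈ Finset.Ico D (2 * D), ‖α a‖ ≤ F) → (∀ b ∈ Finset.Icc 1 (N / D), ‖β b‖ ≤ F) →
      ‖∑ a ∈ Finset.Ico D (2 * D), ∑ b ∈ Finset.Icc 1 (N / D), α a * β b * w (a * b)‖ ≤ G)
    (J : ℕ) :
    ‖∑ a ∈ Finset.Ico 1 (2 ^ J), f a * ∑ b ∈ Finset.Icc 1 N, g b * w (a * b)‖ ≤ J * G := by
  rw [sum_Ico_two_pow]
  refine (norm_sum_le_of_le _ fun j _ ↦ ?_).trans_eq
    (by rw [Finset.sum_const, Finset.card_range, nsmul_eq_mul])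
  generalize hD : 2 ^ j = D
  have hD₁ : 1 ≤ D := hD ▸ Nat.one_le_two_pow
  have hblock : ∑ a ∈ Finset.Ico D (2 * D), f a * ∑ b ∈ Finset.Icc 1 N, g b * w (a * b)
      = ∑ a ∈ Finset.Ico D (2 * D), ∑ b ∈ Finset.Icc 1 (N / D), f a * g b * w (a * b) := by
    refine Finset.sum_congr rfl fun a ha ↦ ?_
    rw [sum_Icc_mul_apply_mul_eq_sum_Icc_div hw g hD₁ (Finset.mem_Ico.1 ha).1, Finset.mul_sum]
    simp_rw [mul_assoc]
  rw [hblock]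
  by_cases hUD : U ≤ 2 * D ∧ U ≤ N / D
  · refine hII D hD₁ hUD.1 hUD.2 f g (fun a _ ↦ hf a) fun b hb ↦ hg b ?_
    exact Finset.Icc_subset_Icc_right (Nat.div_le_self N D) hb
  · rw [Finset.sum_eq_zero, norm_zero]
    · exact hG
    · refine fun a ha ↦ Finset.sum_eq_zero fun b hb ↦ ?_
      rw [Finset.mem_Ico] at ha
      rw [Finset.mem_Icc] at hb
      rcases not_and_or.1 hUD with hU | hU
      · rw [hfU a (by omega), zero_mul, zero_mul]
      · rw [hgU b (by omega), mul_zero, zero_mul]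

lemma norm_sum_log_mul_le {z : ℕ → ℂ} (hlog : Real.log N ≤ R)
    (hG : ∀ v, 1 ≤ v → ‖∑ b ∈ Finset.Icc v N, z b‖ ≤ G) :
    ‖∑ b ∈ Finset.Icc 1 N, ((ArithmeticFunction.log b : ℝ) : ℂ) * z b‖ ≤ 3 * R * G := by
  have hmono : Monotone fun b : ℕ ↦ Real.log (min b N : ℕ) := by
    intro b c hbc
    rcases Nat.eq_zero_or_pos (min b N) with hb | hb
    · simp only [hb, Nat.cast_zero, Real.log_zero]
      exact Real.log_natCast_nonneg _
    · exact Real.log_le_log (by exact_mod_cast hb) (by exact_mod_cast min_le_min_right N hbc)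
  have hcut : ∑ b ∈ Finset.Icc 1 N, ((ArithmeticFunction.log b : ℝ) : ℂ) * z b
      = ∑ b ∈ Finset.Icc 1 N, ((Real.log (min b N : ℕ) : ℝ) : ℂ) * z b := by
    refine Finset.sum_congr rfl fun b hb ↦ ?_
    rw [min_eq_left (Finset.mem_Icc.1 hb).2, log_apply]
  rw [hcut]
  refine norm_sum_Icc_mul_le_of_monotone_or_antitone (w := fun b : ℕ ↦ Real.log (min b N : ℕ))
    (Or.inl hmono) (fun n ↦ ?_) hG
  rw [abs_of_nonneg (Real.log_natCast_nonneg _)]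
  simpa using (hmono (min_le_right n N)).trans (by simpa using hlog)

lemma log_le_of_mem_Icc (hlog : Real.log N ≤ R) (hn : n ∈ Finset.Icc 1 N) :
    Real.log n ≤ R := by
  rw [Finset.mem_Icc] at hn
  exact (Real.log_le_log (by exact_mod_cast hn.1) (by exact_mod_cast hn.2)).trans hlog

lemma abs_truncLE_vonMangoldt_le (U n : ℕ) : |truncLE U Λ n| ≤ Λ n :=
  (abs_truncLE_le U Λ n).trans_eq (abs_of_nonneg vonMangoldt_nonneg)

lemma abs_truncGT_vonMangoldt_le (U n : ℕ) : |truncGT U Λ n| ≤ Λ n :=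
  (abs_truncGT_le U Λ n).trans_eq (abs_of_nonneg vonMangoldt_nonneg)

lemma abs_truncLE_moebius_le_one (U n : ℕ) : |truncLE U μ n| ≤ 1 :=
  (abs_truncLE_le U _ n).trans (abs_coe_moebius_le_one n)

lemma abs_truncGT_moebius_le_one (U n : ℕ) : |truncGT U μ n| ≤ 1 :=
  (abs_truncGT_le U _ n).trans (abs_coe_moebius_le_one n)

lemma norm_sum_truncLE_vonMangoldt_mul_le (hlog : Real.log N ≤ R) (hR : 0 ≤ R)
    (hw₁ : ∀ n, ‖w n‖ ≤ 1) :
    ‖∑ n ∈ Finset.Icc 1 N, ((truncLE U Λ n : ℝ) : ℂ) * w n‖ ≤ U * R := by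
  refine (norm_sum_mul_le_of_support (F := R) (G := 1) hR zero_le_one (fun n hn ↦ ?_)
    (fun n hn ↦ ?_) fun n _ ↦ hw₁ n).trans_eq (by rw [mul_one])
  · rw [Complex.norm_real]
    exact (abs_truncLE_vonMangoldt_le U n).trans
      (vonMangoldt_le_log.trans (log_le_of_mem_Icc hlog hn))
  · rw [truncLE_apply, if_neg (by omega), Complex.ofReal_zero]

lemma norm_sum_truncLE_moebius_mul_log_mul_le (hlog : Real.log N ≤ R) (hR : 0 ≤ R) (hG : 0 ≤ G)
    (hw : ∀ n, n ∉ Finset.Icc 1 N → w n = 0)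
    (hI : ∀ a ∈ Finset.Icc 1 U, ∀ v, 1 ≤ v → ‖∑ b ∈ Finset.Icc v N, w (a * b)‖ ≤ G) :
    ‖∑ n ∈ Finset.Icc 1 N, (((truncLE U μ * ArithmeticFunction.log) n : ℝ) : ℂ) * w n‖
      ≤ U * (3 * R * G) := by
  rw [sum_mul_apply_mul_eq_sum_sum _ _ hw subset_rfl]
  refine (norm_sum_mul_le_of_support (F := 1) zero_le_one (by positivity) (fun a _ ↦ ?_)
    (fun a ha ↦ ?_) fun a ha ↦ norm_sum_log_mul_le hlog (hI a ha)).trans_eq (by rw [one_mul])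
  · rw [Complex.norm_real]
    exact abs_truncLE_moebius_le_one U a
  · rw [truncLE_apply, if_neg (by omega), Complex.ofReal_zero]

lemma norm_sum_truncLE_mul_truncLE_mul_zeta_mul_le (hlog : Real.log N ≤ R) (hR : 0 ≤ R)
    (hG : 0 ≤ G) (hw : ∀ n, n ∉ Finset.Icc 1 N → w n = 0)
    (hI : ∀ a ∈ Finset.Icc 1 (U * U), ‖∑ b ∈ Finset.Icc 1 N, w (a * b)‖ ≤ G) :
    ‖∑ n ∈ Finset.Icc 1 N, (((truncLE U Λ * truncLE U μ * ζ) n : ℝ) : ℂ) * w n‖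
      ≤ (U * U : ℕ) * (R * G) := by
  rw [sum_mul_apply_mul_eq_sum_sum _ _ hw subset_rfl]
  refine norm_sum_mul_le_of_support hR hG (fun a ha ↦ ?_) (fun a ha ↦ ?_) fun a ha ↦ ?_
  · rw [Complex.norm_real]
    exact (abs_mul_apply_le_log (abs_truncLE_vonMangoldt_le U) (abs_truncLE_moebius_le_one U)
      a).trans (log_le_of_mem_Icc hlog ha)
  · rw [truncLE_mul_truncLE_apply_of_lt _ _ ha, Complex.ofReal_zero]
  · refine le_of_eq_of_le (congrArg _ (Finset.sum_congr rfl fun b hb ↦ ?_)) (hI a ha)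
    rw [natCoe_apply, zeta_apply_ne (Nat.one_le_iff_ne_zero.1 (Finset.mem_Icc.1 hb).1)]
    simp

lemma norm_sum_truncGT_mul_truncGT_mul_zeta_mul_le (hlog : Real.log N ≤ R) (hR : 1 ≤ R)
    (hG : 0 ≤ G) (hw : ∀ n, n ∉ Finset.Icc 1 N → w n = 0)
    (hII : ∀ D, 1 ≤ D → U ≤ 2 * D → U ≤ N / D → ∀ α β : ℕ → ℂ,
      (∀ a ∈ Finset.Ico D (2 * D), ‖α a‖ ≤ R) → (∀ b ∈ Finset.Icc 1 (N / D), ‖β b‖ ≤ R) →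
      ‖∑ a ∈ Finset.Ico D (2 * D), ∑ b ∈ Finset.Icc 1 (N / D), α a * β b * w (a * b)‖ ≤ G) :
    ‖∑ n ∈ Finset.Icc 1 N, (((truncGT U μ * (truncGT U Λ * ζ)) n : ℝ) : ℂ) * w n‖
      ≤ 3 * R * G := by
  have hN : Finset.Icc 1 N ⊆ Finset.Ico 1 (2 ^ (Nat.log 2 N + 1)) := fun n hn ↦ by
    rw [Finset.mem_Icc] at hn
    exact Finset.mem_Ico.2 ⟨hn.1, hn.2.trans_lt (Nat.lt_pow_succ_log_self one_lt_two N)⟩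
  rw [sum_mul_apply_mul_eq_sum_sum _ _ hw hN]
  refine (norm_sum_sum_le_of_dyadic (fun n hn ↦ hw n fun hnN ↦ ?_) hG (fun a ↦ ?_)
    (fun b hb ↦ ?_) (fun a ha ↦ ?_) (fun b hb ↦ ?_) hII _).trans ?_
  · exact hn.not_ge (Finset.mem_Icc.1 hnN).2
  · rw [Complex.norm_real]
    exact (abs_truncGT_moebius_le_one U a).trans hR
  · rw [Complex.norm_real]
    exact (abs_mul_apply_le_log (abs_truncGT_vonMangoldt_le U) abs_coe_zeta_le_one b).trans
      (log_le_of_mem_Icc hlog hb)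
  · rw [truncGT_apply, if_pos ha, Complex.ofReal_zero]
  · rw [truncGT_mul_apply_of_le _ _ hb, Complex.ofReal_zero]
  · push_cast
    gcongr
    exact natLog_two_add_one_le hR hlog

theorem norm_sum_vonMangoldt_mul_le (hlog : Real.log N ≤ R) (hR : 1 ≤ R) (hG₁ : 0 ≤ G₁)
    (hG₂ : 0 ≤ G₂) (hw₁ : ∀ n, ‖w n‖ ≤ 1) (hw : ∀ n, n ∉ Finset.Icc 1 N → w n = 0)
    (hI : ∀ a ∈ Finset.Icc 1 (U * U), ∀ v, 1 ≤ v → ‖∑ b ∈ Finset.Icc v N, w (a * b)‖ ≤ G₁)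
    (hII : ∀ D, 1 ≤ D → U ≤ 2 * D → U ≤ N / D → ∀ α β : ℕ → ℂ,
      (∀ a ∈ Finset.Ico D (2 * D), ‖α a‖ ≤ R) → (∀ b ∈ Finset.Icc 1 (N / D), ‖β b‖ ≤ R) →
      ‖∑ a ∈ Finset.Ico D (2 * D), ∑ b ∈ Finset.Icc 1 (N / D), α a * β b * w (a * b)‖ ≤ G₂) :
    ‖∑ n ∈ Finset.Icc 1 N, ((Λ n : ℝ) : ℂ) * w n‖
      ≤ U * R + U * (3 * R * G₁) + (U * U : ℕ) * (R * G₁) + 3 * R * G₂ := by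
  have hR₀ : 0 ≤ R := zero_le_one.trans hR
  have hsplit : ∑ n ∈ Finset.Icc 1 N, ((Λ n : ℝ) : ℂ) * w n
      = ∑ n ∈ Finset.Icc 1 N, ((truncLE U Λ n : ℝ) : ℂ) * w n
        + ∑ n ∈ Finset.Icc 1 N, (((truncLE U μ * ArithmeticFunction.log) n : ℝ) : ℂ) * w n
        - ∑ n ∈ Finset.Icc 1 N, (((truncLE U Λ * truncLE U μ * ζ) n : ℝ) : ℂ) * w n
        + ∑ n ∈ Finset.Icc 1 N, (((truncGT U μ * (truncGT U Λ * ζ)) n : ℝ) : ℂ) * w n := by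
    simp_rw [← Finset.sum_add_distrib, ← Finset.sum_sub_distrib, ← Finset.sum_add_distrib,
      ← add_mul, ← sub_mul, ← add_mul, ← Complex.ofReal_add, ← Complex.ofReal_sub,
      ← Complex.ofReal_add]
    refine Finset.sum_congr rfl fun n _ ↦ ?_
    conv_lhs => rw [vonMangoldt_eq_vaughan U]
    simp [sub_eq_add_neg]
  rw [hsplit]
  refine (norm_add_le _ _).trans (add_le_add ((norm_sub_le _ _).trans (add_le_add
    ((norm_add_le _ _).trans (add_le_add ?_ ?_)) ?_)) ?_)
  · exact norm_sum_truncLE_vonMangoldt_mul_le hlog hR₀ hw₁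
  · exact norm_sum_truncLE_moebius_mul_log_mul_le hlog hR₀ hG₁ hw fun a ha ↦
      hI a (Finset.Icc_subset_Icc_right (Nat.le_mul_self U) ha)
  · exact norm_sum_truncLE_mul_truncLE_mul_zeta_mul_le hlog hR₀ hG₁ hw fun a ha ↦ hI a ha 1 le_rfl
  · exact norm_sum_truncGT_mul_truncGT_mul_zeta_mul_le hlog hR hG₂ hw hII

end Vaughan

section VonMangoldt

open Polynomial ArithmeticFunction

variable {R : ℝ} {N U D u d C V : ℕ} {P : ℝ[X]} {I : Finset ℕ} {α β : ℕ → ℂ}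

lemma sum_cutoffPhase_mul (s : Finset ℕ) (a : ℕ) :
    ∑ b ∈ s, cutoffPhase I P (a * b) = ∑ b ∈ s with a * b ∈ I, eC (P.eval ((a * b : ℕ) : ℝ)) :=
  (Finset.sum_filter _ _).symm

lemma IsWeylExponent.norm_sum_cutoffPhase_mul_le (hC : IsWeylExponent d C) (hR : 2 ≤ R)
    (hN : R ^ C ≤ N) (hP : P.natDegree ≤ d) (hI : (I : Set ℕ).OrdConnected)
    (hminor : ¬ IsMajorArc (R ^ (C + d)) N P) {a : ℕ} (ha : 1 ≤ a) (haR : a ≤ R) (v : ℕ) :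
    ‖∑ b ∈ Finset.Icc v N, cutoffPhase I P (a * b)‖ ≤ N / R := by
  by_contra! hlarge
  rw [div_lt_iff₀' (by positivity), sum_cutoffPhase_mul] at hlarge
  refine hminor (hC.isMajorArc_of_dilate hR hN hP ha haR ⟨fun b hb c hc x hx ↦ ?_⟩ ?_ hlarge.le)
  · simp only [Finset.coe_filter, Finset.mem_Icc, Set.mem_ofPred_eq] at hb hc ⊢
    exact ⟨⟨hb.1.1.trans hx.1, hx.2.trans hc.1.2⟩, hI.out hb.2 hc.2
      ⟨Nat.mul_le_mul_left a hx.1, Nat.mul_le_mul_left a hx.2⟩⟩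
  · exact fun b hb ↦ (Finset.mem_Icc.1 (Finset.mem_filter.1 hb).1).2

lemma IsWeylExponent.norm_bilinear_sum_cutoffPhase_le (hC : IsWeylExponent d C)
    (hV : IsVinogradovExponent d V) (hR : 2 ≤ R) (hu : u = 6 * (7 * C + (7 * C + 8) * V * (d + 1)))
    (hD : R ^ u ≤ D) (hND : R ^ u ≤ (N / D : ℕ)) (hP : P.natDegree ≤ d)
    (hI : (I : Set ℕ).OrdConnected) (hminor : ¬ IsMajorArc (R ^ u) N P)
    (hα : ∀ a ∈ Finset.Ico D (2 * D), ‖α a‖ ≤ R) (hβ : ∀ b ∈ Finset.Icc 1 (N / D), ‖β b‖ ≤ R) :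
    ‖∑ a ∈ Finset.Ico D (2 * D), ∑ b ∈ Finset.Icc 1 (N / D),
      α a * β b * cutoffPhase I P (a * b)‖ ≤ N / R ^ 6 := by
  by_contra! hlarge
  rw [div_lt_iff₀' (by positivity)] at hlarge
  have hle : R ≤ R ^ 6 := le_self_pow₀ (by linarith) (by norm_num)
  rw [hu, pow_mul] at hD hND hminor
  exact hminor (hC.isMajorArc_of_bilinear hV (hR.trans hle) hD hND hP hI
    (fun a ha ↦ (hα a ha).trans hle) (fun b hb ↦ (hβ b hb).trans hle) hlarge.le)

-- The truncation level `U ≈ R ^ u` and the savings `R ^ (2 * u + 10)` and `R ^ 6` in the Type I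
-- and Type II sums make every term of Vaughan's bound `O(N / R ^ 5)`.
lemma mul_vaughan_bound_lt (hR : 2 ≤ R) (hU : U ≤ R ^ (u + 2)) (hN : R ^ (u + 8) ≤ N) :
    R * (U * R + U * (3 * R * (N / R ^ (2 * u + 10))) + (U * U : ℕ) * (R * (N / R ^ (2 * u + 10)))
      + 3 * R * (N / R ^ 6)) < N := by
  have hR₀ : 0 < R := by linarith
  have hN₀ : (0 : ℝ) < N := (pow_pos hR₀ _).trans_le hN
  have h₁ : U * R ≤ N / R ^ 5 := by
    rw [le_div_iff₀ (by positivity)]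
    calc U * R * R ^ 5 ≤ R ^ (u + 2) * R * R ^ 5 := by gcongr
      _ = R ^ (u + 8) := by ring
      _ ≤ N := hN
  have h₂ : U * (3 * R * (N / R ^ (2 * u + 10))) ≤ N / R ^ 5 := by
    have h : 3 * R ^ (u + 8) ≤ R ^ (2 * u + 10) :=
      const_mul_pow_le_pow hR (e := 2) (by norm_num) (by omega)
    rw [mul_div_assoc', mul_div_assoc', div_le_div_iff₀ (by positivity) (by positivity)]
    calc U * (3 * R * N) * R ^ 5 ≤ R ^ (u + 2) * (3 * R * N) * R ^ 5 := by gcongr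
      _ = N * (3 * R ^ (u + 8)) := by ring
      _ ≤ N * R ^ (2 * u + 10) := by gcongr
  have h₃ : (U * U : ℕ) * (R * (N / R ^ (2 * u + 10))) ≤ N / R ^ 5 := by
    rw [mul_div_assoc', mul_div_assoc', div_le_div_iff₀ (by positivity) (by positivity)]
    push_cast
    calc U * U * (R * N) * R ^ 5 ≤ R ^ (u + 2) * R ^ (u + 2) * (R * N) * R ^ 5 := by gcongr
      _ = N * R ^ (2 * u + 10) := by ring
  have h₄ : 3 * R * (N / R ^ 6) = 3 * (N / R ^ 5) := by field_simp
  have hfour : 6 < R ^ 4 := by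
    have := pow_le_pow_left₀ zero_le_two hR 4
    linarith
  calc _ ≤ R * (N / R ^ 5 + N / R ^ 5 + N / R ^ 5 + 3 * (N / R ^ 5)) := by rw [h₄]; gcongr
    _ = N * (6 / R ^ 4) := by field_simp; ring
    _ < N := mul_lt_of_lt_one_right hN₀ ((div_lt_one (by positivity)).2 hfour)

lemma exists_nat_two_mul_pow_le (hR : 2 ≤ R) (u : ℕ) :
    ∃ U : ℕ, 2 * R ^ u ≤ U ∧ U ≤ R ^ (u + 2) := by
  have hone : 1 ≤ R ^ u := one_le_pow₀ (by linarith)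
  refine ⟨⌈2 * R ^ u⌉₊, Nat.le_ceil _, (Nat.ceil_lt_add_one (by positivity)).le.trans ?_⟩
  have := const_mul_pow_le_pow hR (c := 4) (e := 2) (a := u) (b := u + 2) (by norm_num) (by omega)
  linarith

/-- `K` is an exponent for exponential sums over `Λ`: at scales exceeding a power of `log N`, a
polynomial phase of degree at most `d` with a large exponential sum weighted by `Λ` is
major-arc. -/
def IsVonMangoldtExponent (d K : ℕ) : Prop :=
  ∀ R : ℝ, 2 ≤ R → ∀ N : ℕ, Real.log N ≤ R → R ^ K ≤ N → ∀ P : ℝ[X], P.natDegree ≤ d →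
    ∀ I : Finset ℕ, (I : Set ℕ).OrdConnected → I ⊆ Finset.Icc 1 N →
      N ≤ R * ‖∑ n ∈ I, ((vonMangoldt n : ℝ) : ℂ) * eC (P.eval (n : ℝ))‖ → IsMajorArc (R ^ K) N P

theorem exists_isVonMangoldtExponent (d : ℕ) : ∃ K, IsVonMangoldtExponent d K := by
  obtain ⟨C, hC⟩ := exists_isWeylExponent d
  obtain ⟨V, hV⟩ := exists_isVinogradovExponent d
  set u := 6 * (7 * C + (7 * C + 8) * V * (d + 1)) with hu
  refine ⟨(2 * u + 10) * (C + d) + u + 8, fun R hR N hlog hN P hP I hI hIN hsum ↦ ?_⟩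
  by_contra hminor
  have hR₁ : 1 ≤ R := by linarith
  have hpow {m : ℕ} (hm : m ≤ (2 * u + 10) * (C + d) + u + 8) : R ^ m ≤ N :=
    (pow_le_pow_right₀ hR₁ hm).trans hN
  obtain ⟨U, hUge, hUle⟩ := exists_nat_two_mul_pow_le hR u
  have htypeI (a) (ha : a ∈ Finset.Icc 1 (U * U)) (v) (_ : 1 ≤ v) :
      ‖∑ b ∈ Finset.Icc v N, cutoffPhase I P (a * b)‖ ≤ N / R ^ (2 * u + 10) := by
    obtain ⟨ha₁, haU⟩ := Finset.mem_Icc.1 ha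
    refine hC.norm_sum_cutoffPhase_mul_le (hR.trans (le_self_pow₀ hR₁ (by omega))) ?_ hP hI ?_ ha₁
      ?_ v
    · rw [← pow_mul]
      exact hpow (by nlinarith)
    · rw [← pow_mul]
      exact fun h ↦ hminor (h.mono (pow_le_pow_right₀ hR₁ (by omega)))
    · calc (a : ℝ) ≤ (U * U : ℕ) := by exact_mod_cast haU
        _ ≤ R ^ (u + 2) * R ^ (u + 2) := by push_cast; gcongr
        _ ≤ R ^ (2 * u + 10) := by rw [← pow_add]; exact pow_le_pow_right₀ hR₁ (by omega)
  have htypeII (D) (_ : 1 ≤ D) (hUD : U ≤ 2 * D) (hUN : U ≤ N / D) (α β : ℕ → ℂ)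
      (hα : ∀ a ∈ Finset.Ico D (2 * D), ‖α a‖ ≤ R)
      (hβ : ∀ b ∈ Finset.Icc 1 (N / D), ‖β b‖ ≤ R) :
      ‖∑ a ∈ Finset.Ico D (2 * D), ∑ b ∈ Finset.Icc 1 (N / D),
        α a * β b * cutoffPhase I P (a * b)‖ ≤ N / R ^ 6 := by
    have hUD' : (U : ℝ) ≤ 2 * D := by exact_mod_cast hUD
    have hUN' : (U : ℝ) ≤ (N / D : ℕ) := by exact_mod_cast hUN
    have hu₀ : 0 < R ^ u := by positivity
    exact hC.norm_bilinear_sum_cutoffPhase_le hV hR hu (by linarith) (by linarith) hP hI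
      (fun h ↦ hminor (h.mono (pow_le_pow_right₀ hR₁ (by omega)))) hα hβ
  have hbound := norm_sum_vonMangoldt_mul_le hlog hR₁ (by positivity) (by positivity)
    (norm_cutoffPhase_le I P) (fun n hn ↦ if_neg fun h ↦ hn (hIN h)) htypeI htypeII
  have hcut : ∑ n ∈ Finset.Icc 1 N, ((vonMangoldt n : ℝ) : ℂ) * cutoffPhase I P n
      = ∑ n ∈ I, ((vonMangoldt n : ℝ) : ℂ) * eC (P.eval (n : ℝ)) := by
    simp only [cutoffPhase, mul_ite, mul_zero, ← Finset.sum_filter]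
    rw [Finset.filter_mem_eq_inter, Finset.inter_eq_right.2 hIN]
  rw [hcut] at hbound
  exact (hsum.trans (by gcongr)).not_gt (mul_vaughan_bound_lt hR hUle (hpow (by omega)))

end VonMangoldt

section Primes

open Polynomial ArithmeticFunction

variable {R : ℝ} {N d K : ℕ} {P : ℝ[X]} {w w₁ w₂ : ℤ → ℝ}

lemma norm_sum_vonMangoldt_mul_not_prime_le {x y : ℕ} (hx : 1 ≤ x) (hy : y ≤ N) (hN : 1 ≤ N)
    {c : ℕ → ℂ} (hc : ∀ n, ‖c n‖ ≤ 1) :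
    ‖∑ n ∈ Finset.Icc x y with ¬ n.Prime, ((vonMangoldt n : ℝ) : ℂ) * c n‖
      ≤ 2 * √(N : ℝ) * Real.log N := by
  have hpsi := Chebyshev.psi_sub_theta_le (x := (N : ℝ)) (by exact_mod_cast hN)
  rw [Chebyshev.psi_sub_theta_eq_sum_not_prime, Nat.floor_natCast] at hpsi
  refine (norm_sum_le_of_le _ fun n _ ↦ ?_).trans
    ((Finset.sum_le_sum_of_subset_of_nonneg (fun n hn ↦ ?_)
      fun _ _ _ ↦ vonMangoldt_nonneg).trans hpsi)
  · rw [norm_mul, Complex.norm_real, Real.norm_of_nonneg vonMangoldt_nonneg]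
    exact mul_le_of_le_one_right vonMangoldt_nonneg (hc n)
  · simp only [Finset.mem_filter, Finset.mem_Icc, Finset.mem_Ioc] at hn ⊢
    exact ⟨⟨by omega, by omega⟩, hn.2⟩

lemma two_mul_sqrt_mul_log_le (hR : 2 ≤ R) (hlog : Real.log N ≤ R) (hN : R ^ 16 ≤ N) :
    2 * √(N : ℝ) * Real.log N ≤ N / R ^ 6 := by
  have hsqrt : R ^ 8 ≤ √(N : ℝ) := Real.le_sqrt_of_sq_le (by rwa [← pow_mul])
  have htwo : 2 * R ^ 7 ≤ R ^ 8 :=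
    const_mul_pow_le_pow hR (e := 1) (by norm_num) (by norm_num)
  rw [le_div_iff₀ (by positivity)]
  calc 2 * √(N : ℝ) * Real.log N * R ^ 6 ≤ 2 * √(N : ℝ) * R * R ^ 6 := by gcongr
    _ = √(N : ℝ) * (2 * R ^ 7) := by ring
    _ ≤ √(N : ℝ) * √(N : ℝ) := by gcongr; exact htwo.trans hsqrt
    _ = N := Real.mul_self_sqrt N.cast_nonneg

lemma IsVonMangoldtExponent.norm_sum_prime_vonMangoldt_mul_le (hK : IsVonMangoldtExponent d K)
    (hR : 2 ≤ R) (hlog : Real.log N ≤ R) (hN : R ^ (6 * K + 16) ≤ N) (hP : P.natDegree ≤ d)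
    (hminor : ¬ IsMajorArc (R ^ (6 * K)) N P) {x y : ℕ} (hx : 1 ≤ x) (hy : y ≤ N) :
    ‖∑ n ∈ Finset.Icc x y with n.Prime, ((vonMangoldt n : ℝ) : ℂ) * eC (P.eval (n : ℝ))‖
      ≤ 2 * (N / R ^ 6) := by
  have hR₁ : 1 ≤ R := by linarith
  have hpow {m : ℕ} (hm : m ≤ 6 * K + 16) : R ^ m ≤ N := (pow_le_pow_right₀ hR₁ hm).trans hN
  have hR₆ : R ≤ R ^ 6 := le_self_pow₀ hR₁ (by norm_num)
  have hall : ‖∑ n ∈ Finset.Icc x y, ((vonMangoldt n : ℝ) : ℂ) * eC (P.eval (n : ℝ))‖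
      ≤ N / R ^ 6 := by
    by_contra! hlarge
    rw [div_lt_iff₀' (by positivity)] at hlarge
    rw [pow_mul] at hminor
    refine hminor (hK _ (hR.trans hR₆) N (hlog.trans hR₆) ?_ P hP _ ?_ ?_ hlarge.le)
    · rw [← pow_mul]
      exact hpow (by omega)
    · rw [Finset.coe_Icc]
      exact Set.ordConnected_Icc
    · exact Finset.Icc_subset_Icc hx hy
  have hN₁ : 1 ≤ N := by exact_mod_cast (one_le_pow₀ hR₁).trans hN
  have hnot := (norm_sum_vonMangoldt_mul_not_prime_le hx hy hN₁
    (c := fun n ↦ eC (P.eval (n : ℝ))) (by simp)).trans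
      (two_mul_sqrt_mul_log_le hR hlog (hpow (by omega)))
  rw [eq_sub_of_add_eq (Finset.sum_filter_add_sum_filter_not (Finset.Icc x y) Nat.Prime
    fun n : ℕ ↦ ((vonMangoldt n : ℝ) : ℂ) * eC (P.eval (n : ℝ)))]
  linarith [norm_sub_le (∑ n ∈ Finset.Icc x y, ((vonMangoldt n : ℝ) : ℂ) * eC (P.eval (n : ℝ)))
    (∑ n ∈ Finset.Icc x y with ¬ n.Prime, ((vonMangoldt n : ℝ) : ℂ) * eC (P.eval (n : ℝ)))]

lemma antitone_inv_log_max_two : Antitone fun n : ℕ ↦ (Real.log (max n 2 : ℕ))⁻¹ := by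
  intro m n hmn
  have htwo : (1 : ℝ) < (max m 2 : ℕ) := by exact_mod_cast one_lt_two.trans_le (le_max_right m 2)
  refine inv_anti₀ (Real.log_pos htwo) (Real.log_le_log (by linarith) ?_)
  exact_mod_cast max_le_max_right 2 hmn

lemma abs_inv_log_max_two_le (n : ℕ) : |(Real.log (max n 2 : ℕ))⁻¹| ≤ 2 := by
  have hlog : 1 / 2 ≤ Real.log (max n 2 : ℕ) := by
    have := Real.log_two_gt_d9
    have := Real.log_le_log two_pos (show (2 : ℝ) ≤ (max n 2 : ℕ) by
      exact_mod_cast le_max_right n 2)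
    linarith
  rw [abs_of_nonneg (inv_nonneg.2 (by linarith))]
  exact inv_le_of_inv_le₀ two_pos (by linarith)

lemma norm_sum_prime_le_of_vonMangoldt {c : ℕ → ℂ} {x y : ℕ} {G : ℝ}
    (hG : ∀ x', x ≤ x' →
      ‖∑ n ∈ Finset.Icc x' y with n.Prime, ((vonMangoldt n : ℝ) : ℂ) * c n‖ ≤ G) :
    ‖∑ n ∈ Finset.Icc x y with n.Prime, c n‖ ≤ 6 * G := by
  have habel := norm_sum_Icc_mul_le_of_monotone_or_antitone (.inr antitone_inv_log_max_two)
    abs_inv_log_max_two_le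
    (z := fun n ↦ if n.Prime then ((vonMangoldt n : ℝ) : ℂ) * c n else 0) (x := x) (y := y)
    (by simpa only [Finset.sum_filter] using hG)
  have hterm (n : ℕ) : (((Real.log (max n 2 : ℕ))⁻¹ : ℝ) : ℂ) *
      (if n.Prime then ((vonMangoldt n : ℝ) : ℂ) * c n else 0) = if n.Prime then c n else 0 := by
    split_ifs with hn
    · have hlog : Real.log n ≠ 0 := (Real.log_pos (by exact_mod_cast hn.one_lt)).ne'
      rw [max_eq_left hn.two_le, vonMangoldt_apply_prime hn, ← mul_assoc, ← Complex.ofReal_mul,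
        inv_mul_cancel₀ hlog, Complex.ofReal_one, one_mul]
    · rw [mul_zero]
  simp only [hterm, ← Finset.sum_filter] at habel
  linarith

/-- `K` is an exponent for exponential sums weighted by `w`: at scales exceeding a power of `log N`,
a polynomial phase of degree at most `d` with a large exponential sum weighted by `w` is
major-arc. -/
def IsWeightedWeylExponent (w : ℤ → ℝ) (d K : ℕ) : Prop :=
  ∀ R : ℝ, 2 ≤ R → ∀ N : ℕ, Real.log N ≤ R → R ^ K ≤ N → ∀ P : ℝ[X], P.natDegree ≤ d →
    ∀ u v : ℤ, -(N : ℤ) ≤ u → v ≤ N →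
      N ≤ R * ‖∑ n ∈ Finset.Icc u v, (w n : ℂ) * eC (P.eval (n : ℝ))‖ → IsMajorArc (R ^ K) N P

lemma IsWeylExponent.isWeightedWeylExponent_one (hK : IsWeylExponent d K) :
    IsWeightedWeylExponent 1 d K := by
  intro R hR N _ hN P hP u v hu hv hsum
  refine hK R hR N hN P hP (Finset.Icc u v) ?_ (fun n hn ↦ ?_) (by simpa using hsum)
  · rw [Finset.coe_Icc]
    exact Set.ordConnected_Icc
  · rw [Finset.mem_Icc] at hn
    exact abs_le.2 ⟨hu.trans hn.1, hn.2.trans hv⟩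

lemma IsMajorArc.of_comp_neg {B : ℝ} (h : IsMajorArc B N (P.comp (-X))) : IsMajorArc B N P := by
  obtain ⟨q, hq, hqB, hcoeff⟩ := h
  refine ⟨q, hq, hqB, fun i hi ↦ (hcoeff i hi).trans' (le_of_eq ?_)⟩
  rw [show (-X : ℝ[X]) = C (-1) * X by simp, comp_C_mul_X_coeff]
  rcases neg_one_pow_eq_or ℝ i with h | h
  · rw [h, mul_one]
  · rw [h, mul_neg_one, mul_neg, distInt_neg]

lemma IsWeightedWeylExponent.comp_neg (hK : IsWeightedWeylExponent w d K) :
    IsWeightedWeylExponent (fun n ↦ w (-n)) d K := by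
  intro R hR N hlog hN P hP u v hu hv hsum
  refine .of_comp_neg (hK R hR N hlog hN _ ?_ (-v) (-u) (by omega) (by omega) ?_)
  · rwa [natDegree_comp, natDegree_neg, natDegree_X, mul_one]
  · convert hsum using 3
    refine Finset.sum_nbij' Neg.neg Neg.neg ?_ ?_ (by simp) (by simp) (by simp [eval_comp])
    all_goals
      intro n hn
      rw [Finset.mem_Icc] at hn ⊢
      constructor <;> omega

lemma IsWeightedWeylExponent.add (h₁ : IsWeightedWeylExponent w₁ d K)
    (h₂ : IsWeightedWeylExponent w₂ d K) : IsWeightedWeylExponent (w₁ + w₂) d (2 * K) := by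
  intro R hR N hlog hN P hP u v hu hv hsum
  have hR₂ : R ≤ R ^ 2 := le_self_pow₀ (by linarith) two_ne_zero
  rw [pow_mul] at hN ⊢
  simp only [Pi.add_apply, Complex.ofReal_add, add_mul, Finset.sum_add_distrib] at hsum
  set S₁ := ∑ n ∈ Finset.Icc u v, (w₁ n : ℂ) * eC (P.eval (n : ℝ))
  set S₂ := ∑ n ∈ Finset.Icc u v, (w₂ n : ℂ) * eC (P.eval (n : ℝ))
  have hmax : N ≤ R ^ 2 * max ‖S₁‖ ‖S₂‖ := by
    have hadd : ‖S₁ + S₂‖ ≤ 2 * max ‖S₁‖ ‖S₂‖ := by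
      linarith [norm_add_le S₁ S₂, le_max_left ‖S₁‖ ‖S₂‖, le_max_right ‖S₁‖ ‖S₂‖]
    calc (N : ℝ) ≤ R * ‖S₁ + S₂‖ := hsum
      _ ≤ R * (R * max ‖S₁‖ ‖S₂‖) := by gcongr; exact hadd.trans (by gcongr)
      _ = R ^ 2 * max ‖S₁‖ ‖S₂‖ := by ring
  rcases max_choice ‖S₁‖ ‖S₂‖ with h | h <;> rw [h] at hmax
  · exact h₁ _ (hR.trans hR₂) N (hlog.trans hR₂) hN P hP u v hu hv hmax
  · exact h₂ _ (hR.trans hR₂) N (hlog.trans hR₂) hN P hP u v hu hv hmax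

lemma sum_Icc_indicator_pos_prime_mul (u v : ℤ) (f : ℤ → ℂ) :
    ∑ n ∈ Finset.Icc u v,
        ((Set.indicator {n : ℤ | 0 < n ∧ Prime n} (1 : ℤ → ℝ) n : ℝ) : ℂ) * f n
      = ∑ p ∈ Finset.Icc (max u 1).toNat v.toNat with p.Prime, f p := by
  classical
  simp only [Set.indicator_apply, Set.mem_ofPred_eq, Pi.one_apply, apply_ite Complex.ofReal,
    Complex.ofReal_one, Complex.ofReal_zero, ite_mul, one_mul, zero_mul, ← Finset.sum_filter]
  symm
  refine Finset.sum_nbij Nat.cast (fun p hp ↦ ?_) Nat.cast_injective.injOn (fun n hn ↦ ?_)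
    fun _ _ ↦ rfl
  · simp only [Finset.mem_filter, Finset.mem_Icc] at hp ⊢
    exact ⟨by omega, by exact_mod_cast hp.2.pos, Nat.prime_iff_prime_int.1 hp.2⟩
  · simp only [Finset.coe_filter, Finset.mem_Icc, Set.mem_ofPred_eq] at hn
    lift n to ℕ using hn.2.1.le
    refine ⟨n, ?_, rfl⟩
    simp only [Finset.coe_filter, Finset.mem_Icc, Set.mem_ofPred_eq]
    exact ⟨by omega, Nat.prime_iff_prime_int.2 hn.2.2⟩

lemma IsVonMangoldtExponent.isWeightedWeylExponent_pos_prime (hK : IsVonMangoldtExponent d K) :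
    IsWeightedWeylExponent (Set.indicator {n | 0 < n ∧ Prime n} 1) d (6 * K + 16) := by
  intro R hR N hlog hN P hP u v _ hv hsum
  by_contra hminor
  have hN₀ : (0 : ℝ) < N := hN.trans_lt' (by positivity)
  have hprime := norm_sum_prime_le_of_vonMangoldt (c := fun n ↦ eC (P.eval (n : ℝ)))
    (x := (max u 1).toNat) (y := v.toNat) fun x' hx' ↦
      hK.norm_sum_prime_vonMangoldt_mul_le hR hlog hN hP
        (fun h ↦ hminor (h.mono (pow_le_pow_right₀ (by linarith) (by omega))))
        (x := x') (by omega) (by omega)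
  rw [sum_Icc_indicator_pos_prime_mul u v fun n ↦ eC (P.eval (n : ℝ))] at hsum
  have htwelve : 12 < R ^ 5 := by
    have := pow_le_pow_left₀ zero_le_two hR 5
    linarith
  refine (hsum.trans (mul_le_mul_of_nonneg_left hprime (by linarith))).not_gt ?_
  have hR₀ : R ≠ 0 := by linarith
  calc R * (6 * (2 * (N / R ^ 6))) = N * (12 / R ^ 5) := by field_simp; ring
    _ < (N : ℝ) := mul_lt_of_lt_one_right hN₀ ((div_lt_one (by positivity)).2 htwelve)

theorem exists_isWeightedWeylExponent_one (d : ℕ) : ∃ K, IsWeightedWeylExponent 1 d K :=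
  (exists_isWeylExponent d).imp fun _ hK ↦ hK.isWeightedWeylExponent_one

theorem exists_isWeightedWeylExponent_prime (d : ℕ) :
    ∃ K, IsWeightedWeylExponent (Set.indicator {n | Prime n} 1) d K := by
  obtain ⟨K, hK⟩ := exists_isVonMangoldtExponent d
  have hpos := hK.isWeightedWeylExponent_pos_prime
  refine ⟨2 * (6 * K + 16), ?_⟩
  convert hpos.add hpos.comp_neg using 1
  ext n
  classical
  rcases lt_trichotomy n 0 with hn | rfl | hn
  · simp [Set.indicator_apply, hn, hn.not_gt, Int.prime_iff_natAbs_prime]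
  · simp [Set.indicator_apply]
  · simp [Set.indicator_apply, hn, hn.not_gt]

end Primes

section Slices

open Polynomial

/-- The phase `ξ · 𝒬` along the line `n ↦ p.insertNth n v` in direction `p`, as a polynomial
in `n`. -/
noncomputable def slicePoly {k : ℕ} (p : Fin (k + 1)) (Γ : Finset (Fin (k + 1) → ℕ))
    (ξ : (Fin (k + 1) → ℕ) → ℝ) (v : Fin k → ℤ) : ℝ[X] :=
  ∑ γ ∈ Γ, monomial (γ p) (ξ γ * ∏ j, (v j : ℝ) ^ γ (p.succAbove j))

/-- The multi-indices of `Γ` with `p`-th entry `i`, with that entry removed. -/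
def sliceExponents {k : ℕ} (p : Fin (k + 1)) (i : ℕ) (Γ : Finset (Fin (k + 1) → ℕ)) :
    Finset (Fin k → ℕ) :=
  (Γ.filter fun γ ↦ γ p = i).image p.removeNth

variable {k : ℕ} {p : Fin (k + 1)} {Γ : Finset (Fin (k + 1) → ℕ)} {ξ : (Fin (k + 1) → ℕ) → ℝ}

lemma eval_slicePoly (v : Fin k → ℤ) (n : ℤ) :
    (slicePoly p Γ ξ v).eval (n : ℝ) = qPair Γ ξ (p.insertNth (α := fun _ ↦ ℤ) n v) := by
  rw [slicePoly, qPair, eval_finsetSum]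
  refine Finset.sum_congr rfl fun γ _ ↦ ?_
  rw [eval_monomial, Fin.prod_univ_succAbove _ p]
  simp only [Fin.insertNth_apply_same, Fin.insertNth_apply_succAbove]
  ring

lemma natDegree_slicePoly_le (v : Fin k → ℤ) :
    (slicePoly p Γ ξ v).natDegree ≤ Γ.sup fun γ ↦ γ p :=
  natDegree_sum_le_of_forall_le _ _ fun _ hγ ↦
    (natDegree_monomial_le _).trans (Finset.le_sup (f := fun γ ↦ γ p) hγ)

lemma coeff_slicePoly (v : Fin k → ℤ) (i : ℕ) :
    (slicePoly p Γ ξ v).coeff i =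
      qPair (sliceExponents p i Γ) (fun γ ↦ ξ (p.insertNth (α := fun _ ↦ ℕ) i γ)) v := by
  rw [slicePoly, qPair, sliceExponents, finsetSum_coeff, Finset.sum_image, Finset.sum_filter]
  · refine Finset.sum_congr rfl fun γ _ ↦ ?_
    rw [coeff_monomial]
    split_ifs with h
    · subst h
      simp only [Fin.insertNth_self_removeNth]
      rfl
    · rfl
  · intro γ hγ γ' hγ' h
    rw [Finset.mem_coe, Finset.mem_filter] at hγ hγ'
    rw [← Fin.insertNth_self_removeNth p γ, ← Fin.insertNth_self_removeNth p γ', hγ.2, hγ'.2, h]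

lemma qPair_const_mul {k : ℕ} (Γ : Finset (Fin k → ℕ)) (ξ : (Fin k → ℕ) → ℝ) (v : Fin k → ℤ)
    (c : ℝ) : qPair Γ (fun γ ↦ c * ξ γ) v = c * qPair Γ ξ v := by
  simp only [qPair, Finset.mul_sum, mul_assoc]

/-- The integer points of the cube `[-N, N]^k`. -/
noncomputable def box (k N : ℕ) : Finset (Fin k → ℤ) :=
  Fintype.piFinset fun _ ↦ Finset.Icc (-(N : ℤ)) N

variable {N : ℕ}

lemma mem_box {k : ℕ} {v : Fin k → ℤ} : v ∈ box k N ↔ ∀ i, |v i| ≤ (N : ℤ) := by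
  simp only [box, Fintype.mem_piFinset, Finset.mem_Icc, abs_le]

lemma card_box (k N : ℕ) : (box k N).card = (2 * N + 1) ^ k := by
  have hcard : ((N : ℤ) + 1 - -N).toNat = 2 * N + 1 := by omega
  simp only [box, Fintype.card_piFinset, Int.card_Icc, Finset.prod_const, Finset.card_univ,
    Fintype.card_fin, hcard]

lemma sum_box_succ {M : Type*} [AddCommMonoid M] (p : Fin (k + 1)) (f : (Fin (k + 1) → ℤ) → M) :
    ∑ v ∈ box (k + 1) N, f v = ∑ v ∈ box k N, ∑ n ∈ Finset.Icc (-(N : ℤ)) N,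
      f (p.insertNth (α := fun _ ↦ ℤ) n v) := by
  rw [← Finset.sum_product' (box k N) (Finset.Icc (-(N : ℤ)) N)
    fun v n ↦ f (p.insertNth (α := fun _ ↦ ℤ) n v)]
  refine Finset.sum_nbij' (fun v ↦ (p.removeNth v, v p))
    (fun x ↦ p.insertNth (α := fun _ ↦ ℤ) x.2 x.1) (fun v hv ↦ ?_) (fun x hx ↦ ?_)
    (fun v _ ↦ Fin.insertNth_self_removeNth p v) (fun x _ ↦ by simp)
    fun v _ ↦ by rw [Fin.insertNth_self_removeNth]
  · rw [mem_box] at hv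
    rw [Finset.mem_product, mem_box, Finset.mem_Icc]
    exact ⟨fun i ↦ hv _, abs_le.1 (hv p)⟩
  · rw [Finset.mem_product, mem_box, Finset.mem_Icc, ← abs_le] at hx
    rw [mem_box, p.forall_iff_succAbove]
    simpa using hx.symm

end Slices

section BoxVinogradovLemma

/-- `C` is an admissible exponent in the multivariate Vinogradov lemma for the multi-indices `Γ`: a
phase `ξ · 𝒬` within `ε` of an integer on a proportion `1 / R` of a box has all its frequencies
`ξ_γ` close to rationals with denominator at most `R ^ C`. -/
def IsBoxVinogradovExponent {k : ℕ} (Γ : Finset (Fin k → ℕ)) (C : ℕ) : Prop :=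
  ∀ R : ℝ, 2 ≤ R → ∀ N : ℕ, R ^ C ≤ N → ∀ ξ : (Fin k → ℕ) → ℝ,
    ∀ ε : ℝ, 0 ≤ ε → ε * R ^ C ≤ 1 → ∀ H ⊆ box k N, (N : ℝ) ^ k ≤ R * H.card →
      (∀ h ∈ H, distInt (qPair Γ ξ h) ≤ ε) → ∀ γ ∈ Γ, ∃ q : ℕ, 1 ≤ q ∧ (q : ℝ) ≤ R ^ C ∧
        distInt (q * ξ γ) ≤ ε * R ^ C / (N : ℝ) ^ (∑ i, γ i)

lemma IsBoxVinogradovExponent.mono {k C C' : ℕ} {Γ : Finset (Fin k → ℕ)}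
    (h : IsBoxVinogradovExponent Γ C) (hC : C ≤ C') : IsBoxVinogradovExponent Γ C' := by
  intro R hR N hN ξ ε hε hεR H hH hcard hHε γ hγ
  have hpow : R ^ C ≤ R ^ C' := pow_le_pow_right₀ (by linarith) hC
  obtain ⟨q, hq, hqR, hdist⟩ := h R hR N (hpow.trans hN) ξ ε hε (le_trans (by gcongr) hεR) H hH
    hcard hHε γ hγ
  exact ⟨q, hq, hqR.trans hpow, hdist.trans (by gcongr)⟩

lemma isBoxVinogradovExponent_of_fin_zero (Γ : Finset (Fin 0 → ℕ)) :
    IsBoxVinogradovExponent Γ 0 := by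
  intro R _ N _ ξ ε _ _ H _ hcard hHε γ hγ
  have hH : H.Nonempty := by
    by_contra! hempty
    rw [hempty] at hcard
    norm_num at hcard
  obtain ⟨h, hh⟩ := hH
  have hΓ : Γ = {γ} :=
    Finset.eq_singleton_iff_unique_mem.2 ⟨hγ, fun γ' _ ↦ Subsingleton.elim γ' γ⟩
  have hdist := hHε h hh
  rw [hΓ] at hdist
  exact ⟨1, le_rfl, by simp, by simpa [qPair] using hdist⟩

variable {k N : ℕ} {R ε : ℝ} {p : Fin (k + 1)} {Γ : Finset (Fin (k + 1) → ℕ)}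
  {ξ : (Fin (k + 1) → ℕ) → ℝ}

lemma IsBoxVinogradovExponent.exists_distInt_mul_le_of_slices {V : ℕ} {B δ S : ℝ}
    {γ : Fin (k + 1) → ℕ} (hV : IsBoxVinogradovExponent (sliceExponents p (γ p) Γ) V)
    (hγ : γ ∈ Γ) (hS : 2 ≤ S) (hN : S ^ V ≤ N) (hB : 0 < B) (hδ : 0 ≤ δ)
    (hδS : δ / (N : ℝ) ^ γ p * S ^ V ≤ 1) {G : Finset (Fin k → ℤ)} (hG : G ⊆ box k N)
    (hcard : (N : ℝ) ^ k * B ≤ S * G.card)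
    (hcoeff : ∀ v ∈ G, ∃ q : ℕ, 1 ≤ q ∧ (q : ℝ) ≤ B ∧
      distInt (q * (slicePoly p Γ ξ v).coeff (γ p)) ≤ δ / (N : ℝ) ^ γ p) :
    ∃ q : ℕ, 1 ≤ q ∧ (q : ℝ) ≤ B * S ^ V ∧
      distInt (q * ξ γ) ≤ δ * S ^ V / (N : ℝ) ^ (∑ i, γ i) := by
  have hN₀ : (0 : ℝ) < N := hN.trans_lt' (by positivity)
  have hGne : G.Nonempty := by
    by_contra! hempty
    rw [hempty, Finset.card_empty, Nat.cast_zero, mul_zero] at hcard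
    exact hcard.not_gt (by positivity)
  obtain ⟨q₁, hq₁, hq₁B, G', hG', hcard', hdist₁⟩ := exists_common_denominator hGne hcoeff
  obtain ⟨q₂, hq₂, hq₂S, hdist₂⟩ := hV S hS N hN
    (fun γ' ↦ q₁ * ξ (p.insertNth (α := fun _ ↦ ℕ) (γ p) γ')) _ (by positivity) hδS G'
    (hG'.trans hG)
    (by
      refine le_of_mul_le_mul_right (hcard.trans ?_) hB
      calc S * (G.card : ℝ) ≤ S * (B * G'.card) := by gcongr
        _ = S * G'.card * B := by ring)
    (fun v hv ↦ by
      rw [qPair_const_mul, ← coeff_slicePoly]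
      exact hdist₁ v hv)
    (p.removeNth γ) (Finset.mem_image_of_mem _ (Finset.mem_filter.2 ⟨hγ, rfl⟩))
  refine ⟨q₂ * q₁, Nat.mul_pos hq₂ hq₁, ?_, ?_⟩
  · rw [Nat.cast_mul, mul_comm B]
    gcongr
  · have hexp : (N : ℝ) ^ (∑ i, γ i) = N ^ γ p * N ^ (∑ j, p.removeNth γ j) := by
      rw [← pow_add, Fin.sum_univ_succAbove _ p]
      rfl
    rw [Fin.insertNth_self_removeNth, div_mul_eq_mul_div, div_div, ← hexp, ← mul_assoc] at hdist₂
    rwa [Nat.cast_mul]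

variable {H : Finset (Fin (k + 1) → ℤ)}

open Classical in
/-- The integers `n` for which the point `p.insertNth n v` lies in `H`. -/
noncomputable def slice (p : Fin (k + 1)) (H : Finset (Fin (k + 1) → ℤ)) (v : Fin k → ℤ) :
    Finset ℤ :=
  (H.filter fun x ↦ p.removeNth x = v).image fun x ↦ x p

lemma mem_slice {v : Fin k → ℤ} {n : ℤ} :
    n ∈ slice p H v ↔ p.insertNth (α := fun _ ↦ ℤ) n v ∈ H := by
  simp only [slice, Finset.mem_image, Finset.mem_filter]
  refine ⟨?_, fun h ↦ ⟨_, ⟨h, by simp⟩, by simp⟩⟩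
  rintro ⟨x, ⟨hx, rfl⟩, rfl⟩
  rwa [Fin.insertNth_self_removeNth]

lemma abs_le_of_mem_slice (hH : H ⊆ box (k + 1) N) {v : Fin k → ℤ} {n : ℤ}
    (hn : n ∈ slice p H v) : |n| ≤ (N : ℤ) := by
  simpa using mem_box.1 (hH (mem_slice.1 hn)) p

lemma card_eq_sum_card_slice (p : Fin (k + 1)) (hH : H ⊆ box (k + 1) N) :
    H.card = ∑ v ∈ box k N, (slice p H v).card := by
  classical
  have hmaps : ∀ x ∈ H, p.removeNth x ∈ box k N := fun x hx ↦
    mem_box.2 fun _ ↦ mem_box.1 (hH hx) _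
  rw [Finset.card_eq_sum_card_fiberwise hmaps]
  refine Finset.sum_congr rfl fun v _ ↦ (Finset.card_image_of_injOn fun x hx y hy hxy ↦ ?_).symm
  simp only [Finset.coe_filter, Set.mem_ofPred_eq] at hx hy
  rw [← Fin.insertNth_self_removeNth p x, ← Fin.insertNth_self_removeNth p y, hx.2, hy.2, hxy]

lemma exists_popular_slices (p : Fin (k + 1)) (hR : 0 < R) (hN : 1 ≤ N)
    (hH : H ⊆ box (k + 1) N) (hcard : (N : ℝ) ^ (k + 1) ≤ R * H.card) :
    ∃ G ⊆ box k N, (N : ℝ) ^ k ≤ 6 * R * G.card ∧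
      ∀ v ∈ G, N ≤ 2 * 3 ^ k * R * (slice p H v).card := by
  have hN₁ : (1 : ℝ) ≤ N := by exact_mod_cast hN
  have hN₀ : (0 : ℝ) < N := by linarith
  have hpopular := le_mul_card_filter_of_le_sum (T := box k N) (M := 3 * N) (K := (3 * N) ^ k)
    (S := (N : ℝ) ^ (k + 1) / R) (f := fun v ↦ (slice p H v).card)
    (by rw [card_box]; push_cast; gcongr; linarith) (by positivity) (by positivity)
    (fun v _ ↦ by
      have hslice := card_le_of_abs_le fun n hn ↦ abs_le_of_mem_slice (p := p) (v := v) hH hn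
      exact_mod_cast hslice.trans (by omega))
    (by
      rw [div_le_iff₀' hR, ← Nat.cast_sum, ← card_eq_sum_card_slice p hH]
      exact hcard)
  refine ⟨(box k N).filter fun v ↦ (N : ℝ) ^ (k + 1) / R ≤ 2 * (3 * N) ^ k * (slice p H v).card,
    Finset.filter_subset _ _, ?_, fun v hv ↦ ?_⟩
  · rw [div_le_iff₀ hR] at hpopular
    refine le_of_mul_le_mul_left ?_ hN₀
    calc (N : ℝ) * N ^ k = N ^ (k + 1) := by ring
      _ ≤ _ := hpopular
      _ = _ := by ring
  · have hlarge := (Finset.mem_filter.1 hv).2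
    rw [div_le_iff₀ hR] at hlarge
    refine le_of_mul_le_mul_left ?_ (pow_pos hN₀ k)
    calc (N : ℝ) ^ k * N = N ^ (k + 1) := by ring
      _ ≤ _ := hlarge
      _ = _ := by rw [mul_pow]; ring

lemma IsVinogradovExponent.exists_slices {V : ℕ}
    (hV : IsVinogradovExponent (Γ.sup fun γ ↦ γ p) V) (hR : 2 ≤ R)
    (hN : R ^ ((2 * k + 2) * V) ≤ N) (hε : 0 ≤ ε) (hεR : ε * R ^ ((2 * k + 2) * V) ≤ 1)
    (hH : H ⊆ box (k + 1) N) (hcard : (N : ℝ) ^ (k + 1) ≤ R * H.card)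
    (hHε : ∀ h ∈ H, distInt (qPair Γ ξ h) ≤ ε) :
    ∃ G ⊆ box k N, (N : ℝ) ^ k ≤ 6 * R * G.card ∧ ∀ v ∈ G, ∃ q : ℕ, 1 ≤ q ∧
      (q : ℝ) ≤ R ^ ((2 * k + 2) * V) ∧ ∀ i,
        distInt (q * (slicePoly p Γ ξ v).coeff i) ≤ ε * R ^ ((2 * k + 2) * V) / (N : ℝ) ^ i := by
  have hR₁ : 1 ≤ R := by linarith
  have hN₁ : 1 ≤ N := by exact_mod_cast (one_le_pow₀ hR₁).trans hN
  obtain ⟨G, hG, hGcard, hslice⟩ := exists_popular_slices p (by linarith) hN₁ hH hcard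
  refine ⟨G, hG, hGcard, fun v hv ↦ ?_⟩
  rw [pow_mul] at hN hεR ⊢
  refine hV _ (hR.trans (le_self_pow₀ hR₁ (by omega))) N hN _ (natDegree_slicePoly_le v) ε hε hεR
    (slice p H v) (fun n hn ↦ abs_le_of_mem_slice hH hn)
    ((hslice v hv).trans ?_) fun n hn ↦ ?_
  · gcongr
    have hconst : (2 * 3 ^ k : ℝ) ≤ 2 ^ (2 * k + 1) := by
      calc (2 * 3 ^ k : ℝ) ≤ 2 * 4 ^ k := by gcongr; norm_num
        _ = 2 ^ (2 * k + 1) := by rw [pow_succ, pow_mul]; norm_num; ring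
    simpa using const_mul_pow_le_pow hR hconst (a := 1) le_rfl
  · rw [eval_slicePoly]
    exact hHε _ (mem_slice.1 hn)

lemma IsBoxVinogradovExponent.of_slices {C V : ℕ}
    (hC : ∀ γ ∈ Γ, IsBoxVinogradovExponent (sliceExponents p (γ p) Γ) C)
    (hV : IsVinogradovExponent (Γ.sup fun γ ↦ γ p) V) :
    IsBoxVinogradovExponent Γ ((2 * k + 2) * V + ((2 * k + 2) * V + 4) * C) := by
  set a := (2 * k + 2) * V with ha
  intro R hR N hN ξ ε hε hεR H hH hcard hHε γ hγ
  have hR₁ : 1 ≤ R := by linarith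
  have hle {m : ℕ} (hm : m ≤ a + (a + 4) * C) : R ^ m ≤ R ^ (a + (a + 4) * C) :=
    pow_le_pow_right₀ hR₁ hm
  have hN₁ : (1 : ℝ) ≤ N := (one_le_pow₀ hR₁).trans hN
  obtain ⟨G, hG, hGcard, hcoeff⟩ := hV.exists_slices hR ((hle (by omega)).trans hN) hε
    ((mul_le_mul_of_nonneg_left (hle (by omega)) hε).trans hεR) hH hcard hHε
  have hpow : R ^ a * (R ^ (a + 4)) ^ C = R ^ (a + (a + 4) * C) := by rw [← pow_mul, ← pow_add]
  rw [← hpow, ← mul_assoc] at hεR ⊢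
  refine (hC γ hγ).exists_distInt_mul_le_of_slices hγ
    (hR.trans (le_self_pow₀ hR₁ (a + 3).succ_ne_zero)) ?_ (by positivity) (by positivity)
    (le_trans ?_ hεR) hG ?_ fun v hv ↦ (hcoeff v hv).imp fun q hq ↦ ⟨hq.1, hq.2.1, hq.2.2 _⟩
  · rw [← pow_mul]
    exact (hle (by omega)).trans hN
  · gcongr
    exact div_le_self (by positivity) (one_le_pow₀ hN₁)
  · calc (N : ℝ) ^ k * R ^ a ≤ 6 * R * G.card * R ^ a := by gcongr
      _ = 6 * R ^ (a + 1) * G.card := by ring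
      _ ≤ R ^ (a + 4) * G.card := by
        gcongr
        exact const_mul_pow_le_pow hR (e := 3) (by norm_num) (by omega)

theorem exists_isBoxVinogradovExponent {k : ℕ} (Γ : Finset (Fin k → ℕ)) :
    ∃ C, IsBoxVinogradovExponent Γ C := by
  induction k with
  | zero => exact ⟨0, isBoxVinogradovExponent_of_fin_zero Γ⟩
  | succ k ih =>
    obtain ⟨V, hV⟩ := exists_isVinogradovExponent (Γ.sup fun γ ↦ γ 0)
    choose C hC using fun i ↦ ih (sliceExponents 0 i Γ)
    exact ⟨_, .of_slices (C := Γ.sup fun γ ↦ C (γ 0))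
      (fun γ hγ ↦ (hC (γ 0)).mono (Finset.le_sup (f := fun γ ↦ C (γ 0)) hγ)) hV⟩

end BoxVinogradovLemma

section FewMajorLines

variable {k N K V : ℕ} {R : ℝ} {p : Fin (k + 1)} {Γ : Finset (Fin (k + 1) → ℕ)}
  {ξ : (Fin (k + 1) → ℕ) → ℝ} {w : ℤ → ℝ} {γ : Fin (k + 1) → ℕ}

lemma IsWeightedWeylExponent.exists_distInt_mul_le
    (hw : IsWeightedWeylExponent w (Γ.sup fun γ ↦ γ p) K)
    (hV : IsBoxVinogradovExponent (sliceExponents p (γ p) Γ) V) (hγ : γ ∈ Γ) (hγp : 1 ≤ γ p)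
    (hR : 2 ≤ R) (hlog : Real.log N ≤ R) (hN : R ^ (K + (K + 1) * V) ≤ N)
    {G : Finset (Fin k → ℤ)} (hG : G ⊆ box k N) (hcard : (N : ℝ) ^ k ≤ R * G.card)
    (hsum : ∀ v ∈ G, ∃ x y : ℤ, -(N : ℤ) ≤ x ∧ y ≤ N ∧
      N ≤ R * ‖∑ n ∈ Finset.Icc x y, (w n : ℂ) * eC ((slicePoly p Γ ξ v).eval (n : ℝ))‖) :
    ∃ q : ℕ, 1 ≤ q ∧ (q : ℝ) ≤ R ^ (K + (K + 1) * V) ∧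
      distInt (q * ξ γ) ≤ R ^ (K + (K + 1) * V) / (N : ℝ) ^ (∑ i, γ i) := by
  have hR₁ : 1 ≤ R := by linarith
  have hle {m : ℕ} (hm : m ≤ K + (K + 1) * V) : R ^ m ≤ N :=
    (pow_le_pow_right₀ hR₁ hm).trans hN
  have hN₁ : (1 : ℝ) ≤ N := (one_le_pow₀ hR₁).trans hN
  have hpow : R ^ K * (R ^ (K + 1)) ^ V = R ^ (K + (K + 1) * V) := by rw [← pow_mul, ← pow_add]
  rw [← hpow]
  refine hV.exists_distInt_mul_le_of_slices hγ (hR.trans (le_self_pow₀ hR₁ K.succ_ne_zero)) ?_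
    (by positivity) (by positivity) ?_ hG ?_ fun v hv ↦ ?_
  · rw [← pow_mul]
    exact hle (by omega)
  · rw [div_mul_eq_mul_div, hpow, div_le_one (by positivity)]
    exact hN.trans (le_self_pow₀ hN₁ (by omega))
  · calc (N : ℝ) ^ k * R ^ K ≤ R * G.card * R ^ K := by gcongr
      _ = R ^ (K + 1) * G.card := by ring
  · obtain ⟨x, y, hx, hy, hxy⟩ := hsum v hv
    obtain ⟨q, hq, hqR, hcoeff⟩ :=
      hw R hR N hlog (hle (by omega)) _ (natDegree_slicePoly_le v) x y hx hy hxy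
    exact ⟨q, hq, hqR, hcoeff _ hγp⟩

lemma half_lt_mul_distInt_mul_of_abs_sub_div_le {x : ℝ} {a q : ℤ} {m : ℕ} (haq : IsCoprime a q)
    (hx : |x - a / q| ≤ 1 / (q : ℝ) ^ 2) (hm : 1 ≤ m) (hmq : 2 * (m : ℝ) < q) :
    1 / 2 < q * distInt (m * x) := by
  have hm₁ : (1 : ℝ) ≤ m := by exact_mod_cast hm
  have hq₀ : (0 : ℝ) < q := by linarith
  rw [distInt_eq_abs_sub_round]
  set r := round ((m : ℝ) * x)
  have hne : (m : ℤ) * a - r * q ≠ 0 := by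
    intro hzero
    have hdvd : q ∣ (m : ℤ) := haq.symm.dvd_of_dvd_mul_right ⟨r, by linarith⟩
    have hqm : (q : ℝ) ≤ m := by exact_mod_cast Int.le_of_dvd (by omega) hdvd
    linarith
  have hone : (1 : ℝ) ≤ |(m : ℝ) * a - r * q| := by exact_mod_cast Int.one_le_abs hne
  have hdecomp : (m : ℝ) * a - r * q = q * (m * x - r) - m * (q * (x - a / q)) := by
    field_simp
    ring
  have herr : m * (q * |x - a / q|) < 1 / 2 := by
    calc m * (q * |x - a / q|) ≤ m * (q * (1 / (q : ℝ) ^ 2)) := by gcongr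
      _ = m / q := by field_simp
      _ < 1 / 2 := by rw [div_lt_iff₀ hq₀]; linarith
  have htri := abs_sub ((q : ℝ) * (m * x - r)) (m * (q * (x - a / q)))
  rw [← hdecomp, abs_mul, abs_of_pos hq₀, abs_mul, Nat.abs_cast, abs_mul, abs_of_pos hq₀] at htri
  linarith

end FewMajorLines

section SlowlyVaryingWeights

variable {α : Type*} [PartialOrder α] {A A' : Set α}

lemma ordConnected_diff_inter_exists_lt (hA : A.OrdConnected) (hA' : A'.OrdConnected) :
    {n ∈ A \ A' | ∃ m ∈ A', n < m}.OrdConnected := by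
  refine ⟨?_⟩
  rintro a ⟨⟨ha, -⟩, -⟩ b ⟨⟨hb, hb'⟩, m, hm, hbm⟩ c ⟨hac, hcb⟩
  exact ⟨⟨hA.out ha hb ⟨hac, hcb⟩, fun hc ↦ hb' (hA'.out hc hm ⟨hcb, hbm.le⟩)⟩,
    m, hm, hcb.trans_lt hbm⟩

lemma ordConnected_diff_inter_not_exists_lt (hA : A.OrdConnected) :
    {n ∈ A \ A' | ¬ ∃ m ∈ A', n < m}.OrdConnected := by
  refine ⟨?_⟩
  rintro a ⟨⟨ha, ha'⟩, hlt⟩ b ⟨⟨hb, -⟩, -⟩ c ⟨hac, hcb⟩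
  refine ⟨⟨hA.out ha hb ⟨hac, hcb⟩, fun hc ↦ ?_⟩, fun ⟨m, hm, hcm⟩ ↦ hlt ⟨m, hm, hac.trans_lt hcm⟩⟩
  rcases hac.eq_or_lt with rfl | h
  · exact ha' hc
  · exact hlt ⟨c, hc, h⟩

variable {s : Finset ℤ} {z f : ℤ → ℂ} {D F T : ℝ} {N l : ℕ}

lemma norm_sum_mul_le_of_norm_sub_le {ι : Type*} {s : Finset ι} {z f : ι → ℂ}
    (hz : ∀ n ∈ s, ‖z n‖ ≤ 1) (hF : ∀ n ∈ s, ‖f n‖ ≤ F)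
    (hD : ∀ n ∈ s, ∀ m ∈ s, ‖f n - f m‖ ≤ D) :
    ‖∑ n ∈ s, z n * f n‖ ≤ s.card * D + F * ‖∑ n ∈ s, z n‖ := by
  rcases s.eq_empty_or_nonempty with rfl | ⟨m, hm⟩
  · simp
  have hsplit : ∑ n ∈ s, z n * f n = ∑ n ∈ s, z n * (f n - f m) + f m * ∑ n ∈ s, z n := by
    rw [Finset.mul_sum, ← Finset.sum_add_distrib]
    exact Finset.sum_congr rfl fun n _ ↦ by ring
  rw [hsplit]
  refine norm_add_le_of_le ?_ ?_
  · rw [← nsmul_eq_mul]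
    refine (norm_sum_le _ _).trans (Finset.sum_le_card_nsmul _ _ _ fun n hn ↦ ?_)
    rw [norm_mul]
    exact (mul_le_of_le_one_left (norm_nonneg _) (hz n hn)).trans (hD n hn m hm)
  · rw [norm_mul]
    gcongr
    exact hF m hm

lemma card_image_ediv_le (hs : ∀ n ∈ s, |n| ≤ (N : ℤ)) (hl : 0 < l) :
    ((s.image fun n ↦ n / (l : ℤ)).card : ℝ) ≤ 2 * (N / l) + 2 := by
  have hl₀ : (0 : ℤ) < l := by exact_mod_cast hl
  have hsub : (s.image fun n ↦ n / (l : ℤ))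
      ⊆ Finset.Icc (-((N / l : ℕ) : ℤ) - 1) ((N / l : ℕ) : ℤ) := by
    intro j hj
    obtain ⟨n, hn, rfl⟩ := Finset.mem_image.1 hj
    have hnN := abs_le.1 (hs n hn)
    have hlt : (N : ℤ) < ((N : ℤ) / l + 1) * l := Int.lt_ediv_add_one_mul_self _ hl₀
    rw [Finset.mem_Icc, Int.natCast_div]
    exact ⟨(Int.le_ediv_iff_mul_le hl₀).2 (by linarith), Int.ediv_le_ediv hl₀ hnN.2⟩
  have hcard := Finset.card_le_card hsub
  rw [Int.card_Icc, show (((N / l : ℕ) : ℤ) + 1 - (-((N / l : ℕ) : ℤ) - 1)).toNat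
    = 2 * (N / l) + 2 by omega] at hcard
  calc ((s.image fun n ↦ n / (l : ℤ)).card : ℝ) ≤ 2 * ((N / l : ℕ) : ℝ) + 2 := by
        exact_mod_cast hcard
    _ ≤ 2 * (N / l) + 2 := by gcongr; exact Nat.cast_div_le

lemma abs_sub_lt_of_ediv_eq_ediv {n m : ℤ} (hl : 0 < l) (h : n / (l : ℤ) = m / (l : ℤ)) :
    |n - m| < l := by
  have hl₀ : (0 : ℤ) < l := by exact_mod_cast hl
  have hn := Int.emod_add_mul_ediv n l
  have hm := Int.emod_add_mul_ediv m l
  rw [h] at hn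
  rw [abs_lt]
  constructor <;> linarith [Int.emod_nonneg n hl₀.ne', Int.emod_lt_of_pos n hl₀,
    Int.emod_nonneg m hl₀.ne', Int.emod_lt_of_pos m hl₀]

lemma norm_sum_le_of_ordConnected (hs : (s : Set ℤ).OrdConnected) (hsN : ∀ n ∈ s, |n| ≤ (N : ℤ))
    (hT : ∀ u v : ℤ, -(N : ℤ) ≤ u → v ≤ N → ‖∑ n ∈ Finset.Icc u v, z n‖ ≤ T) :
    ‖∑ n ∈ s, z n‖ ≤ T := by
  rcases s.eq_empty_or_nonempty with rfl | hne
  · simpa using hT 1 0 (by omega) (by omega)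
  · obtain ⟨u, v, rfl⟩ := exists_eq_Icc_of_ordConnected hs
    have huv : u ≤ v := Finset.nonempty_Icc.1 hne
    exact hT u v (abs_le.1 (hsN u (Finset.left_mem_Icc.2 huv))).1
      (abs_le.1 (hsN v (Finset.right_mem_Icc.2 huv))).2

lemma norm_sum_mul_le_of_ordConnected (hs : (s : Set ℤ).OrdConnected)
    (hsN : ∀ n ∈ s, |n| ≤ (N : ℤ)) (hl : 0 < l) (hz : ∀ n, ‖z n‖ ≤ 1)
    (hT : ∀ u v : ℤ, -(N : ℤ) ≤ u → v ≤ N → ‖∑ n ∈ Finset.Icc u v, z n‖ ≤ T) (hF₀ : 0 ≤ F)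
    (hF : ∀ n ∈ s, ‖f n‖ ≤ F) (hD₀ : 0 ≤ D)
    (hD : ∀ n ∈ s, ∀ m ∈ s, |n - m| ≤ (l : ℤ) → ‖f n - f m‖ ≤ D) :
    ‖∑ n ∈ s, z n * f n‖ ≤ (2 * N + 1) * D + (2 * (N / l) + 2) * (F * T) := by
  have hT₀ : 0 ≤ T := (norm_nonneg _).trans (hT 1 0 (by omega) (by omega))
  set J := s.image fun n ↦ n / (l : ℤ)
  have hmaps : ∀ n ∈ s, n / (l : ℤ) ∈ J := fun n hn ↦ Finset.mem_image_of_mem _ hn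
  have hcell : ∀ j ∈ J, ‖∑ n ∈ s with n / (l : ℤ) = j, z n * f n‖
      ≤ (s.filter fun n ↦ n / (l : ℤ) = j).card * D + F * T := by
    intro j _
    refine (norm_sum_mul_le_of_norm_sub_le (D := D) (fun n _ ↦ hz n)
      (fun n hn ↦ hF n (Finset.mem_filter.1 hn).1) fun n hn m hm ↦ ?_).trans ?_
    · rw [Finset.mem_filter] at hn hm
      exact hD n hn.1 m hm.1 (abs_sub_lt_of_ediv_eq_ediv hl (hn.2.trans hm.2.symm)).le
    · have hord : ((s.filter fun n ↦ n / (l : ℤ) = j : Finset ℤ) : Set ℤ).OrdConnected := by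
        rw [Finset.coe_filter]
        refine ⟨fun a ha b hb c hc ↦ ⟨hs.out ha.1 hb.1 hc, le_antisymm ?_ ?_⟩⟩
        · exact hb.2 ▸ Int.ediv_le_ediv (by omega) hc.2
        · exact ha.2 ▸ Int.ediv_le_ediv (by omega) hc.1
      gcongr
      exact norm_sum_le_of_ordConnected hord (fun n hn ↦ hsN n (Finset.mem_filter.1 hn).1) hT
  rw [← Finset.sum_fiberwise_of_maps_to hmaps]
  refine (norm_sum_le_of_le _ hcell).trans ?_
  rw [Finset.sum_add_distrib, ← Finset.sum_mul, ← Nat.cast_sum,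
    ← Finset.card_eq_sum_card_fiberwise hmaps, Finset.sum_const, nsmul_eq_mul]
  gcongr
  · exact_mod_cast card_le_of_abs_le hsN
  · exact card_image_ediv_le hsN hl

lemma norm_sum_indicator_mul_le_of_ordConnected {B : Set ℤ} (hB : B.OrdConnected) (hl : 0 < l)
    (hz : ∀ n, ‖z n‖ ≤ 1)
    (hT : ∀ u v : ℤ, -(N : ℤ) ≤ u → v ≤ N → ‖∑ n ∈ Finset.Icc u v, z n‖ ≤ T) (hF₀ : 0 ≤ F)
    (hF : ∀ n ∈ B, ‖f n‖ ≤ F) (hD₀ : 0 ≤ D)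
    (hD : ∀ n ∈ B, ∀ m ∈ B, |n - m| ≤ (l : ℤ) → ‖f n - f m‖ ≤ D) :
    ‖∑ n ∈ Finset.Icc (-(N : ℤ)) N, B.indicator (fun n ↦ z n * f n) n‖
      ≤ (2 * N + 1) * D + (2 * (N / l) + 2) * (F * T) := by
  classical
  have hmem {n : ℤ} (hn : n ∈ (Finset.Icc (-(N : ℤ)) N).filter (· ∈ B)) :
      n ∈ Finset.Icc (-(N : ℤ)) N ∧ n ∈ B :=
    Finset.mem_filter.1 hn
  rw [Finset.sum_indicator_eq_sum_filter _ (fun _ n ↦ z n * f n) (fun _ ↦ B) fun n ↦ n]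
  refine norm_sum_mul_le_of_ordConnected ?_ (fun n hn ↦ abs_le.2 (Finset.mem_Icc.1 (hmem hn).1))
    hl hz hT hF₀ (fun n hn ↦ hF n (hmem hn).2) hD₀ fun n hn m hm ↦ hD n (hmem hn).2 m (hmem hm).2
  rw [Finset.coe_filter]
  simp only [Finset.mem_Icc]
  exact Set.ordConnected_Icc.inter hB

lemma norm_sum_indicator_diff_mul_le {A A' : Set ℤ} (hA : A.OrdConnected) (hA' : A'.OrdConnected)
    (hl : 0 < l) (hz : ∀ n, ‖z n‖ ≤ 1)
    (hT : ∀ u v : ℤ, -(N : ℤ) ≤ u → v ≤ N → ‖∑ n ∈ Finset.Icc u v, z n‖ ≤ T) (hF₀ : 0 ≤ F)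
    (hF : ∀ n ∈ A \ A', ‖f n‖ ≤ F) (hD₀ : 0 ≤ D)
    (hD : ∀ n ∈ A \ A', ∀ m ∈ A \ A', |n - m| ≤ (l : ℤ) → ‖f n - f m‖ ≤ D) :
    ‖∑ n ∈ Finset.Icc (-(N : ℤ)) N, (A \ A').indicator (fun n ↦ z n * f n) n‖
      ≤ 2 * ((2 * N + 1) * D + (2 * (N / l) + 2) * (F * T)) := by
  have hpiece {B : Set ℤ} (hB : B.OrdConnected) (hsub : B ⊆ A \ A') :
      ‖∑ n ∈ Finset.Icc (-(N : ℤ)) N, B.indicator (fun n ↦ z n * f n) n‖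
        ≤ (2 * N + 1) * D + (2 * (N / l) + 2) * (F * T) :=
    norm_sum_indicator_mul_le_of_ordConnected hB hl hz hT hF₀ (fun n hn ↦ hF n (hsub hn)) hD₀
      fun n hn m hm ↦ hD n (hsub hn) m (hsub hm)
  have hunion : A \ A' = {n ∈ A \ A' | ∃ m ∈ A', n < m} ∪ {n ∈ A \ A' | ¬ ∃ m ∈ A', n < m} := by
    simp only [← Set.sep_or, em, Set.sep_true]
  have hdisj : Disjoint {n ∈ A \ A' | ∃ m ∈ A', n < m} {n ∈ A \ A' | ¬ ∃ m ∈ A', n < m} :=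
    Set.disjoint_left.2 fun _ hn hn' ↦ hn'.2 hn.2
  rw [hunion, Set.indicator_union_of_disjoint hdisj, Finset.sum_add_distrib, two_mul]
  exact norm_add_le_of_le
    (hpiece (ordConnected_diff_inter_exists_lt hA hA') (Set.sep_subset _ _))
    (hpiece (ordConnected_diff_inter_not_exists_lt hA) (Set.sep_subset _ _))

end SlowlyVaryingWeights

section SummandsAlongLines

/-- The indicator of the values allowed in the coordinate of index `i`: all integers if `i < k'`,
and positive or negative primes otherwise. -/
noncomputable def coordWeight (k' i : ℕ) : ℤ → ℝ :=
  if i < k' then 1 else Set.indicator {n : ℤ | Prime n} 1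

lemma abs_coordWeight_le_one (k' i : ℕ) (n : ℤ) : |coordWeight k' i n| ≤ 1 := by
  unfold coordWeight
  split_ifs
  · simp
  · by_cases hn : Prime n <;> simp [hn]

lemma exists_isWeightedWeylExponent_coordWeight (k' i d : ℕ) :
    ∃ K, IsWeightedWeylExponent (coordWeight k' i) d K := by
  unfold coordWeight
  split_ifs
  · exact exists_isWeightedWeylExponent_one d
  · exact exists_isWeightedWeylExponent_prime d

lemma primeInd_eq_prod {k : ℕ} (k' : ℕ) (v : Fin k → ℤ) :
    primeInd k' v = ∏ i : Fin k, coordWeight k' i (v i) := by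
  have hcoord (i : Fin k) : coordWeight k' i (v i)
      = if k' ≤ (i : ℕ) → Prime (v i) then (1 : ℝ) else 0 := by
    by_cases hi : (i : ℕ) < k'
    · simp [coordWeight, hi, hi.not_ge]
    · simp [coordWeight, hi, not_lt.1 hi, Set.indicator_apply]
  simp_rw [hcoord, Finset.prod_ite_zero, primeInd, Set.indicator_apply]
  simp

lemma abs_prod_coordWeight_le_one {ι : Type*} [Fintype ι] (k' : ℕ) (e : ι → ℕ) (v : ι → ℤ) :
    |∏ i, coordWeight k' (e i) (v i)| ≤ 1 := by
  rw [Finset.abs_prod]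
  exact Finset.prod_le_one (fun _ _ ↦ abs_nonneg _) fun _ _ ↦ abs_coordWeight_le_one _ _ _

/-- The summand `e(ξ · 𝒬(v)) φ(v) 𝟙_S(v)` at `v ∈ ℤ^{k'} × (±ℙ)^{k''}`, extended by zero to the
remaining points of `ℤ^k`. -/
noncomputable def weylTerm {k : ℕ} (k' : ℕ) (Γ : Finset (Fin k → ℕ)) (ξ : (Fin k → ℕ) → ℝ)
    (S : Set (EuclideanSpace ℝ (Fin k))) (φ : EuclideanSpace ℝ (Fin k) → ℂ) (v : Fin k → ℤ) : ℂ :=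
  eC (qPair Γ ξ v) * φ (zEmbed v) * ((primeInd k' v * S.indicator (fun _ ↦ 1) (zEmbed v) : ℝ) : ℂ)

/-- `F` bounds `φ` on `S`, and `D` bounds its oscillation there at distances at most `r`. -/
structure HasAmplitudeBound {E : Type*} [PseudoMetricSpace E] (φ : E → ℂ) (S : Set E)
    (r F D : ℝ) : Prop where
  nonneg : 0 ≤ F
  osc_nonneg : 0 ≤ D
  norm_le : ∀ x ∈ S, ‖φ x‖ ≤ F
  norm_sub_le : ∀ x ∈ S, ∀ y ∈ S, dist x y ≤ r → ‖φ x - φ y‖ ≤ D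

section

variable {k k' N : ℕ} {Γ : Finset (Fin k → ℕ)} {ξ : (Fin k → ℕ) → ℝ}
  {S : Set (EuclideanSpace ℝ (Fin k))} {φ : EuclideanSpace ℝ (Fin k) → ℂ} {F : ℝ}

lemma norm_weylTerm_le (hF₀ : 0 ≤ F) (hF : ∀ x ∈ S, ‖φ x‖ ≤ F) (v : Fin k → ℤ) :
    ‖weylTerm k' Γ ξ S φ v‖ ≤ F := by
  unfold weylTerm
  by_cases h : zEmbed v ∈ S
  · rw [Set.indicator_of_mem h, mul_one, norm_mul, norm_mul, norm_eC, one_mul, Complex.norm_real,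
      Real.norm_eq_abs, primeInd_eq_prod]
    exact (mul_le_of_le_one_right (norm_nonneg _) (abs_prod_coordWeight_le_one _ _ _)).trans
      (hF _ h)
  · simpa [Set.indicator_of_notMem h] using hF₀

lemma norm_sum_weylTerm_le (hF₀ : 0 ≤ F) (hF : ∀ x ∈ S, ‖φ x‖ ≤ F) {ι : Type*} (s : Finset ι)
    (g : ι → Fin k → ℤ) : ‖∑ i ∈ s, weylTerm k' Γ ξ S φ (g i)‖ ≤ s.card * F := by
  rw [← nsmul_eq_mul]
  exact (norm_sum_le _ _).trans
    (Finset.sum_le_card_nsmul _ _ _ fun i _ ↦ norm_weylTerm_le hF₀ hF (g i))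

lemma tsum_weylTerm (hS : S ⊆ Metric.ball 0 N) :
    ∑' v, weylTerm k' Γ ξ S φ v = ∑ v ∈ box k N, weylTerm k' Γ ξ S φ v := by
  refine tsum_eq_sum fun v hv ↦ ?_
  have hvS : zEmbed v ∉ S := by
    refine fun h ↦ hv (mem_box.2 fun i ↦ ?_)
    have hi : |(v i : ℝ)| ≤ N :=
      (PiLp.norm_apply_le (zEmbed v) i).trans (mem_ball_zero_iff.1 (hS h)).le
    exact_mod_cast hi
  simp [weylTerm, Set.indicator_of_notMem hvS]

end

section

variable {k : ℕ} (p : Fin (k + 1)) (v : Fin k → ℤ)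

lemma zEmbed_insertNth (n : ℤ) :
    zEmbed (p.insertNth (α := fun _ ↦ ℤ) n v)
      = AffineMap.lineMap (k := ℝ) (zEmbed (p.insertNth (α := fun _ ↦ ℤ) 0 v))
          (zEmbed (p.insertNth (α := fun _ ↦ ℤ) 1 v)) (n : ℝ) := by
  rw [AffineMap.lineMap_apply]
  ext i
  refine Fin.succAboveCases p ?_ (fun j ↦ ?_) i <;> simp [zEmbed]

lemma dist_zEmbed_insertNth (n m : ℤ) :
    dist (zEmbed (p.insertNth (α := fun _ ↦ ℤ) n v)) (zEmbed (p.insertNth (α := fun _ ↦ ℤ) m v))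
      = |(n : ℝ) - m| := by
  rw [EuclideanSpace.dist_eq, Fin.sum_univ_succAbove _ p]
  simp [zEmbed, Real.dist_eq, Real.sqrt_sq_eq_abs]

lemma ordConnected_setOf_zEmbed_insertNth_mem {Ω : Set (EuclideanSpace ℝ (Fin (k + 1)))}
    (hΩ : Convex ℝ Ω) : {n : ℤ | zEmbed (p.insertNth (α := fun _ ↦ ℤ) n v) ∈ Ω}.OrdConnected := by
  have hline := (hΩ.affine_preimage (AffineMap.lineMap (k := ℝ)
    (zEmbed (p.insertNth (α := fun _ ↦ ℤ) 0 v))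
    (zEmbed (p.insertNth (α := fun _ ↦ ℤ) 1 v)))).ordConnected
  convert hline.preimage_mono (Int.cast_mono (R := ℝ)) using 1
  ext n
  rw [Set.mem_ofPred_eq, zEmbed_insertNth]
  rfl

end

variable {k k' N : ℕ} {Γ : Finset (Fin (k + 1) → ℕ)} {ξ : (Fin (k + 1) → ℕ) → ℝ}
  {p : Fin (k + 1)} {φ : EuclideanSpace ℝ (Fin (k + 1)) → ℂ}

lemma weylTerm_insertNth (S : Set (EuclideanSpace ℝ (Fin (k + 1)))) (v : Fin k → ℤ) (n : ℤ) :
    weylTerm k' Γ ξ S φ (p.insertNth (α := fun _ ↦ ℤ) n v)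
      = ((∏ j, coordWeight k' (p.succAbove j) (v j) : ℝ) : ℂ)
        * {n : ℤ | zEmbed (p.insertNth (α := fun _ ↦ ℤ) n v) ∈ S}.indicator
          (fun n ↦ (coordWeight k' p n * eC ((slicePoly p Γ ξ v).eval (n : ℝ)))
            * φ (zEmbed (p.insertNth (α := fun _ ↦ ℤ) n v))) n := by
  rw [weylTerm, primeInd_eq_prod, Fin.prod_univ_succAbove _ p]
  by_cases h : zEmbed (p.insertNth (α := fun _ ↦ ℤ) n v) ∈ S
  · rw [Set.indicator_of_mem h, Set.indicator_of_mem (by exact h), eval_slicePoly]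
    simp only [Fin.insertNth_apply_same, Fin.insertNth_apply_succAbove]
    push_cast
    ring
  · rw [Set.indicator_of_notMem h, Set.indicator_of_notMem (by exact h)]
    simp

end SummandsAlongLines

section ExceptionalLines

variable {k k' N : ℕ} {Γ : Finset (Fin (k + 1) → ℕ)} {ξ : (Fin (k + 1) → ℕ) → ℝ}
  {p : Fin (k + 1)} {R : ℝ} {v : Fin k → ℤ}

/-- The line in direction `p` through `v` is exceptional if, for some interval contained in
`[-N, N]`, the weighted exponential sum over the corresponding segment of the line fails to be
smaller than the trivial bound by a factor `R`. -/
def IsExceptionalLine (p : Fin (k + 1)) (k' : ℕ) (Γ : Finset (Fin (k + 1) → ℕ))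
    (ξ : (Fin (k + 1) → ℕ) → ℝ) (N : ℕ) (R : ℝ) (v : Fin k → ℤ) : Prop :=
  ∃ x y : ℤ, -(N : ℤ) ≤ x ∧ y ≤ N ∧ (N : ℝ) ≤ R * ‖∑ n ∈ Finset.Icc x y,
    (coordWeight k' p n : ℂ) * eC ((slicePoly p Γ ξ v).eval (n : ℝ))‖

open Classical in
lemma mul_card_filter_isExceptionalLine_lt {K V : ℕ} {γ : Fin (k + 1) → ℕ} {a q : ℤ}
    (hK : IsWeightedWeylExponent (coordWeight k' p) (Γ.sup fun γ ↦ γ p) K)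
    (hV : IsBoxVinogradovExponent (sliceExponents p (γ p) Γ) V) (hγ : γ ∈ Γ) (hγp : 1 ≤ γ p)
    (hR : 2 ≤ R) (hlog : Real.log N ≤ R) (hN : R ^ (K + (K + 1) * V) ≤ N) (haq : IsCoprime a q)
    (hξ : |ξ γ - a / q| ≤ 1 / (q : ℝ) ^ 2) (hRq : 2 * R ^ (K + (K + 1) * V) < q)
    (hqN : 2 * (q * R ^ (K + (K + 1) * V)) ≤ (N : ℝ) ^ (∑ i, γ i)) :
    R * ((box k N).filter (IsExceptionalLine p k' Γ ξ N R)).card < (N : ℝ) ^ k := by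
  by_contra! hcard
  obtain ⟨m, hm, hmR, hdist⟩ := hK.exists_distInt_mul_le hV hγ hγp hR hlog hN
    (Finset.filter_subset _ _) hcard fun v hv ↦ (Finset.mem_filter.1 hv).2
  have hq₀ : (0 : ℝ) < q := lt_trans (by positivity) hRq
  have hNγ : (0 : ℝ) < (N : ℝ) ^ (∑ i, γ i) := lt_of_lt_of_le (by positivity) hqN
  have hlower : 1 / 2 < q * distInt (m * ξ γ) :=
    half_lt_mul_distInt_mul_of_abs_sub_div_le haq hξ hm (by linarith)
  have hupper : q * distInt (m * ξ γ) ≤ 1 / 2 := by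
    calc q * distInt (m * ξ γ) ≤ q * (R ^ (K + (K + 1) * V) / (N : ℝ) ^ (∑ i, γ i)) := by gcongr
      _ ≤ 1 / 2 := by rw [← mul_div_assoc, div_le_iff₀ hNγ]; linarith
  exact hupper.not_gt hlower

variable {Ω Ω' : Set (EuclideanSpace ℝ (Fin (k + 1)))}
  {φ : EuclideanSpace ℝ (Fin (k + 1)) → ℂ} {l : ℕ} {F D : ℝ}

lemma norm_sum_weylTerm_insertNth_le (hΩ : Convex ℝ Ω) (hΩ' : Convex ℝ Ω')
    (hφ : HasAmplitudeBound φ (Ω \ Ω') l F D) (hR : 0 < R) (hl : 0 < l)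
    (hv : ¬ IsExceptionalLine p k' Γ ξ N R v) :
    ‖∑ n ∈ Finset.Icc (-(N : ℤ)) N,
        weylTerm k' Γ ξ (Ω \ Ω') φ (p.insertNth (α := fun _ ↦ ℤ) n v)‖
      ≤ 2 * ((2 * N + 1) * D + (2 * (N / l) + 2) * (F * (N / R))) := by
  simp_rw [weylTerm_insertNth]
  rw [← Finset.mul_sum, norm_mul, Complex.norm_real, Real.norm_eq_abs]
  refine (mul_le_of_le_one_left (norm_nonneg _) (abs_prod_coordWeight_le_one _ _ _)).trans ?_
  refine norm_sum_indicator_diff_mul_le (ordConnected_setOf_zEmbed_insertNth_mem p v hΩ)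
    (ordConnected_setOf_zEmbed_insertNth_mem p v hΩ') hl (fun n ↦ ?_) (fun x y hx hy ↦ ?_)
    hφ.nonneg (fun n hn ↦ hφ.norm_le _ hn) hφ.osc_nonneg
    fun n hn m hm hnm ↦ hφ.norm_sub_le _ hn _ hm ?_
  · rw [norm_mul, norm_eC, mul_one, Complex.norm_real]
    exact abs_coordWeight_le_one _ _ _
  · rw [le_div_iff₀ hR, mul_comm]
    exact le_of_not_ge fun h ↦ hv ⟨x, y, hx, hy, h⟩
  · rw [dist_zEmbed_insertNth]
    exact_mod_cast hnm

open Classical in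
lemma norm_sum_box_weylTerm_le (hΩ : Convex ℝ Ω) (hΩ' : Convex ℝ Ω')
    (hφ : HasAmplitudeBound φ (Ω \ Ω') l F D) (hR : 0 < R) (hl : 0 < l)
    (hcard : R * ((box k N).filter (IsExceptionalLine p k' Γ ξ N R)).card ≤ (N : ℝ) ^ k) :
    ‖∑ v ∈ box (k + 1) N, weylTerm k' Γ ξ (Ω \ Ω') φ v‖
      ≤ (N : ℝ) ^ k / R * ((2 * N + 1) * F)
        + (2 * N + 1) ^ k * (2 * ((2 * N + 1) * D + (2 * (N / l) + 2) * (F * (N / R)))) := by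
  have hF := hφ.nonneg
  have hD := hφ.osc_nonneg
  rw [sum_box_succ p, ← Finset.sum_filter_add_sum_filter_not _ (IsExceptionalLine p k' Γ ξ N R)]
  refine norm_add_le_of_le ?_ ?_
  · refine (norm_sum_le_of_le _ fun v _ ↦ norm_sum_weylTerm_le hF hφ.norm_le _ _).trans ?_
    rw [Finset.sum_const, nsmul_eq_mul]
    gcongr
    · rwa [le_div_iff₀' hR]
    · exact_mod_cast card_le_of_abs_le fun n hn ↦ abs_le.2 (Finset.mem_Icc.1 hn)
  · refine (norm_sum_le_of_le _ fun v hv ↦ norm_sum_weylTerm_insertNth_le hΩ hΩ' hφ hR hl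
      (Finset.mem_filter.1 hv).2).trans ?_
    rw [Finset.sum_const, nsmul_eq_mul]
    gcongr
    exact_mod_cast (Finset.card_filter_le _ _).trans_eq (card_box k N)

lemma exists_pos_natCast_le_le_two_mul {x : ℝ} (hx : 1 ≤ x) :
    ∃ l : ℕ, 0 < l ∧ (l : ℝ) ≤ x ∧ x ≤ 2 * l := by
  have hfloor : 0 < ⌊x⌋₊ := Nat.floor_pos.2 hx
  have hfloor' : (1 : ℝ) ≤ ⌊x⌋₊ := by exact_mod_cast hfloor
  exact ⟨⌊x⌋₊, hfloor, Nat.floor_le (by linarith), by linarith [Nat.lt_floor_add_one x]⟩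

open Classical in
lemma norm_sum_box_weylTerm_le_of_sq_le {T : ℝ} (hΩ : Convex ℝ Ω) (hΩ' : Convex ℝ Ω')
    (hφ : HasAmplitudeBound φ (Ω \ Ω') (N / T) F D) (hT : 1 ≤ T) (hTN : T ≤ N) (hTR : T ^ 2 ≤ R)
    (hcard : R * ((box k N).filter (IsExceptionalLine p k' Γ ξ N R)).card ≤ (N : ℝ) ^ k) :
    ‖∑ v ∈ box (k + 1) N, weylTerm k' Γ ξ (Ω \ Ω') φ v‖
      ≤ 5 * 3 ^ (k + 1) * ((N : ℝ) ^ (k + 1) / T * F + (N : ℝ) ^ (k + 1) * D) := by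
  have hF := hφ.nonneg
  have hD := hφ.osc_nonneg
  have hT₀ : 0 < T := by linarith
  have hR : 0 < R := lt_of_lt_of_le (by positivity) hTR
  obtain ⟨l, hl, hlN, hNl⟩ := exists_pos_natCast_le_le_two_mul ((one_le_div₀ hT₀).2 hTN)
  have hl₀ : (0 : ℝ) < l := by exact_mod_cast hl
  have hφl : HasAmplitudeBound φ (Ω \ Ω') l F D :=
    { hφ with norm_sub_le := fun x hx y hy hxy ↦ hφ.norm_sub_le x hx y hy (hxy.trans hlN) }
  have hcells : 2 * ((N : ℝ) / l) + 2 ≤ 6 * T := by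
    have : (N : ℝ) / l ≤ 2 * T := by
      rw [div_le_iff₀ hl₀]
      rw [div_le_iff₀ hT₀] at hNl
      linarith
    linarith
  have hTR' : T / R ≤ 1 / T := by
    rw [div_le_div_iff₀ hR hT₀]
    linarith
  have hR' : 1 / R ≤ 1 / T := le_trans (by gcongr) hTR'
  have hN₁ : 2 * (N : ℝ) + 1 ≤ 3 * N := by linarith
  calc ‖∑ v ∈ box (k + 1) N, weylTerm k' Γ ξ (Ω \ Ω') φ v‖
      ≤ (N : ℝ) ^ k / R * (3 * N * F)
        + (3 * N) ^ k * (2 * (3 * N * D + 6 * T * (F * (N / R)))) := by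
        refine (norm_sum_box_weylTerm_le hΩ hΩ' hφl hR hl hcard).trans ?_
        gcongr
    _ = 3 * (N : ℝ) ^ (k + 1) * (1 / R) * F
        + 3 ^ k * (6 * ((N : ℝ) ^ (k + 1) * D) + 12 * ((N : ℝ) ^ (k + 1) * (T / R) * F)) := by
        rw [mul_pow]
        ring
    _ ≤ 3 ^ k * 3 * (N : ℝ) ^ (k + 1) * (1 / T) * F
        + 3 ^ k * (15 * ((N : ℝ) ^ (k + 1) * D) + 12 * ((N : ℝ) ^ (k + 1) * (1 / T) * F)) := by
        gcongr
        · exact le_mul_of_one_le_left (by norm_num) (one_le_pow₀ (by norm_num))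
        · norm_num
    _ = 5 * 3 ^ (k + 1) * ((N : ℝ) ^ (k + 1) / T * F + (N : ℝ) ^ (k + 1) * D) := by ring

end ExceptionalLines

section LogarithmicParameters

variable {k k' N : ℕ} {α β : ℝ} {γ : Fin k → ℕ} {Γ : Finset (Fin k → ℕ)}
  {ξ : (Fin k → ℕ) → ℝ} {Ω Ω' S : Set (EuclideanSpace ℝ (Fin k))}
  {φ : EuclideanSpace ℝ (Fin k) → ℂ} {F D : ℝ}

lemma eventually_log_pow_le (α : ℝ) (m : ℕ) : ∀ᶠ N : ℕ in Filter.atTop,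
    3 ≤ Real.log N ∧ Real.log N ^ α ≤ N ∧ Real.log N ^ m ≤ N := by
  have hcast : Filter.Tendsto (fun N : ℕ ↦ (N : ℝ)) Filter.atTop Filter.atTop :=
    tendsto_natCast_atTop_atTop
  have hbound (r : ℝ) : ∀ᶠ N : ℕ in Filter.atTop, Real.log N ^ r ≤ N := by
    filter_upwards [hcast.eventually
      ((isLittleO_log_rpow_rpow_atTop r one_pos).bound (c := 1) one_pos)] with N hN
    simp only [Real.rpow_one, one_mul, Real.norm_natCast] at hN
    exact (Real.le_norm_self _).trans hN
  filter_upwards [(Real.tendsto_log_atTop.comp hcast).eventually_ge_atTop 3, hbound α, hbound m]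
    with N h₃ hα hm
  exact ⟨h₃, hα, by simpa using hm⟩

lemma norm_tsum_weylTerm_le_of_lt {N₀ : ℕ} (hα : 0 < α) (hN : 2 ≤ N) (hNN₀ : N ≤ N₀)
    (hS : S ⊆ Metric.ball 0 N) (hF₀ : 0 ≤ F) (hF : ∀ x ∈ S, ‖φ x‖ ≤ F) :
    ‖∑' v, weylTerm k' Γ ξ S φ v‖
      ≤ 3 ^ k * (N₀ : ℝ) ^ α * ((N : ℝ) ^ k * Real.log N ^ (-α) * F) := by
  have hN₂ : (2 : ℝ) ≤ N := by exact_mod_cast hN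
  have hlog : 0 < Real.log N := Real.log_pos (by linarith)
  have hone : 1 ≤ (N₀ : ℝ) ^ α * Real.log N ^ (-α) := by
    rw [Real.rpow_neg hlog.le, ← div_eq_mul_inv, one_le_div₀ (by positivity)]
    gcongr
    calc Real.log N ≤ N := Real.log_le_self (by positivity)
      _ ≤ N₀ := by exact_mod_cast hNN₀
  rw [tsum_weylTerm hS]
  calc ‖∑ v ∈ box k N, weylTerm k' Γ ξ S φ v‖ ≤ (2 * N + 1) ^ k * F := by
        have hcard : ((box k N).card : ℝ) = (2 * N + 1) ^ k := by exact_mod_cast card_box k N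
        exact hcard ▸ norm_sum_weylTerm_le hF₀ hF (box k N) fun v ↦ v
    _ ≤ (3 * N) ^ k * F := by gcongr; linarith
    _ ≤ (3 * N) ^ k * F * ((N₀ : ℝ) ^ α * Real.log N ^ (-α)) :=
        le_mul_of_one_le_right (by positivity) hone
    _ = 3 ^ k * (N₀ : ℝ) ^ α * ((N : ℝ) ^ k * Real.log N ^ (-α) * F) := by rw [mul_pow]; ring

lemma norm_tsum_weylTerm_le_of_log_pow_le {Γ : Finset (Fin (k + 1) → ℕ)} {γ : Fin (k + 1) → ℕ}
    {ξ : (Fin (k + 1) → ℕ) → ℝ} {Ω Ω' : Set (EuclideanSpace ℝ (Fin (k + 1)))}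
    {φ : EuclideanSpace ℝ (Fin (k + 1)) → ℂ} {p : Fin (k + 1)} {K V A : ℕ} {a q : ℤ}
    (hK : IsWeightedWeylExponent (coordWeight k' p) (Γ.sup fun γ ↦ γ p) K)
    (hV : IsBoxVinogradovExponent (sliceExponents p (γ p) Γ) V) (hγ : γ ∈ Γ) (hγp : 1 ≤ γ p)
    (hα : 0 < α) (hA : 2 * α ≤ A) (hβ : ((A * (K + (K + 1) * V) + 1 : ℕ) : ℝ) ≤ β)
    (hlog : 3 ≤ Real.log N) (hlogα : Real.log N ^ α ≤ N)
    (hlogA : Real.log N ^ (A * (K + (K + 1) * V)) ≤ N)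
    (hΩN : Ω ⊆ Metric.ball 0 N) (hΩ : Convex ℝ Ω) (hΩ' : Convex ℝ Ω')
    (hφ : HasAmplitudeBound φ (Ω \ Ω') (N * Real.log N ^ (-α)) F D) (haq : IsCoprime a q)
    (hq : Real.log N ^ β ≤ q) (hqN : q ≤ (N : ℝ) ^ (∑ i, γ i) * Real.log N ^ (-β))
    (hξ : |ξ γ - a / q| ≤ 1 / (q : ℝ) ^ 2) :
    ‖∑' v, weylTerm k' Γ ξ (Ω \ Ω') φ v‖
      ≤ 5 * 3 ^ (k + 1)
        * ((N : ℝ) ^ (k + 1) * Real.log N ^ (-α) * F + (N : ℝ) ^ (k + 1) * D) := by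
  classical
  set L := Real.log N
  set m := K + (K + 1) * V
  have hL₀ : 0 < L := by linarith
  have hL₁ : 1 ≤ L := by linarith
  have hA₁ : A ≠ 0 := by
    rintro rfl
    norm_num at hA
    linarith
  have hLA : L ≤ L ^ A := le_self_pow₀ hL₁ hA₁
  have hpow : (L ^ A) ^ m = L ^ (A * m) := (pow_mul L A m).symm
  have hLβ : 3 * L ^ (A * m) ≤ L ^ β := by
    calc 3 * L ^ (A * m) ≤ L * L ^ (A * m) := by gcongr
      _ = L ^ ((A * m + 1 : ℕ) : ℝ) := by rw [Real.rpow_natCast, pow_succ']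
      _ ≤ L ^ β := Real.rpow_le_rpow_of_exponent_le hL₁ hβ
  have hLpos : 0 < L ^ (A * m) := by positivity
  have hβ₀ : 0 < L ^ β := Real.rpow_pos_of_pos hL₀ _
  have hq₀ : (0 : ℝ) < q := hβ₀.trans_le hq
  rw [Real.rpow_neg hL₀.le, ← div_eq_mul_inv, le_div_iff₀ hβ₀] at hqN
  have hcard := mul_card_filter_isExceptionalLine_lt hK hV hγ hγp (by linarith) hLA
    (hpow.trans_le hlogA) haq hξ (by rw [hpow]; linarith) (by
      calc 2 * (q * (L ^ A) ^ m) = q * (2 * L ^ (A * m)) := by rw [hpow]; ring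
        _ ≤ q * L ^ β := by gcongr; linarith
        _ ≤ _ := hqN)
  rw [Real.rpow_neg hL₀.le, ← div_eq_mul_inv] at hφ ⊢
  rw [tsum_weylTerm (Set.sdiff_subset.trans hΩN)]
  refine norm_sum_box_weylTerm_le_of_sq_le hΩ hΩ' hφ (Real.one_le_rpow hL₁ hα.le) hlogα ?_ hcard.le
  rw [← Real.rpow_mul_natCast hL₀.le, ← Real.rpow_natCast]
  exact Real.rpow_le_rpow_of_exponent_le hL₁ (by push_cast; linarith)

theorem eventually_norm_tsum_weylTerm_le (k' : ℕ) (hα : 0 < α) (hγ : γ ∈ Γ) (hγ₀ : γ ≠ 0) :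
    ∀ᶠ β : ℝ in Filter.atTop, ∀ᶠ C : ℝ in Filter.atTop, ∀ N : ℕ, 2 ≤ N →
      ∀ Ω Ω' : Set (EuclideanSpace ℝ (Fin k)),
        Ω ⊆ Metric.ball 0 N → Convex ℝ Ω → Convex ℝ Ω' →
      ∀ (φ : EuclideanSpace ℝ (Fin k) → ℂ) (F D : ℝ),
        HasAmplitudeBound φ (Ω \ Ω') (N * Real.log N ^ (-α)) F D →
      ∀ (ξ : (Fin k → ℕ) → ℝ) (a q : ℤ), IsCoprime a q →
        Real.log N ^ β ≤ q → q ≤ (N : ℝ) ^ (∑ i, γ i) * Real.log N ^ (-β) →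
        |ξ γ - a / q| ≤ 1 / (q : ℝ) ^ 2 →
        ‖∑' v, weylTerm k' Γ ξ (Ω \ Ω') φ v‖
          ≤ C * ((N : ℝ) ^ k * Real.log N ^ (-α) * F + (N : ℝ) ^ k * D) := by
  obtain ⟨p, hp⟩ : ∃ p, γ p ≠ 0 := Function.ne_iff.1 hγ₀
  obtain _ | k := k
  · exact p.elim0
  obtain ⟨K, hK⟩ := exists_isWeightedWeylExponent_coordWeight k' p (Γ.sup fun γ ↦ γ p)
  obtain ⟨V, hV⟩ := exists_isBoxVinogradovExponent (sliceExponents p (γ p) Γ)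
  obtain ⟨A, hA⟩ := exists_nat_ge (2 * α)
  obtain ⟨N₀, hN₀⟩ := Filter.eventually_atTop.1 (eventually_log_pow_le α (A * (K + (K + 1) * V)))
  filter_upwards [Filter.eventually_ge_atTop ((A * (K + (K + 1) * V) + 1 : ℕ) : ℝ)] with β hβ
  filter_upwards [Filter.eventually_ge_atTop (5 * 3 ^ (k + 1)),
    Filter.eventually_ge_atTop (3 ^ (k + 1) * (N₀ : ℝ) ^ α)] with C hC hCN₀
  intro N hN Ω Ω' hΩN hΩ hΩ' φ F D hφ ξ a q haq hq hqN hξ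
  have hF := hφ.nonneg
  have hD := hφ.osc_nonneg
  rcases le_total N N₀ with hle | hge
  · calc ‖∑' v, weylTerm k' Γ ξ (Ω \ Ω') φ v‖
        ≤ 3 ^ (k + 1) * (N₀ : ℝ) ^ α * ((N : ℝ) ^ (k + 1) * Real.log N ^ (-α) * F) :=
          norm_tsum_weylTerm_le_of_lt hα hN hle (Set.sdiff_subset.trans hΩN) hF hφ.norm_le
      _ ≤ C * ((N : ℝ) ^ (k + 1) * Real.log N ^ (-α) * F + (N : ℝ) ^ (k + 1) * D) := by
          gcongr
          · exact le_trans (by positivity) hC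
          · exact le_add_of_nonneg_right (by positivity)
  · obtain ⟨hlog₃, hlogα, hlogA⟩ := hN₀ N hge
    refine (norm_tsum_weylTerm_le_of_log_pow_le hK hV hγ (Nat.pos_of_ne_zero hp) hα hA hβ
      hlog₃ hlogα hlogA hΩN hΩ hΩ' hφ haq hq hqN hξ).trans ?_
    gcongr

end LogarithmicParameters

section SupremumNorms

variable {E : Type*} [PseudoMetricSpace E] {φ : E → ℂ} {S : Set E} {r : ℝ}

lemma hasAmplitudeBound_toReal {F D : ℝ≥0∞} (hF : F ≠ ⊤) (hD : D ≠ ⊤)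
    (hφF : ∀ x ∈ S, (‖φ x‖₊ : ℝ≥0∞) ≤ F)
    (hφD : ∀ x ∈ S, ∀ y ∈ S, dist x y ≤ r → (‖φ x - φ y‖₊ : ℝ≥0∞) ≤ D) :
    HasAmplitudeBound φ S r F.toReal D.toReal where
  nonneg := ENNReal.toReal_nonneg
  osc_nonneg := ENNReal.toReal_nonneg
  norm_le x hx := by simpa using ENNReal.toReal_mono hF (hφF x hx)
  norm_sub_le x hx y hy hxy := by simpa using ENNReal.toReal_mono hD (hφD x hx y hy hxy)

lemma nnnorm_le_of_forall_hasAmplitudeBound {z : ℂ} {C P Q : ℝ} (hC : 0 < C) (hP : 0 < P)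
    (hQ : 0 < Q) (h : ∀ F D, HasAmplitudeBound φ S r F D → ‖z‖ ≤ C * (P * F + Q * D)) :
    (‖z‖₊ : ℝ≥0∞) ≤ ENNReal.ofReal C * (ENNReal.ofReal P * (⨆ (x : E) (_ : x ∈ S), (‖φ x‖₊ : ℝ≥0∞))
      + ENNReal.ofReal Q * (⨆ (x : E) (y : E) (_ : x ∈ S) (_ : y ∈ S) (_ : dist x y ≤ r),
        (‖φ x - φ y‖₊ : ℝ≥0∞))) := by
  set F : ℝ≥0∞ := ⨆ (x : E) (_ : x ∈ S), (‖φ x‖₊ : ℝ≥0∞)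
  set D : ℝ≥0∞ := ⨆ (x : E) (y : E) (_ : x ∈ S) (_ : y ∈ S) (_ : dist x y ≤ r),
    (‖φ x - φ y‖₊ : ℝ≥0∞)
  by_cases hF : F = ⊤
  · simp [hF, hC, hP, ENNReal.mul_top]
  by_cases hD : D = ⊤
  · simp [hD, hC, hQ, ENNReal.mul_top]
  have hz := h F.toReal D.toReal <| hasAmplitudeBound_toReal hF hD
    (fun x hx ↦ le_iSup₂_of_le x hx le_rfl) fun x hx y hy hxy ↦
      le_iSup₂_of_le x y (le_iSup₂_of_le hx hy (le_iSup_of_le hxy le_rfl))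
  calc (‖z‖₊ : ℝ≥0∞) = ENNReal.ofReal ‖z‖ := (ofReal_norm z).symm
    _ ≤ ENNReal.ofReal (C * (P * F.toReal + Q * D.toReal)) := ENNReal.ofReal_le_ofReal hz
    _ = ENNReal.ofReal C * (ENNReal.ofReal P * F + ENNReal.ofReal Q * D) := by
      rw [ENNReal.ofReal_mul hC.le, ENNReal.ofReal_add (by positivity) (by positivity),
        ENNReal.ofReal_mul hP.le, ENNReal.ofReal_mul hQ.le, ENNReal.ofReal_toReal hF,
        ENNReal.ofReal_toReal hD]

end SupremumNorms

end WeylInequality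

/-- Proposition 2.3, Weyl's inequality for exponential sums over integers
and primes: if some frequency `ξ_{γ₀}` admits a rational approximation `a/q` with
`(log N)^β ≤ q ≤ N^{|γ₀|} (log N)^{-β}`, then the exponential sum over
`(n,p) ∈ (ℤ^{k'} × (±ℙ)^{k''}) ∩ (Ω∖Ω')` with amplitude `φ` is bounded by
`N^k (log N)^{-α} ‖φ‖_{L^∞(Ω∖Ω')}` plus the modulus-of-continuity term, with an implicit
constant independent of `φ, ξ, Ω, Ω', a, q, N`. -/
theorem weyl_inequality
    (k k' k'' : ℕ) (hk : k' + k'' = k)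
    (Γ : Finset (Fin k → ℕ)) (hΓ : Γ.Nonempty) (h0 : (0 : Fin k → ℕ) ∉ Γ)
    (α : ℝ) (hα : 0 < α) :
    ∃ β₀ : ℝ, 0 < β₀ ∧ ∀ β : ℝ, β₀ < β →
      ∃ Cw : ℝ, 0 < Cw ∧
        ∀ (N : ℕ), 2 ≤ N →
        ∀ (Ω Ω' : Set (EuclideanSpace ℝ (Fin k))),
          Ω' ⊆ Ω → Ω ⊆ Metric.ball 0 N → Convex ℝ Ω → Convex ℝ Ω' →
        ∀ (φ : EuclideanSpace ℝ (Fin k) → ℂ) (ξ : (Fin k → ℕ) → ℝ),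
        ∀ γ₀ ∈ Γ, ∀ a q : ℤ,
          IsCoprime a q → 1 ≤ a → a ≤ q →
          (Real.log N) ^ β ≤ (q : ℝ) →
          (q : ℝ) ≤ (N : ℝ) ^ ((∑ i, γ₀ i : ℕ) : ℝ) * (Real.log N) ^ (-β) →
          |ξ γ₀ - (a : ℝ) / (q : ℝ)| ≤ 1 / (q : ℝ) ^ 2 →
          (‖∑' v : Fin k → ℤ,
              eC (qPair Γ ξ v) * φ (zEmbed v) *
                ((primeInd k' v * Set.indicator (Ω \ Ω') (fun _ => 1) (zEmbed v) : ℝ) : ℂ)‖₊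
            : ℝ≥0∞)
          ≤ ENNReal.ofReal Cw *
            (ENNReal.ofReal ((N : ℝ) ^ k * (Real.log N) ^ (-α)) *
              (⨆ (x : EuclideanSpace ℝ (Fin k)) (_ : x ∈ Ω \ Ω'), (‖φ x‖₊ : ℝ≥0∞)) +
            ENNReal.ofReal ((N : ℝ) ^ k) *
              (⨆ (x : EuclideanSpace ℝ (Fin k)) (y : EuclideanSpace ℝ (Fin k))
                (_ : x ∈ Ω \ Ω') (_ : y ∈ Ω \ Ω')
                (_ : dist x y ≤ (N : ℝ) * (Real.log N) ^ (-α)),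
                (‖φ x - φ y‖₊ : ℝ≥0∞))) := by
  obtain ⟨β₀, hβ₀⟩ := Filter.eventually_atTop.1 <| (Filter.eventually_all_finset Γ).2 fun γ hγ ↦
    WeylInequality.eventually_norm_tsum_weylTerm_le k' hα hγ (ne_of_mem_of_not_mem hγ h0)
  refine ⟨max β₀ 1, by positivity, fun β hβ ↦ ?_⟩
  obtain ⟨C, hC, hC₀⟩ := (((Filter.eventually_all_finset Γ).2
    (hβ₀ β (le_of_max_le_left hβ.le))).and (Filter.eventually_gt_atTop 0)).exists
  refine ⟨C, hC₀, fun N hN Ω Ω' _ hΩN hΩ hΩ' φ ξ γ₀ hγ₀ a q haq _ _ hq hqN hξ ↦ ?_⟩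
  have hlog : 0 < Real.log N := Real.log_pos (by exact_mod_cast hN)
  rw [Real.rpow_natCast] at hqN
  exact WeylInequality.nnnorm_le_of_forall_hasAmplitudeBound hC₀ (by positivity) (by positivity)
    fun F D hφ ↦ hC γ₀ hγ₀ N hN Ω Ω' hΩN hΩ hΩ' φ F D hφ ξ a q haq hq hqN hξ
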